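/- With γ_in, γ_out, B_in, B_out and the associated annulus A as in the context, there exists a framing of A: an infinitely differentiable map h : ℝ × ℝ → ℂ with h(θ + 2π, t) = h(θ, t) for all θ, t, such that for every t ∈ [0,1] the map θ ↦ h(θ, t) is injective on [0, 2π), ∂h/∂θ(θ, t) ≠ 0 for all θ and all t ∈ [0,1], Im((∂h/∂t)(θ,t)/(∂h/∂θ)(θ,t)) ≤ 0 for all θ and all t ∈ [0,1], and moreover h(θ, 0) = γ_in(θ) and h(θ, 1) = γ_out(θ) for all θ ∈ ℝ, and h(ℝ × [0,1]) = A. (Equivalently, every annulus is the time-ordered exponential ∏_{1 ≥ τ ≥ 0} Exp(X(τ)dτ) of the geometrically exponentiable path X = −(∂h/∂t)/(∂h/∂θ), which takes values in the cone of inward-pointing complexified vector fields on the circle.) -/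

import Mathlib

open Set Complex Real


namespace Annulus

open Filter Topology in
theorem nem_hasFDerivAt {X : Type} [TopologicalSpace X] [CompactSpace X]
    {F G : Type} [NormedAddCommGroup F] [NormedSpace ℝ F] [NormedAddCommGroup G] [NormedSpace ℝ G]
    (M : C(X, F →L[ℝ] G) →L[ℝ] C(X, F) →L[ℝ] C(X, G))
    (hM : ∀ a b x, M a b x = a x (b x))
    (f : F → G) (f' : F → F →L[ℝ] G) (hf : ∀ x, HasFDerivAt f (f' x) x)
    (hc : Continuous f) (hc' : Continuous f') (u : C(X, F)) :
    HasFDerivAt (fun u : C(X, F) => (⟨f, hc⟩ : C(F, G)).comp u)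
      (M ((⟨f', hc'⟩ : C(F, F →L[ℝ] G)).comp u)) u := by
  rw [hasFDerivAt_iff_isLittleO_nhds_zero, Asymptotics.isLittleO_iff]
  intro ε hε
  have hK : IsCompact (range u) := isCompact_range u.continuous
  have h1 := hK.uniformContinuousAt_of_continuousAt f' (fun a _ => hc'.continuousAt)
    (Metric.dist_mem_uniformity hε)
  rw [Metric.mem_uniformity_dist] at h1
  obtain ⟨δ, hδ, h1⟩ := h1
  filter_upwards [Metric.ball_mem_nhds (0 : C(X, F)) hδ] with h hh
  rw [ContinuousMap.norm_le _ (by positivity)]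
  intro x
  have hhx : ‖h x‖ ≤ ‖h‖ := h.norm_coe_le_norm x
  have hh' : ‖h‖ < δ := by simpa using hh
  have key := (convex_ball (u x) δ).norm_image_sub_le_of_norm_hasFDerivWithin_le'
    (f := f) (f' := f') (φ := f' (u x)) (C := ε) (x := u x) (y := u x + h x)
    (fun y _ => (hf y).hasFDerivWithinAt) (fun y hy => by
      have := @h1 (u x) y (by simpa [dist_comm] using hy) (mem_range_self x)
      simp only [mem_ofPred_eq] at this
      rw [dist_comm, dist_eq_norm] at this
      exact this.le) (by simpa using hδ) (by simpa using lt_of_le_of_lt hhx hh')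
  have : ((⟨f, hc⟩ : C(F, G)).comp (u + h) - (⟨f, hc⟩ : C(F, G)).comp u -
    (M ((⟨f', hc'⟩ : C(F, F →L[ℝ] G)).comp u)) h) x = f (u x + h x) - f (u x) - f' (u x) (h x) := by
    simp [hM]
  rw [this]
  rw [add_sub_cancel_left] at key
  refine key.trans ?_
  exact mul_le_mul_of_nonneg_left hhx hε.le

theorem exists_mult {X : Type} [TopologicalSpace X] [CompactSpace X]
    (F G : Type) [NormedAddCommGroup F] [NormedSpace ℝ F] [NormedAddCommGroup G] [NormedSpace ℝ G] :
    ∃ M : C(X, F →L[ℝ] G) →L[ℝ] C(X, F) →L[ℝ] C(X, G), ∀ a b x, M a b x = a x (b x) := by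
  refine ⟨LinearMap.mkContinuous₂ (LinearMap.mk₂ ℝ
    (fun (a : C(X, F →L[ℝ] G)) (b : C(X, F)) =>
      (⟨fun x => a x (b x), a.continuous.clm_apply b.continuous⟩ : C(X, G)))
    (by intros; ext x; simp) (by intros; ext x; simp) (by intros; ext x; simp)
    (by intros; ext x; simp)) 1 ?_, ?_⟩
  · intro a b
    rw [ContinuousMap.norm_le _ (by positivity)]
    intro x
    simp only [LinearMap.mk₂_apply, ContinuousMap.coe_mk, one_mul]
    exact (a x).le_of_opNorm_le_of_le (a.norm_coe_le_norm x) (b.norm_coe_le_norm x)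
  · intro a b x
    simp

theorem nem_contDiff_nat {X : Type} [TopologicalSpace X] [CompactSpace X] (n : ℕ) :
    ∀ {F G : Type} [NormedAddCommGroup F] [NormedSpace ℝ F] [NormedAddCommGroup G]
      [NormedSpace ℝ G] (f : F → G) (_ : ContDiff ℝ n f) (hc : Continuous f),
    ContDiff ℝ n (fun u : C(X, F) => (⟨f, hc⟩ : C(F, G)).comp u) := by
  induction n with
  | zero =>
    intro F G _ _ _ _ f hf hc
    simp only [Nat.cast_zero, contDiff_zero]
    exact ContinuousMap.continuous_postcomp _
  | succ n ih =>
    intro F G _ _ _ _ f hf hc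
    obtain ⟨M, hM⟩ := exists_mult (X := X) F G
    have hf' := contDiff_succ_iff_fderiv.1 (by exact_mod_cast hf : ContDiff ℝ ((n : WithTop ℕ∞) + 1) f)
    have hc' : Continuous (fderiv ℝ f) := hf'.2.2.continuous
    have hd := nem_hasFDerivAt M hM f (fderiv ℝ f) (fun x => (hf'.1 x).hasFDerivAt) hc hc'
    push_cast
    rw [contDiff_succ_iff_fderiv]
    refine ⟨fun u => (hd u).differentiableAt, by simp, ?_⟩
    have : fderiv ℝ (fun u : C(X, F) => (⟨f, hc⟩ : C(F, G)).comp u) =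
        fun u => M ((⟨fderiv ℝ f, hc'⟩ : C(F, F →L[ℝ] G)).comp u) := by
      ext1 u
      exact (hd u).fderiv
    rw [this]
    exact M.contDiff.comp (ih (fderiv ℝ f) hf'.2.2 hc')

theorem nem_contDiff {X : Type} [TopologicalSpace X] [CompactSpace X]
    {F G : Type} [NormedAddCommGroup F] [NormedSpace ℝ F] [NormedAddCommGroup G]
      [NormedSpace ℝ G] (f : F → G) (hf : ContDiff ℝ (⊤ : ℕ∞) f) (hc : Continuous f) :
    ContDiff ℝ (⊤ : ℕ∞) (fun u : C(X, F) => (⟨f, hc⟩ : C(F, G)).comp u) := by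
  rw [contDiff_infty]
  intro n
  exact nem_contDiff_nat n f (contDiff_infty.1 hf n) hc

end Annulus


namespace Annulus

open Filter Topology NNReal in
theorem exists_global_sol (V : ℂ → ℂ) (C K : ℝ≥0) (hb : ∀ z, ‖V z‖ ≤ C) (hK : LipschitzWith K V)
    (z : ℂ) : ∃ x : ℝ → ℂ, x 0 = z ∧ ∀ t, HasDerivAt x (V (x t)) t := by
  have h1 : ∀ T : ℝ, 0 < T → ∃ x : ℝ → ℂ, x 0 = z ∧ ∀ t ∈ Ioo (-T) T, HasDerivAt x (V (x t)) t := by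
    intro T hT
    have h0 : (0:ℝ) ∈ Icc (-T) T := ⟨by linarith, hT.le⟩
    have := IsPicardLindelof.of_time_independent (f := V) (t₀ := ⟨0, h0⟩) (x₀ := z)
      (a := C * ⟨T, hT.le⟩) (r := 0) (L := C) (K := K) (fun x _ => hb x) hK.lipschitzOnWith
      (by simp; rfl)
    obtain ⟨α, h2, h3⟩ := this.exists_eq_forall_mem_Icc_hasDerivWithinAt₀
    exact ⟨α, h2, fun t ht => (h3 t ⟨ht.1.le, ht.2.le⟩).hasDerivAt (Icc_mem_nhds ht.1 ht.2)⟩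
  choose! X hX0 hX using h1
  have huniq : ∀ S T t : ℝ, 0 < S → 0 < T → |t| < S → |t| < T → X S t = X T t := by
    intro S T t hS hT htS htT
    rw [abs_lt] at htS htT
    have hm : 0 < min S T := lt_min hS hT
    refine ODE_solution_unique_of_mem_Ioo (v := fun _ => V) (s := fun _ => univ) (K := K)
      (t₀ := 0) (a := - min S T) (b := min S T) (fun t _ => hK.lipschitzOnWith)
      ⟨by linarith, hm⟩ (fun t ht => ⟨hX S hS t ⟨?_, ?_⟩, trivial⟩)
      (fun t ht => ⟨hX T hT t ⟨?_, ?_⟩, trivial⟩) (by rw [hX0 S hS, hX0 T hT]) ⟨?_, ?_⟩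
    · linarith [ht.1, min_le_left S T]
    · linarith [ht.2, min_le_left S T]
    · linarith [ht.1, min_le_right S T]
    · linarith [ht.2, min_le_right S T]
    · rcases min_cases S T with h | h <;> linarith [h.1]
    · exact lt_min htS.2 htT.2
  refine ⟨fun t => X (|t| + 1) t, hX0 _ (by positivity), fun t => ?_⟩
  have hp : 0 < |t| + 2 := by positivity
  have h4 := hX (|t| + 2) hp t (by rw [mem_Ioo, ← abs_lt]; linarith)
  beta_reduce
  rw [huniq (|t| + 1) (|t| + 2) t (by positivity) hp (by linarith) (by linarith)]
  refine h4.congr_of_eventuallyEq ?_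
  have : ∀ᶠ s in 𝓝 t, |s| < |t| + 1 := (continuous_abs.tendsto t).eventually_lt_const (by linarith)
  filter_upwards [this] with s hs
  exact huniq _ _ _ (by positivity) hp (by linarith) (by linarith)

open Filter Topology in
theorem exists_integ : ∃ J : C(unitInterval, ℂ) →L[ℝ] C(unitInterval, ℂ), ‖J‖ ≤ 1 ∧
    ∀ u x, J u x = ∫ s in (0:ℝ)..x, u (projIcc 0 1 zero_le_one s) := by
  have hcont : ∀ u : C(unitInterval, ℂ), Continuous fun s : ℝ => u (projIcc 0 1 zero_le_one s) :=
    fun u => u.continuous.comp continuous_projIcc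
  let L : C(unitInterval, ℂ) →ₗ[ℝ] C(unitInterval, ℂ) :=
    { toFun := fun u => ⟨fun x => ∫ s in (0:ℝ)..x, u (projIcc 0 1 zero_le_one s),
        (intervalIntegral.continuous_primitive (fun a b => (hcont u).intervalIntegrable a b) 0).comp
          continuous_subtype_val⟩
      map_add' := by
        intro u v
        ext x
        simp only [ContinuousMap.add_apply, ContinuousMap.coe_mk]
        exact intervalIntegral.integral_add ((hcont u).intervalIntegrable _ _)
          ((hcont v).intervalIntegrable _ _)
      map_smul' := by
        intro c u
        ext x
        simp only [ContinuousMap.smul_apply, ContinuousMap.coe_mk, RingHom.id_apply]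
        exact intervalIntegral.integral_smul _ _ }
  refine ⟨L.mkContinuous 1 ?_, LinearMap.mkContinuous_norm_le _ zero_le_one _, fun u x => rfl⟩
  intro u
  rw [ContinuousMap.norm_le _ (by positivity)]
  intro x
  have := intervalIntegral.norm_integral_le_of_norm_le_const (a := 0) (b := (x:ℝ))
    (f := fun s => u (projIcc 0 1 zero_le_one s)) (C := ‖u‖) (fun s _ => u.norm_coe_le_norm _)
  refine (this.trans ?_)
  rw [one_mul, sub_zero, abs_of_nonneg x.2.1]
  exact mul_le_of_le_one_right (norm_nonneg _) x.2.2

open Filter Topology NNReal in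
theorem flow_local_smooth (V : ℂ → ℂ) (hV : ContDiff ℝ (⊤ : ℕ∞) V) (K : ℝ≥0)
    (hK : LipschitzWith K V) (φ : ℝ → ℂ → ℂ) (h0 : ∀ z, φ 0 z = z)
    (hd : ∀ z t, HasDerivAt (fun t => φ t z) (V (φ t z)) t)
    (p : ℝ × ℂ) (hp : |p.1| * K < 1) :
    ContDiffAt ℝ (⊤ : ℕ∞) (fun p : ℝ × ℂ => φ p.1 p.2) p := by
  obtain ⟨J, hJ1, hJ⟩ := exists_integ
  let N : C(unitInterval, ℂ) → C(unitInterval, ℂ) := fun u => (⟨V, hV.continuous⟩ : C(ℂ, ℂ)).comp u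
  have hN : ContDiff ℝ (⊤ : ℕ∞) N := nem_contDiff V hV hV.continuous
  have hNl : LipschitzWith K N := by
    refine LipschitzWith.of_dist_le_mul fun u v => ?_
    rw [ContinuousMap.dist_le (by positivity)]
    intro x
    exact (hK.dist_le_mul (u x) (v x)).trans (by gcongr; exact ContinuousMap.dist_apply_le_dist x)
  let cst : ℂ →L[ℝ] C(unitInterval, ℂ) := ContinuousLinearMap.const ℝ _
  have hcst : ∀ z x, cst z x = z := fun z x => rfl
  let f : (ℝ × ℂ) × C(unitInterval, ℂ) → C(unitInterval, ℂ) :=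
    fun q => q.2 - cst q.1.2 - q.1.1 • J (N q.2)
  have hf : ContDiff ℝ (⊤ : ℕ∞) f := by
    have e1 : ContDiff ℝ (⊤ : ℕ∞) (fun q : (ℝ × ℂ) × C(unitInterval, ℂ) => cst q.1.2) :=
      cst.contDiff.comp (by fun_prop)
    have e2 : ContDiff ℝ (⊤ : ℕ∞) (fun q : (ℝ × ℂ) × C(unitInterval, ℂ) => J (N q.2)) :=
      J.contDiff.comp (hN.comp contDiff_snd)
    have e3 : ContDiff ℝ (⊤ : ℕ∞) (fun q : (ℝ × ℂ) × C(unitInterval, ℂ) => q.1.1) := by fun_prop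
    exact (contDiff_snd.sub e1).sub (e3.smul e2)
  have hφc : ∀ q : ℝ × ℂ, Continuous (fun r : ℝ => φ (q.1 * r) q.2) := by
    intro q
    have : Continuous fun t => φ t q.2 := continuous_iff_continuousAt.2 fun t => (hd q.2 t).continuousAt
    exact this.comp (continuous_const.mul continuous_id)
  let U : ℝ × ℂ → C(unitInterval, ℂ) := fun q =>
    ⟨fun r => φ (q.1 * r) q.2, (hφc q).comp continuous_subtype_val⟩
  have hU : ∀ q, f (q, U q) = 0 := by
    intro q
    ext x
    simp only [f, ContinuousMap.sub_apply, ContinuousMap.smul_apply, hcst, hJ,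
      ContinuousMap.zero_apply]
    have e1 : ∫ s in (0:ℝ)..x, (N (U q)) (projIcc 0 1 zero_le_one s) =
        ∫ s in (0:ℝ)..x, V (φ (q.1 * s) q.2) := by
      apply intervalIntegral.integral_congr
      intro s hs
      rw [uIcc_of_le x.2.1] at hs
      have : s ∈ Icc (0:ℝ) 1 := ⟨hs.1, hs.2.trans x.2.2⟩
      simp only [N, U, ContinuousMap.comp_apply, ContinuousMap.coe_mk]
      rw [projIcc_of_mem _ this]
    have e2 : ∀ s, HasDerivAt (fun r : ℝ => φ (q.1 * r) q.2) (q.1 • V (φ (q.1 * s) q.2)) s := by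
      intro s
      have := (hd q.2 (q.1 * s)).scomp s ((hasDerivAt_id s).const_mul q.1)
      simpa [Function.comp_def] using this
    have e3 := intervalIntegral.integral_eq_sub_of_hasDerivAt (a := 0) (b := x) (fun s _ => e2 s)
      (Continuous.intervalIntegrable (Continuous.fun_smul continuous_const (hV.continuous.comp (hφc q))) _ _)
    rw [intervalIntegral.integral_smul] at e3
    rw [e1, e3]
    simp [U, h0]
  have huniq : ∀ q : ℝ × ℂ, |q.1| * K < 1 → ∀ u v, f (q, u) = 0 → f (q, v) = 0 → u = v := by
    intro q hq u v hu hv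
    have e1 : u - v = q.1 • J (N u - N v) := by
      simp only [f] at hu hv
      rw [map_sub, smul_sub]
      linear_combination (exp := 1) hu - hv
    have e2 : ‖u - v‖ ≤ |q.1| * K * ‖u - v‖ := by
      calc ‖u - v‖ = |q.1| * ‖J (N u - N v)‖ := by
            conv_lhs => rw [e1]
            rw [norm_smul, Real.norm_eq_abs]
        _ ≤ |q.1| * (1 * ‖N u - N v‖) := by gcongr; exact J.le_of_opNorm_le hJ1 _
        _ ≤ |q.1| * (1 * (K * ‖u - v‖)) := by gcongr; exact hNl.norm_sub_le u v
        _ = _ := by ring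
    have : ‖u - v‖ = 0 := by nlinarith [norm_nonneg (u - v)]
    exact sub_eq_zero.1 (norm_eq_zero.1 this)
  have hinv : (fderiv ℝ f (p, U p) ∘L .inr ℝ (ℝ × ℂ) C(unitInterval, ℂ)).IsInvertible := by
    have d1 : HasFDerivAt (fun u => f (p, u))
        (fderiv ℝ f (p, U p) ∘L .inr ℝ (ℝ × ℂ) C(unitInterval, ℂ)) (U p) := by
      have := ((hf.differentiable (by simp)) (p, U p)).hasFDerivAt
      exact this.comp (U p) (hasFDerivAt_prodMk_right p (U p))
    set D := fderiv ℝ N (U p)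
    have d2 : HasFDerivAt (fun u => f (p, u))
        (1 - p.1 • (J ∘L D)) (U p) := by
      have e := ((hN.differentiable (by simp)) (U p)).hasFDerivAt
      exact ((hasFDerivAt_id (U p)).sub_const (cst p.2)).sub
        ((J.hasFDerivAt.comp (U p) e).const_smul p.1)
    rw [d1.unique d2]
    have hD : ‖D‖ ≤ K := norm_fderiv_le_of_lipschitz ℝ hNl
    have hn : ‖p.1 • (J ∘L D)‖ < 1 := by
      refine lt_of_le_of_lt ?_ hp
      refine (ContinuousLinearMap.opNorm_smul_le p.1 (J ∘L D)).trans ?_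
      rw [Real.norm_eq_abs]
      gcongr
      calc ‖J ∘L D‖ ≤ ‖J‖ * ‖D‖ := J.opNorm_comp_le D
        _ ≤ 1 * K := by gcongr
        _ = K := one_mul _
    let W := Units.oneSub (p.1 • (J ∘L D)) hn
    exact ⟨ContinuousLinearEquiv.unitsEquiv ℝ _ W, by ext; rfl⟩
  have hfA : ContDiffAt ℝ (⊤ : ℕ∞) f (p, U p) := hf.contDiffAt
  have hn0 : ((⊤ : ℕ∞) : WithTop ℕ∞) ≠ 0 := by simp
  have hG := hfA.contDiffAt_implicitFunction hn0 hinv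
  have hev := hfA.eventually_apply_implicitFunction hn0 hinv
  have hev2 : ∀ᶠ q : ℝ × ℂ in 𝓝 p, |q.1| * K < 1 := by
    have : Continuous fun q : ℝ × ℂ => |q.1| * (K : ℝ) := by fun_prop
    exact (this.tendsto p).eventually_lt_const hp
  have hUs : ContDiffAt ℝ (⊤ : ℕ∞) U p := by
    refine hG.congr_of_eventuallyEq ?_
    filter_upwards [hev, hev2] with q h1 h2
    exact huniq q h2 _ _ (hU q) (h1.trans (hU p))
  have hend : (fun q : ℝ × ℂ => φ q.1 q.2) = fun q => (ContinuousMap.evalCLM ℝ (1 : unitInterval)) (U q) := by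
    ext q
    simp [U]
  rw [hend]
  exact (ContinuousMap.evalCLM ℝ (1 : unitInterval)).contDiff.contDiffAt.comp p hUs

open Filter Topology NNReal in
theorem exists_flow (V : ℂ → ℂ) (hV : ContDiff ℝ (⊤ : ℕ∞) V) (C K : ℝ≥0) (hb : ∀ z, ‖V z‖ ≤ C)
    (hK : LipschitzWith K V) : ∃ φ : ℝ → ℂ → ℂ, (∀ z, φ 0 z = z) ∧
    (∀ z t, HasDerivAt (fun t => φ t z) (V (φ t z)) t) ∧
    (∀ s t z, φ (s + t) z = φ s (φ t z)) ∧
    ContDiff ℝ (⊤ : ℕ∞) (fun p : ℝ × ℂ => φ p.1 p.2) := by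
  choose x hx0 hx using exists_global_sol V C K hb hK
  have hgrp : ∀ s t z, x z (s + t) = x (x z t) s := by
    intro s t z
    have : (fun s => x z (s + t)) = x (x z t) := by
      refine ODE_solution_unique_univ (v := fun _ => V) (s := fun _ => univ) (K := K) (t₀ := 0)
        (fun _ => hK.lipschitzOnWith) (fun s => ⟨?_, trivial⟩) (fun s => ⟨hx _ s, trivial⟩) ?_
      · exact (hx z (s + t)).comp_add_const s t
      · simp [hx0]
    exact congrFun this s
  have hloc := flow_local_smooth V hV K hK (fun t z => x z t) hx0 hx
  refine ⟨fun t z => x z t, hx0, hx, hgrp, ?_⟩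
  have hind : ∀ n : ℕ, ∀ p : ℝ × ℂ, |p.1| * K < n →
      ContDiffAt ℝ (⊤ : ℕ∞) (fun p : ℝ × ℂ => x p.2 p.1) p := by
    intro n
    induction n with
    | zero => intro p hp; exact absurd hp (by push_cast; exact not_lt.2 (by positivity))
    | succ n ih =>
      intro p hp
      have hn : (0:ℝ) < n + 1 := by positivity
      have e : (fun p : ℝ × ℂ => x p.2 p.1) = fun p =>
          (fun q : ℝ × ℂ => x q.2 q.1) (p.1 / (n + 1), (fun q : ℝ × ℂ => x q.2 q.1)
            (p.1 * (n / (n + 1)), p.2)) := by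
        ext q
        simp only
        rw [← hgrp]
        congr 1
        field_simp
        ring
      rw [e]
      push_cast at hp
      refine ContDiffAt.comp p (hloc _ ?_) (ContDiffAt.prodMk (by fun_prop) ?_)
      · rw [abs_div, abs_of_pos hn, div_mul_eq_mul_div, div_lt_one hn]; exact hp
      · rcases Nat.eq_zero_or_pos n with h | h
        · subst h
          simp only [CharP.cast_eq_zero, zero_add, div_one, mul_zero, hx0]
          exact contDiffAt_snd
        · refine ContDiffAt.comp (f := fun p : ℝ × ℂ => (p.1 * ((n:ℝ) / (n + 1)), p.2))
            (g := fun q : ℝ × ℂ => x q.2 q.1) p (ih _ ?_) (by fun_prop)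
          have hn' : (0:ℝ) < n := by exact_mod_cast h
          simp only
          rw [abs_mul, abs_of_pos (by positivity : 0 < (n:ℝ) / (n + 1))]
          calc |p.1| * (n / (n + 1)) * K = (|p.1| * K) * (n / (n + 1)) := by ring
            _ < (n + 1) * (n / (n + 1)) := by gcongr
            _ = n := by field_simp
  rw [contDiff_iff_contDiffAt]
  intro p
  obtain ⟨n, hn⟩ := exists_nat_gt (|p.1| * K)
  exact hind n p hn

end Annulus


namespace Annulus

theorem cos_band {X : Type*} [TopologicalSpace X] {S : Set X} (hS : IsPreconnected S)
    {g : X → ℝ} (hg : ContinuousOn g S) (hc : ∀ x ∈ S, 0 < Real.cos (g x)) :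
    ∃ m : ℤ, ∀ x ∈ S, |g x - 2 * π * m| < π / 2 := by
  rcases S.eq_empty_or_nonempty with h | ⟨x0, hx0⟩
  · subst h; exact ⟨0, by simp⟩
  have hpi := Real.pi_pos
  set m : ℤ := round (g x0 / (2 * π)) with hm
  have h0 : |g x0 - 2 * π * m| ≤ π := by
    have := abs_sub_round (g x0 / (2 * π))
    rw [← hm] at this
    have e : g x0 - 2 * π * m = 2 * π * (g x0 / (2 * π) - m) := by field_simp
    rw [e, abs_mul, abs_of_pos (by positivity)]
    nlinarith
  have hcos : ∀ x, Real.cos |g x - 2 * π * m| = Real.cos (g x) := by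
    intro x
    rw [Real.cos_abs, mul_comm, Real.cos_sub_int_mul_two_pi]
  have h1 : |g x0 - 2 * π * m| < π / 2 := by
    by_contra h
    push Not at h
    have := Real.cos_nonpos_of_pi_div_two_le_of_le h (by linarith)
    rw [hcos] at this
    linarith [hc x0 hx0]
  refine ⟨m, fun x hx => ?_⟩
  by_contra h
  push Not at h
  have hcont : ContinuousOn (fun x => |g x - 2 * π * m|) S := (hg.sub continuousOn_const).abs
  obtain ⟨y, hy, hy2⟩ := hS.intermediate_value hx0 hx hcont ⟨h1.le, h⟩
  have := hc y hy
  rw [← hcos] at this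
  simp only at hy2
  rw [hy2, Real.cos_pi_div_two] at this
  exact lt_irrefl _ this

theorem exists_log_lift (f : ℝ × ℝ → ℂ) (hf : Continuous f) (h0 : ∀ p, f p ≠ 0) :
    ∃ g : ℝ × ℝ → ℂ, Continuous g ∧ ∀ p, Complex.exp (g p) = f p := by
  obtain ⟨g, h, -⟩ := Complex.isCoveringMapOn_exp.existsUnique_continuousMap_lifts
    (⟨f, hf⟩ : C(ℝ × ℝ, ℂ)) (a₀ := (0, 0)) (Complex.exp_log (h0 _)) (fun x ↦ h0 x)
  exact ⟨g, g.continuous, fun p => congrFun h.2 p⟩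

theorem cos_pos_iff (a b : ℂ) :
    0 < (Complex.exp a * (starRingEnd ℂ) (Complex.exp b)).re ↔ 0 < Real.cos (a.im - b.im) := by
  have : (Complex.exp a * (starRingEnd ℂ) (Complex.exp b)).re =
      Real.exp (a.re + b.re) * Real.cos (a.im - b.im) := by
    rw [← Complex.exp_conj, ← Complex.exp_add, Complex.exp_re]
    simp [sub_eq_add_neg]
  rw [this]
  exact mul_pos_iff_of_pos_left (Real.exp_pos _)

/-- The secant map of a curve. -/
noncomputable def sec (c' : ℝ → ℂ) (p : ℝ × ℝ) : ℂ := ∫ r in (0:ℝ)..1, c' (p.1 + r * p.2)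

theorem sec_continuous {c' : ℝ → ℂ} (h : Continuous c') : Continuous (sec c') := by
  unfold sec
  apply intervalIntegral.continuous_parametric_intervalIntegral_of_continuous'
  fun_prop

theorem sec_zero (c' : ℝ → ℂ) (s : ℝ) : sec c' (s, 0) = c' s := by
  simp [sec]

theorem mul_sec {c c' : ℝ → ℂ} (hd : ∀ t, HasDerivAt c (c' t) t) (hc : Continuous c') (s u : ℝ) :
    u * sec c' (s, u) = c (s + u) - c s := by
  have h1 : ∀ r : ℝ, HasDerivAt (fun r : ℝ => c (s + r * u)) (u • c' (s + r * u)) r := by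
    intro r
    have := (hd (s + r * u)).scomp r (((hasDerivAt_id r).mul_const u).const_add s)
    simpa [Function.comp_def] using this
  have h2 := intervalIntegral.integral_eq_sub_of_hasDerivAt (a := 0) (b := 1) (fun r _ => h1 r)
    (Continuous.intervalIntegrable (Continuous.fun_smul continuous_const (by fun_prop)) _ _)
  rw [intervalIntegral.integral_smul] at h2
  simpa [sec] using h2

theorem re_ge_of_angle {x : ℝ → ℂ} {w : ℝ → ℝ}
    (hx : ∀ t, HasDerivAt x (Complex.exp (w t * I)) t) {α a b : ℝ} (hab : a ≤ b)
    (hw : ∀ r ∈ Icc a b, |w r - α| ≤ 1) :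
    (b - a) / 2 ≤ ((x b - x a) * Complex.exp (-(α * I))).re := by
  have hd : ∀ t, HasDerivAt (fun t => (x t * Complex.exp (-(α * I))).re - t / 2)
      (Real.cos (w t - α) - 1 / 2) t := by
    intro t
    have h1 := (hx t).mul_const (Complex.exp (-(α * I)))
    have h2 := (Complex.reCLM.hasFDerivAt.comp_hasDerivAt t h1)
    have h3 := h2.sub ((hasDerivAt_id t).div_const 2)
    convert! h3 using 1
    rw [← Complex.exp_add]
    simp only [reCLM_apply]
    rw [show (w t * I + -(α * I) : ℂ) = ((w t - α : ℝ) : ℂ) * I by push_cast; ring,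
      Complex.exp_ofReal_mul_I_re]
  have hm : MonotoneOn (fun t => (x t * Complex.exp (-(α * I))).re - t / 2) (Icc a b) := by
    apply monotoneOn_of_deriv_nonneg (convex_Icc a b)
    · exact fun t _ => (hd t).continuousAt.continuousWithinAt
    · exact fun t _ => (hd t).differentiableAt.differentiableWithinAt
    · intro t ht
      rw [interior_Icc] at ht
      rw [(hd t).deriv]
      have h4 := hw t ⟨ht.1.le, ht.2.le⟩
      have h5 := Real.one_sub_sq_div_two_le_cos (x := w t - α)
      have h6 : (w t - α) ^ 2 ≤ 1 := by
        rw [← sq_abs]; nlinarith [abs_nonneg (w t - α)]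
      linarith
  have := hm (left_mem_Icc.2 hab) (right_mem_Icc.2 hab) hab
  simp only at this
  rw [sub_mul, Complex.sub_re]
  linarith

end Annulus


namespace Annulus

/-- Existence of a close pair with minimal gap. -/
theorem exists_min_pair {x : ℝ → ℂ} (hc : Continuous x) {M : ℝ} (hb : ∀ t, 0 ≤ t → ‖x t‖ ≤ M)
    {τ ε : ℝ} (hτ : 0 < τ) (hε : 0 < ε) :
    ∃ t1 t2 : ℝ, 2 * τ ≤ t2 - t1 ∧ ‖x t2 - x t1‖ ≤ ε ∧
      ∀ s t, t1 ≤ s → t ≤ t2 → 2 * τ ≤ t - s → t - s < t2 - t1 → ε < ‖x t - x s‖ := by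
  have hbd : Bornology.IsBounded (Metric.closedBall (0:ℂ) M) := Metric.isBounded_closedBall
  obtain ⟨a, -, φ, hφ, hlim⟩ := tendsto_subseq_of_bounded (x := fun n : ℕ => x (2 * τ * n)) hbd
    (fun n => by simpa using hb (2 * τ * n) (by positivity))
  have hcau := hlim.cauchySeq
  rw [Metric.cauchySeq_iff'] at hcau
  obtain ⟨N, hN⟩ := hcau ε hε
  have h1 := hN (N + 1) (Nat.le_succ N)
  have h2 : φ N + 1 ≤ φ (N + 1) := hφ (Nat.lt_succ_self N)
  simp only [Function.comp_apply] at h1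
  set T := 2 * τ * (φ (N + 1) : ℝ) with hT
  let S : Set (ℝ × ℝ) := (Icc 0 T ×ˢ Icc 0 T) ∩ {p | 2 * τ ≤ p.2 - p.1 ∧ ‖x p.2 - x p.1‖ ≤ ε}
  have hS : IsCompact S := by
    apply (isCompact_Icc.prod isCompact_Icc).inter_right
    apply IsClosed.inter
    · exact isClosed_le continuous_const (continuous_snd.sub continuous_fst)
    · exact isClosed_le ((hc.comp continuous_snd).sub (hc.comp continuous_fst)).norm continuous_const
  have h2' : ((φ N : ℝ) + 1) ≤ φ (N + 1) := by exact_mod_cast h2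
  have hne : S.Nonempty := by
    refine ⟨(2 * τ * φ N, T), ⟨⟨⟨by positivity, ?_⟩, ⟨by positivity, le_rfl⟩⟩, ?_, ?_⟩⟩
    · simp only [hT]; nlinarith
    · simp only [hT]; nlinarith
    · rw [← dist_eq_norm]; exact h1.le
  obtain ⟨p, hp, hmin⟩ := hS.exists_isMinOn hne
    (f := fun p : ℝ × ℝ => p.2 - p.1) (by fun_prop)
  refine ⟨p.1, p.2, hp.2.1, hp.2.2, fun s t hs ht hst hlt => ?_⟩
  by_contra h
  push Not at h
  have hs0 : p.1 ≤ p.2 := by linarith [hp.2.1]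
  have : (s, t) ∈ S := by
    refine ⟨⟨⟨?_, ?_⟩, ⟨?_, ?_⟩⟩, hst, h⟩ <;> simp only <;>
      linarith [hp.1.1.1, hp.1.1.2, hp.1.2.1, hp.1.2.2]
  have := hmin this
  simp only [mem_ofPred_eq] at this
  linarith

open NNReal in
theorem nontrapping (ω : ℂ → ℝ) (K : ℝ≥0) (hω : LipschitzWith K ω) (x : ℝ → ℂ)
    (hx : ∀ t, HasDerivAt x (Complex.exp (ω (x t) * I)) t) (M : ℝ)
    (hb : ∀ t, 0 ≤ t → ‖x t‖ ≤ M) : False := by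
  have hxc : Continuous x := continuous_iff_continuousAt.2 fun t => (hx t).continuousAt
  set w : ℝ → ℝ := fun t => ω (x t) with hw
  have hwc : Continuous w := hω.continuous.comp hxc
  have hx1 : LipschitzWith 1 x := by
    apply lipschitzWith_of_nnnorm_deriv_le (fun t => (hx t).differentiableAt)
    intro t
    rw [(hx t).deriv, ← NNReal.coe_le_coe]
    simp
  have hwl : ∀ s t, |w s - w t| ≤ K * ‖x s - x t‖ := by
    intro s t
    have := hω.dist_le_mul (x s) (x t)
    rwa [Real.dist_eq, dist_eq_norm] at this
  have hwt : ∀ s t, |w s - w t| ≤ K * |s - t| := by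
    intro s t
    refine (hwl s t).trans ?_
    gcongr
    have := hx1.dist_le_mul s t
    simpa [Real.dist_eq, dist_eq_norm] using this
  have hK0 : (0:ℝ) ≤ K := K.2
  set τ : ℝ := 1 / (40 * (K + 1)) with hτd
  have hτ : 0 < τ := by positivity
  have hKτ : K * τ ≤ 1 / 40 := by
    rw [hτd]; field_simp; nlinarith
  obtain ⟨t1, t2, hL2, hclose, hfar⟩ := exists_min_pair hxc hb hτ (half_pos hτ)
  have hlocal : ∀ s t, s ≤ t → t ≤ s + 4 * τ → (t - s) / 2 ≤
      ((x t - x s) * Complex.exp (-(w s * I))).re := by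
    intro s t hst hts
    apply re_ge_of_angle hx hst
    intro r hr
    refine (hwt r s).trans ?_
    rw [abs_of_nonneg (by linarith [hr.1])]
    have : r - s ≤ 4 * τ := by linarith [hr.2]
    nlinarith
  have hnl : ∀ s t, s ≤ t → t ≤ s + 4 * τ → (t - s) / 2 ≤ ‖x t - x s‖ := by
    intro s t hst hts
    refine (hlocal s t hst hts).trans ((Complex.re_le_norm _).trans ?_)
    rw [norm_mul, show (-(w s * I) : ℂ) = ((-w s : ℝ) : ℂ) * I by push_cast; ring,
      Complex.norm_exp_ofReal_mul_I, mul_one]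
  set L := t2 - t1 with hLd
  have hL4 : 4 * τ < L := by
    by_contra h
    push Not at h
    have := hnl t1 t2 (by linarith) (by linarith)
    linarith
  -- secants
  set c' : ℝ → ℂ := fun t => Complex.exp (w t * I) with hc'
  have hc'c : Continuous c' := by fun_prop
  have hms := mul_sec hx hc'c
  have hqne : ∀ s u, t1 ≤ s → 0 ≤ u → s + u ≤ t2 → u ≤ L - 2 * τ → sec c' (s, u) ≠ 0 := by
    intro s u hs hu hsu huL h0
    rcases hu.eq_or_lt with h | h
    · rw [← h, sec_zero] at h0
      exact Complex.exp_ne_zero _ h0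
    · have h1 := hms s u
      rw [h0, mul_zero] at h1
      have h2 : ‖x (s + u) - x s‖ = 0 := by rw [← h1, norm_zero]
      rcases le_or_gt u (4 * τ) with h3 | h3
      · have := hnl s (s + u) (by linarith) (by linarith)
        linarith
      · have := hfar s (s + u) hs hsu (by linarith) (by linarith)
        linarith
  let u' : ℝ → ℝ := fun u => max 0 (min u (L - 2 * τ))
  let s' : ℝ × ℝ → ℝ := fun p => max t1 (min p.1 (t2 - u' p.2))
  have hu'1 : ∀ u, 0 ≤ u' u := fun u => le_max_left _ _
  have hu'2 : ∀ u, u' u ≤ L - 2 * τ := fun u => max_le (by linarith) (min_le_right _ _)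
  have hs'1 : ∀ p, t1 ≤ s' p := fun u => le_max_left _ _
  have hs'2 : ∀ p, s' p ≤ t2 - u' p.2 := fun p => max_le (by linarith [hu'2 p.2]) (min_le_right _ _)
  obtain ⟨g, hgc, hg⟩ := exists_log_lift (fun p => sec c' (s' p, u' p.2))
    ((sec_continuous hc'c).comp (by fun_prop))
    (fun p => hqne _ _ (hs'1 p) (hu'1 p.2) (by linarith [hs'2 p]) (hu'2 p.2))
  have hgP : ∀ s u, t1 ≤ s → 0 ≤ u → s + u ≤ t2 → u ≤ L - 2 * τ →
      u * Complex.exp (g (s, u)) = x (s + u) - x s := by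
    intro s u hs hu hsu huL
    have e1 : u' u = u := by simp only [u']; rw [min_eq_left huL, max_eq_right hu]
    have e2 : s' (s, u) = s := by
      simp only [s', e1]; rw [min_eq_left (by linarith), max_eq_right hs]
    rw [hg, ← hms, e1, e2]
  have hgP0 : ∀ s, t1 ≤ s → s ≤ t2 → Complex.exp (g (s, 0)) = Complex.exp (w s * I) := by
    intro s hs hs2
    have e1 : u' 0 = 0 := by simp only [u']; rw [min_eq_left (by linarith), max_eq_right le_rfl]
    have e2 : s' (s, 0) = s := by
      simp only [s', e1]; rw [min_eq_left (by linarith), max_eq_right hs]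
    rw [hg, e1, e2, sec_zero]
  set Θ : ℝ × ℝ → ℝ := fun p => (g p).im with hΘ
  have hΘc : Continuous Θ := Complex.continuous_im.comp hgc
  -- passing from positivity of real part to cosines
  have hcosα : ∀ s u α : ℝ, t1 ≤ s → 0 < u → s + u ≤ t2 → u ≤ L - 2 * τ →
      0 < ((x (s + u) - x s) * Complex.exp (-(α * I))).re → 0 < Real.cos (Θ (s, u) - α) := by
    intro s u α hs hu hsu huL h
    rw [← hgP s u hs hu.le hsu huL] at h
    have := (cos_pos_iff (g (s, u)) (α * I)).1 (by
      rw [← Complex.exp_conj]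
      rw [mul_assoc, Complex.re_ofReal_mul] at h
      have h2 := (mul_pos_iff_of_pos_left hu).1 h
      simpa using h2)
    simpa using this
  -- small u
  have hsmall : ∃ n : ℤ, ∀ p ∈ {p : ℝ × ℝ | t1 ≤ p.1 ∧ 0 ≤ p.2 ∧ p.1 + p.2 ≤ t2 ∧ p.2 ≤ 2 * τ},
      |Θ p - w p.1 - 2 * π * n| < π / 2 := by
    refine cos_band (g := fun p => Θ p - w p.1) (Convex.isPreconnected ?_) (by fun_prop) ?_
    · rintro ⟨s, u⟩ ⟨a1, a2, a3, a4⟩ ⟨s2, u2⟩ ⟨b1, b2, b3, b4⟩ a b ha hb hab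
      simp only at a1 a2 a3 a4 b1 b2 b3 b4
      have hb' : b = 1 - a := by linarith
      subst hb'
      refine ⟨?_, ?_, ?_, ?_⟩ <;> simp <;> nlinarith
    · rintro ⟨s, u⟩ ⟨a1, a2, a3, a4⟩
      simp only at a1 a2 a3 a4 ⊢
      rcases a2.eq_or_lt with h | h
      · subst h
        have := (cos_pos_iff (g (s, 0)) (w s * I)).1 (by
          rw [hgP0 s a1 (by linarith), Complex.mul_conj]
          simp [Complex.normSq_eq_norm_sq, Complex.norm_exp_ofReal_mul_I])
        simpa using this
      · apply hcosα s u (w s) a1 h a3 (by linarith)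
        have := hlocal s (s + u) (by linarith) (by linarith)
        linarith
  obtain ⟨n, hn⟩ := hsmall
  -- the path from A1 to A2
  have hw12 : |w t2 - w t1| ≤ 1 / 40 := by
    refine (hwl t2 t1).trans ?_
    nlinarith
  have hA : ∃ m : ℤ, ∀ s ∈ Icc t1 (t1 + 2 * τ),
      |Θ (s, L - 2 * τ) - w t1 - π - 2 * π * m| < π / 2 := by
    refine cos_band (g := fun s => Θ (s, L - 2 * τ) - w t1 - π) isPreconnected_Icc
      (by fun_prop) ?_
    intro s hs
    have h1 := hcosα s (L - 2 * τ) (w t1 + π) hs.1 (by linarith) (by linarith [hs.2]) le_rfl ?_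
    · rw [show Θ (s, L - 2 * τ) - w t1 - π = Θ (s, L - 2 * τ) - (w t1 + π) by ring]; exact h1
    · have e1 := hlocal t1 s hs.1 (by linarith [hs.2])
      have e2 : (t2 - (s + (L - 2 * τ))) / 2 ≤
          ((x t2 - x (s + (L - 2 * τ))) * Complex.exp (-(w t1 * I))).re := by
        apply re_ge_of_angle hx (by linarith [hs.2])
        intro r hr
        have f1 := hwt r t2
        rw [abs_sub_comm r, abs_of_nonneg (by linarith [hr.2] : 0 ≤ t2 - r)] at f1
        have f2 : t2 - r ≤ 2 * τ := by linarith [hr.1, hs.1]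
        have f3 : |w r - w t1| ≤ |w r - w t2| + |w t2 - w t1| := abs_sub_le _ _ _
        nlinarith
      have e3 : ((x t2 - x t1) * Complex.exp (-(w t1 * I))).re ≤ τ / 2 := by
        refine (Complex.re_le_norm _).trans ?_
        rw [norm_mul, show (-(w t1 * I) : ℂ) = ((-w t1 : ℝ) : ℂ) * I by push_cast; ring,
          Complex.norm_exp_ofReal_mul_I, mul_one]
        exact hclose
      have e4 : Complex.exp (-(((w t1 + π : ℝ) : ℂ) * I)) = - Complex.exp (-(w t1 * I)) := by
        push_cast
        rw [add_mul, neg_add, Complex.exp_add, Complex.exp_neg (π * I), Complex.exp_pi_mul_I]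
        norm_num
      rw [e4]
      have e5 : ((x (s + (L - 2 * τ)) - x s) * -Complex.exp (-(w t1 * I))).re =
        ((x t2 - x (s + (L - 2 * τ))) * Complex.exp (-(w t1 * I))).re +
        ((x s - x t1) * Complex.exp (-(w t1 * I))).re -
        ((x t2 - x t1) * Complex.exp (-(w t1 * I))).re := by
        rw [← Complex.add_re, ← Complex.sub_re]
        congr 1
        ring
      rw [e5]
      linarith
  obtain ⟨m, hm⟩ := hA
  have hD : ∃ j : ℤ, ∀ u ∈ Icc (2 * τ) (L - 2 * τ),
      |Θ (t1 + u, L - u) - Θ (t1, u) - π - 2 * π * j| < π / 2 := by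
    refine cos_band (g := fun u => Θ (t1 + u, L - u) - Θ (t1, u) - π) isPreconnected_Icc
      (by fun_prop) ?_
    intro u hu
    rw [Real.cos_sub_pi, ← Real.cos_add_pi]
    have h2 := hgP t1 u le_rfl (by linarith [hu.1]) (by linarith [hu.2]) hu.2
    have h3 := hgP (t1 + u) (L - u) (by linarith [hu.1]) (by linarith [hu.2]) (by linarith)
      (by linarith [hu.1])
    rw [show t1 + u + (L - u) = t2 by rw [hLd]; ring] at h3
    have hfo := hfar t1 (t1 + u) le_rfl (by linarith [hu.2]) (by linarith [hu.1])
      (by linarith [hu.2])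
    have hup : 0 < u := by linarith [hu.1]
    have hLp : 0 < L - u := by linarith [hu.2]
    have key := (cos_pos_iff (g (t1 + u, L - u) + π * I) (g (t1, u))).1 (by
      rw [Complex.exp_add, Complex.exp_pi_mul_I]
      set o := x (t1 + u) - x t1 with ho
      have h4 : (x t2 - x (t1 + u)) = (x t2 - x t1) - o := by rw [ho]; ring
      have h5 : (((x t2 - x t1) - o) * (starRingEnd ℂ) o).re < 0 := by
        rw [sub_mul, Complex.sub_re, Complex.mul_conj, Complex.ofReal_re,
          Complex.normSq_eq_norm_sq]
        have : ((x t2 - x t1) * (starRingEnd ℂ) o).re ≤ τ / 2 * ‖o‖ := by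
          refine (Complex.re_le_norm _).trans ?_
          rw [norm_mul, Complex.norm_conj]
          gcongr
        nlinarith [norm_nonneg o]
      rw [← h4, ← h3, ← h2] at h5
      simp only [map_mul, Complex.conj_ofReal] at h5
      have h6 : (((L - u : ℝ) : ℂ) * Complex.exp (g (t1 + u, L - u)) *
        ((u : ℂ) * (starRingEnd ℂ) (Complex.exp (g (t1, u))))).re = ((L - u) * u) *
        (Complex.exp (g (t1 + u, L - u)) * (starRingEnd ℂ) (Complex.exp (g (t1, u)))).re := by
        rw [← Complex.re_ofReal_mul]
        congr 1
        push_cast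
        ring
      rw [h6] at h5
      have h7 := (pos_iff_neg_of_mul_neg h5).1 (mul_pos hLp hup)
      rw [mul_neg_one, neg_mul, Complex.neg_re]
      linarith)
    convert key using 2
    simp [Θ]
    ring
  obtain ⟨j, hj⟩ := hD
  have c1 := hj (2 * τ) ⟨le_rfl, by linarith⟩
  have c2 := hj (L - 2 * τ) ⟨by linarith, le_rfl⟩
  have c3 := hm (t1 + 2 * τ) ⟨by linarith, le_rfl⟩
  have c4 := hm t1 ⟨le_rfl, by linarith⟩
  have c5 := hn (t1, 2 * τ) ⟨le_rfl, by positivity, by simp only; linarith, le_rfl⟩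
  have c6 := hn (t2 - 2 * τ, 2 * τ) ⟨by simp only; linarith, by positivity, by simp, le_rfl⟩
  simp only at c5 c6
  rw [show t1 + (L - 2 * τ) = t2 - 2 * τ by rw [hLd]; ring, show L - (L - 2 * τ) = 2 * τ by ring] at c2
  have c7 : |w (t2 - 2 * τ) - w t1| ≤ 1 / 10 := by
    have f1 := hwt (t2 - 2 * τ) t2
    rw [show t2 - 2 * τ - t2 = -(2 * τ) by ring, abs_neg, abs_of_pos (by positivity : 0 < 2 * τ)] at f1
    have f3 : |w (t2 - 2 * τ) - w t1| ≤ |w (t2 - 2 * τ) - w t2| + |w t2 - w t1| := abs_sub_le _ _ _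
    nlinarith
  rw [abs_lt] at c1 c2 c3 c4 c5 c6
  rw [abs_le] at c7
  have hpi := Real.pi_gt_three
  have i1 : |((m - n - j : ℤ) : ℝ)| < 1 := by
    rw [abs_lt]; push_cast
    constructor <;> nlinarith
  have i2 : |((n - m - 1 - j : ℤ) : ℝ)| < 1 := by
    rw [abs_lt]; push_cast
    constructor <;> nlinarith
  have j1 : m - n - j = 0 := Int.abs_lt_one_iff.1 (by exact_mod_cast i1)
  have j2 : n - m - 1 - j = 0 := Int.abs_lt_one_iff.1 (by exact_mod_cast i2)
  omega

end Annulus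


namespace Annulus

/-- Oriented area of the parallelogram spanned by `u` and `v`. -/
def det2 (u v : ℂ) : ℝ := u.re * v.im - u.im * v.re

theorem det2_map (A : ℂ →L[ℝ] ℂ) (u v : ℂ) : det2 (A u) (A v) = det2 (A 1) (A I) * det2 u v := by
  have h : ∀ z : ℂ, A z = z.re • A 1 + z.im • A I := by
    intro z
    rw [← map_smul, ← map_smul, ← map_add]
    congr 1
    apply Complex.ext <;> simp
  rw [h u, h v]
  simp [det2]
  ring

theorem det2_exp (α : ℝ) (v : ℂ) :
    det2 (Complex.exp (α * I)) v = (v * Complex.exp (-(α * I))).im := by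
  have h1 : Complex.exp (-(α * I)) = (starRingEnd ℂ) (Complex.exp (α * I)) := by
    rw [← Complex.exp_conj]; simp
  rw [h1]
  simp [det2]
  ring

/-- Data of the direction field. -/
structure Field (ω : ℂ → ℝ) (R : ℝ) : Prop where
  smooth : ContDiff ℝ (⊤ : ℕ∞) ω
  per : ∀ z, ω (z + 2 * π * I) = ω z
  Rpos : 0 < R
  far : ∀ z : ℂ, R ≤ |z.re| → ω z = 0
  line : ∀ z : ℂ, z.im = 0 → ω z = 0

theorem periodic_int {α : Type*} {f : ℂ → α} (h : ∀ z, f (z + 2 * π * I) = f z) (k : ℤ) (z : ℂ) :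
    f (z + 2 * π * k * I) = f z := by
  have : Function.Periodic f (2 * π * I) := h
  have := this.int_mul k z
  rw [← this]
  congr 1
  ring

theorem Field.line' {ω : ℂ → ℝ} {R : ℝ} (h : Field ω R) (k : ℤ) (z : ℂ) (hz : z.im = 2 * π * k) :
    ω z = 0 := by
  rw [← periodic_int h.per (-k) z]
  apply h.line
  simp [hz]

theorem Field.lipschitz {ω : ℂ → ℝ} {R : ℝ} (h : Field ω R) :
    ∃ K : NNReal, LipschitzWith K ω := by
  have hc : Continuous (fderiv ℝ ω) := h.smooth.continuous_fderiv (by simp)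
  have hcomp : IsCompact (Icc (-R) R ×ℂ Icc 0 (2 * π)) := isCompact_Icc.reProdIm isCompact_Icc
  obtain ⟨C, hC⟩ := hcomp.exists_bound_of_continuousOn hc.continuousOn
  have hper : ∀ z, fderiv ℝ ω (z + 2 * π * I) = fderiv ℝ ω z := by
    intro z
    rw [← fderiv_comp_add_right]
    congr 1
    ext z
    exact h.per z
  have hb : ∀ z, ‖fderiv ℝ ω z‖ ≤ max C 0 := by
    intro z
    by_cases hz : |z.re| ≤ R
    · have h2 : (0:ℝ) < 2 * π := by positivity
      obtain ⟨k, hk⟩ : ∃ k : ℤ, (z + 2 * π * k * I).im ∈ Icc 0 (2 * π) := by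
        refine ⟨-⌊z.im / (2 * π)⌋, ?_⟩
        have h3 := Int.floor_le (z.im / (2 * π))
        have h4 := Int.lt_floor_add_one (z.im / (2 * π))
        rw [le_div_iff₀ h2] at h3
        rw [div_lt_iff₀ h2] at h4
        simp
        constructor <;> nlinarith
      rw [← periodic_int hper k z]
      refine (hC _ ⟨?_, hk⟩).trans (le_max_left _ _)
      rw [abs_le] at hz
      simpa using hz
    · push Not at hz
      have : ω =ᶠ[nhds z] fun _ => (0:ℝ) := by
        have : ∀ᶠ y : ℂ in nhds z, R < |y.re| :=
          ((continuous_abs.comp Complex.continuous_re).tendsto z).eventually_const_lt hz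
        filter_upwards [this] with y hy
        exact h.far y hy.le
      rw [this.fderiv_eq]
      simp
  exact ⟨⟨max C 0, le_max_right _ _⟩, lipschitzWith_of_nnnorm_fderiv_le
    (h.smooth.differentiable (by simp)) (fun z => hb z)⟩

/-- The flow of a direction field. -/
structure IsFlow (ω : ℂ → ℝ) (φ : ℝ → ℂ → ℂ) : Prop where
  zero : ∀ z, φ 0 z = z
  deriv : ∀ z t, HasDerivAt (fun t => φ t z) (Complex.exp (ω (φ t z) * I)) t
  add : ∀ s t z, φ (s + t) z = φ s (φ t z)
  smooth : ContDiff ℝ (⊤ : ℕ∞) (fun p : ℝ × ℂ => φ p.1 p.2)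
  lip : ∃ K : NNReal, LipschitzWith K (fun z => Complex.exp (ω z * I))

theorem Field.exists_flow {ω : ℂ → ℝ} {R : ℝ} (h : Field ω R) : ∃ φ, IsFlow ω φ := by
  obtain ⟨K, hK⟩ := h.lipschitz
  have hl : LipschitzWith K (fun z => Complex.exp (ω z * I)) := by
    have h1 : LipschitzWith 1 (fun x : ℝ => Complex.exp (x * I)) := by
      apply lipschitzWith_of_nnnorm_deriv_le (by fun_prop)
      intro x
      have : HasDerivAt (fun x : ℝ => Complex.exp (x * I)) (Complex.exp (x * I) * (1 * I)) x :=
        ((Complex.ofRealCLM.hasDerivAt (x := x)).mul_const I).cexp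
      rw [this.deriv, ← NNReal.coe_le_coe]
      simp
    have h2 := h1.comp hK
    rw [one_mul] at h2
    exact h2
  have hs : ContDiff ℝ (⊤ : ℕ∞) (fun z => Complex.exp (ω z * I)) :=
    ((Complex.ofRealCLM.contDiff.comp h.smooth).mul contDiff_const).cexp
  obtain ⟨φ, a, b, c, d⟩ := Annulus.exists_flow _ hs 1 K (fun z => by simp) hl
  exact ⟨φ, a, b, c, d, ⟨K, hl⟩⟩

section
variable {ω : ℂ → ℝ} {R : ℝ} {φ : ℝ → ℂ → ℂ}

theorem IsFlow.uniq (hφ : IsFlow ω φ) (x : ℝ → ℂ)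
    (hx : ∀ t, HasDerivAt x (Complex.exp (ω (x t) * I)) t) (t : ℝ) : φ t (x 0) = x t := by
  obtain ⟨K, hK⟩ := hφ.lip
  have : (fun t => φ t (x 0)) = x :=
    ODE_solution_unique_univ (v := fun _ z => Complex.exp (ω z * I)) (s := fun _ => univ) (K := K)
      (t₀ := 0) (fun _ => hK.lipschitzOnWith) (fun s => ⟨hφ.deriv _ s, trivial⟩)
      (fun s => ⟨hx s, trivial⟩) (by simp [hφ.zero])
  exact congrFun this t

theorem IsFlow.line (h : Field ω R) (hφ : IsFlow ω φ) (k : ℤ) (z : ℂ) (hz : z.im = 2 * π * k)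
    (t : ℝ) : φ t z = z + t := by
  have := hφ.uniq (fun t => z + t) (fun t => by
    rw [h.line' k _ (by simpa using hz)]
    simpa using (Complex.ofRealCLM.hasDerivAt (x := t)).const_add z) t
  simpa using this

theorem IsFlow.per (h : Field ω R) (hφ : IsFlow ω φ) (z : ℂ) (t : ℝ) :
    φ t (z + 2 * π * I) = φ t z + 2 * π * I := by
  have := hφ.uniq (fun t => φ t z + 2 * π * I) (fun t => by
    rw [h.per]
    exact (hφ.deriv z t).add_const _) t
  simpa [hφ.zero] using this

theorem IsFlow.right (h : Field ω R) (hφ : IsFlow ω φ) (z : ℂ) (hz : R ≤ z.re) (t : ℝ)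
    (ht : 0 ≤ t) : φ t z = z + t := by
  obtain ⟨K, hK⟩ := hφ.lip
  have hd : ∀ s : ℝ, HasDerivAt (fun s : ℝ => z + s) 1 s := fun s => by
    simpa using (Complex.ofRealCLM.hasDerivAt (x := s)).const_add z
  refine ODE_solution_unique_of_mem_Icc_right (v := fun _ z => Complex.exp (ω z * I))
    (s := fun _ => univ) (K := K) (f := fun t => φ t z) (g := fun t => z + t) (a := 0) (b := t)
    (fun _ _ => hK.lipschitzOnWith)
    (fun s _ => (hφ.deriv z s).continuousAt.continuousWithinAt)
    (fun s _ => (hφ.deriv z s).hasDerivWithinAt) (fun _ _ => trivial)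
    (fun s _ => (hd s).continuousAt.continuousWithinAt)
    (fun s hs => ?_) (fun _ _ => trivial) (by simp [hφ.zero]) (right_mem_Icc.2 ht)
  rw [h.far (z + s) (by simp; exact le_trans (by linarith [hs.1]) (le_abs_self _))]
  simpa using (hd s).hasDerivWithinAt

theorem IsFlow.left (h : Field ω R) (hφ : IsFlow ω φ) (z : ℂ) (hz : z.re ≤ -R) (t : ℝ)
    (ht : t ≤ 0) : φ t z = z + t := by
  obtain ⟨K, hK⟩ := hφ.lip
  have hd : ∀ s : ℝ, HasDerivAt (fun s : ℝ => z + s) 1 s := fun s => by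
    simpa using (Complex.ofRealCLM.hasDerivAt (x := s)).const_add z
  refine ODE_solution_unique_of_mem_Icc_left (v := fun _ z => Complex.exp (ω z * I))
    (s := fun _ => univ) (K := K) (f := fun t => φ t z) (g := fun t => z + t) (a := t) (b := 0)
    (fun _ _ => hK.lipschitzOnWith)
    (fun s _ => (hφ.deriv z s).continuousAt.continuousWithinAt)
    (fun s _ => (hφ.deriv z s).hasDerivWithinAt) (fun _ _ => trivial)
    (fun s _ => (hd s).continuousAt.continuousWithinAt)
    (fun s hs => ?_) (fun _ _ => trivial) (by simp [hφ.zero]) (left_mem_Icc.2 ht)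
  rw [h.far (z + s) (by simp; exact le_trans (by linarith [hs.2]) (neg_le_abs _))]
  simpa using (hd s).hasDerivWithinAt

theorem IsFlow.cont (hφ : IsFlow ω φ) (z : ℂ) : Continuous fun t => φ t z :=
  continuous_iff_continuousAt.2 fun t => (hφ.deriv z t).continuousAt

theorem IsFlow.neg_apply (hφ : IsFlow ω φ) (z : ℂ) (t : ℝ) : φ (-t) (φ t z) = z := by
  rw [← hφ.add, neg_add_cancel, hφ.zero]

theorem IsFlow.strip (h : Field ω R) (hφ : IsFlow ω φ) (k : ℤ) (z : ℂ) (hz : z.im < 2 * π * k)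
    (t : ℝ) : (φ t z).im < 2 * π * k := by
  by_contra hcon
  push Not at hcon
  have hc : Continuous fun t => (φ t z).im := Complex.continuous_im.comp (hφ.cont z)
  obtain ⟨s, -, hs⟩ := (isPreconnected_univ (α := ℝ)).intermediate_value (mem_univ 0) (mem_univ t)
    hc.continuousOn ⟨by simpa [hφ.zero] using hz.le, hcon⟩
  have h1 := hφ.line h k (φ s z) hs (-s)
  rw [hφ.neg_apply] at h1
  rw [h1] at hz
  simp at hz hs
  linarith

theorem IsFlow.strip' (h : Field ω R) (hφ : IsFlow ω φ) (k : ℤ) (z : ℂ) (hz : 2 * π * k < z.im)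
    (t : ℝ) : 2 * π * k < (φ t z).im := by
  by_contra hcon
  push Not at hcon
  have hc : Continuous fun t => (φ t z).im := Complex.continuous_im.comp (hφ.cont z)
  obtain ⟨s, -, hs⟩ := (isPreconnected_univ (α := ℝ)).intermediate_value (mem_univ t) (mem_univ 0)
    hc.continuousOn ⟨hcon, by simpa [hφ.zero] using hz.le⟩
  have h1 := hφ.line h k (φ s z) hs (-s)
  rw [hφ.neg_apply] at h1
  rw [h1] at hz
  simp at hz hs
  linarith

theorem IsFlow.exists_left (h : Field ω R) (hφ : IsFlow ω φ) (z : ℂ) :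
    ∃ t, 0 ≤ t ∧ (φ (-t) z).re ≤ -R := by
  by_contra hcon
  push Not at hcon
  have hre : ∀ t, 0 ≤ t → (φ (-t) z).re ≤ max R z.re := by
    intro t ht
    by_contra h1
    push Not at h1
    rw [max_lt_iff] at h1
    have h2 := hφ.right h (φ (-t) z) h1.1.le t ht
    rw [← hφ.add, add_neg_cancel, hφ.zero] at h2
    have h3 := congrArg Complex.re h2
    simp at h3
    linarith [h1.2]
  have him : ∃ M, ∀ t, |(φ t z).im| ≤ M := by
    obtain ⟨k, hk⟩ := exists_int_gt (z.im / (2 * π))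
    obtain ⟨l, hl⟩ := exists_int_lt (z.im / (2 * π))
    have hp : (0:ℝ) < 2 * π := by positivity
    rw [div_lt_iff₀ hp] at hk
    rw [lt_div_iff₀ hp] at hl
    refine ⟨|2 * π * k| + |2 * π * l|, fun t => abs_le.2 ⟨?_, ?_⟩⟩
    · have := hφ.strip' h l z (by linarith) t
      linarith [neg_abs_le (2 * π * (l:ℝ)), abs_nonneg (2 * π * (k:ℝ))]
    · have := hφ.strip h k z (by linarith) t
      linarith [le_abs_self (2 * π * (k:ℝ)), abs_nonneg (2 * π * (l:ℝ))]
  obtain ⟨M, hM⟩ := him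
  obtain ⟨K, hK⟩ := h.lipschitz
  refine nontrapping (fun z => ω z + π) K (by simpa using hK.add (LipschitzWith.const π)) (fun t => φ (-t) z)
    (fun t => ?_) (max R z.re + R + M) (fun t ht => ?_)
  · have h1 := (hφ.deriv z (-t)).scomp t (hasDerivAt_neg t)
    convert! h1 using 1
    push_cast
    rw [add_mul, Complex.exp_add, Complex.exp_pi_mul_I]
    simp
  · refine (Complex.norm_le_abs_re_add_abs_im _).trans (add_le_add ?_ (hM _))
    have := h.Rpos
    rw [abs_le]
    have h5 := le_max_left R z.re
    constructor
    · linarith [hcon t ht]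
    · linarith [hre t ht]

end

end Annulus


namespace Annulus

theorem det2_equiv (A : ℂ →L[ℝ] ℂ) (h : det2 (A 1) (A I) ≠ 0) :
    ∃ e : ℂ ≃L[ℝ] ℂ, (e : ℂ →L[ℝ] ℂ) = A := by
  have hinj : Function.Injective A.toLinearMap := by
    rw [injective_iff_map_eq_zero]
    intro v hv
    have hv' : A v = 0 := hv
    have h1 := det2_map A 1 v
    have h2 := det2_map A v I
    rw [hv'] at h1 h2
    simp [det2] at h1 h2
    have h' : ((A 1).re * (A I).im - (A 1).im * (A I).re) ≠ 0 := h
    apply Complex.ext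
    · exact h2.resolve_left h'
    · exact h1.resolve_left h'
  refine ⟨(LinearEquiv.ofInjectiveEndo A.toLinearMap hinj).toContinuousLinearEquiv, ?_⟩
  ext v
  rfl

/-- A global diffeomorphism of the plane with everywhere positive Jacobian has smooth inverse. -/
theorem smooth_inverse (Φ : ℂ → ℂ) (hΦ : ContDiff ℝ (⊤ : ℕ∞) Φ)
    (hd : ∀ z, 0 < det2 (fderiv ℝ Φ z 1) (fderiv ℝ Φ z I)) (hb : Function.Bijective Φ) :
    ∃ G : ℂ → ℂ, ContDiff ℝ (⊤ : ℕ∞) G ∧ (∀ z, G (Φ z) = z) ∧ ∀ z, Φ (G z) = z := by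
  choose e he using fun z => det2_equiv (fderiv ℝ Φ z) (hd z).ne'
  have hf : ∀ z, HasFDerivAt Φ (e z : ℂ →L[ℝ] ℂ) z := fun z => by
    rw [he]; exact (hΦ.differentiable (by simp) z).hasFDerivAt
  have hopen : IsOpenMap Φ := by
    rw [isOpenMap_iff_nhds_le]
    intro z
    have h1 : HasStrictFDerivAt Φ (e z : ℂ →L[ℝ] ℂ) z :=
      (hΦ.contDiffAt).hasStrictFDerivAt' (hf z) (by simp)
    exact (h1.map_nhds_eq_of_equiv).ge
  let E := (Equiv.ofBijective Φ hb).toHomeomorphOfContinuousOpen hΦ.continuous hopen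
  refine ⟨E.symm, ?_, fun z => E.symm_apply_apply z, fun z => E.apply_symm_apply z⟩
  exact E.contDiff_symm (f₀' := e) hf hΦ

/-- A straightening of the direction field. -/
structure Str (ω : ℂ → ℝ) (Φ G : ℂ → ℂ) : Prop where
  smooth : ContDiff ℝ (⊤ : ℕ∞) Φ
  smoothG : ContDiff ℝ (⊤ : ℕ∞) G
  GΦ : ∀ z, G (Φ z) = z
  ΦG : ∀ z, Φ (G z) = z
  per : ∀ z, Φ (z + 2 * π * I) = Φ z + 2 * π * I
  line : ∀ z : ℂ, z.im = 0 → Φ z = z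
  pos : ∀ z, 0 < z.im → 0 < (Φ z).im
  neg : ∀ z, z.im < 0 → (Φ z).im < 0
  det : ∀ z, 0 < det2 (fderiv ℝ Φ z 1) (fderiv ℝ Φ z I)
  dir : ∀ z, fderiv ℝ Φ z 1 = Complex.exp (ω (Φ z) * I)

section
variable {ω : ℂ → ℝ} {R : ℝ} {φ : ℝ → ℂ → ℂ}

theorem IsFlow.smooth_space (hφ : IsFlow ω φ) (t : ℝ) : ContDiff ℝ (⊤ : ℕ∞) (φ t) :=
  hφ.smooth.comp (contDiff_prodMk_right t)

theorem IsFlow.fderiv_V (hφ : IsFlow ω φ) (t : ℝ) (p : ℂ) :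
    fderiv ℝ (φ t) p (Complex.exp (ω p * I)) = Complex.exp (ω (φ t p) * I) := by
  have h1 : HasDerivAt (fun s => φ t (φ s p)) (fderiv ℝ (φ t) p (Complex.exp (ω p * I))) 0 := by
    have h2 := hφ.deriv p 0
    rw [hφ.zero] at h2
    have h3 : HasFDerivAt (φ t) (fderiv ℝ (φ t) p) (φ 0 p) := by
      rw [hφ.zero]
      exact ((hφ.smooth_space t).differentiable (by simp) p).hasFDerivAt
    exact h3.comp_hasDerivAt (0:ℝ) h2
  have h4 : HasDerivAt (fun s => φ t (φ s p)) (Complex.exp (ω (φ t p) * I)) 0 := by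
    have h5 := (hφ.deriv p (t + 0)).comp_const_add t 0
    simpa [hφ.add, hφ.zero] using h5
  exact h1.unique h4

theorem IsFlow.det_pos (hφ : IsFlow ω φ) (t : ℝ) (p : ℂ) :
    0 < det2 (fderiv ℝ (φ t) p 1) (fderiv ℝ (φ t) p I) := by
  set F := fun p : ℝ × ℂ => φ p.1 p.2 with hF
  have hA : ∀ s v, fderiv ℝ (φ s) p v = fderiv ℝ F (s, p) (0, v) := by
    intro s v
    have h1 : HasFDerivAt F (fderiv ℝ F (s, p)) (s, p) :=
      (hφ.smooth.differentiable (by simp) _).hasFDerivAt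
    have h2 := h1.comp p (hasFDerivAt_prodMk_right s p)
    have h3 : HasFDerivAt (φ s) ((fderiv ℝ F (s, p)).comp (ContinuousLinearMap.inr ℝ ℝ ℂ)) p := h2
    rw [h3.fderiv]
    simp
  have hc : ∀ v, Continuous fun s => fderiv ℝ (φ s) p v := by
    intro v
    simp_rw [hA]
    have := hφ.smooth.continuous_fderiv (by simp)
    exact (this.comp (by fun_prop : Continuous fun s : ℝ => (s, p))).clm_apply continuous_const
  have hcd : Continuous fun s => det2 (fderiv ℝ (φ s) p 1) (fderiv ℝ (φ s) p I) := by
    unfold det2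
    have h1 := hc 1
    have h2 := hc I
    fun_prop
  have hne : ∀ s, det2 (fderiv ℝ (φ s) p 1) (fderiv ℝ (φ s) p I) ≠ 0 := by
    intro s h0
    have h1 : HasFDerivAt (φ s) (fderiv ℝ (φ s) p) p :=
      ((hφ.smooth_space s).differentiable (by simp) p).hasFDerivAt
    have h2 : HasFDerivAt (φ (-s)) (fderiv ℝ (φ (-s)) (φ s p)) (φ s p) :=
      ((hφ.smooth_space (-s)).differentiable (by simp) _).hasFDerivAt
    have h3 := h2.comp p h1
    have h4 : φ (-s) ∘ φ s = id := by
      ext z : 1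
      exact hφ.neg_apply z s
    rw [h4] at h3
    have h5 := h3.unique (hasFDerivAt_id p)
    have h6 := det2_map (fderiv ℝ (φ (-s)) (φ s p)) (fderiv ℝ (φ s) p 1) (fderiv ℝ (φ s) p I)
    rw [h0] at h6
    have h7 := DFunLike.congr_fun h5 1
    have h8 := DFunLike.congr_fun h5 I
    simp at h7 h8
    rw [h7, h8] at h6
    simp [det2] at h6
  have h0 : det2 (fderiv ℝ (φ 0) p 1) (fderiv ℝ (φ 0) p I) = 1 := by
    have : φ 0 = id := by
      ext z : 1
      exact hφ.zero z
    rw [this]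
    simp [det2]
  by_contra hcon
  push Not at hcon
  obtain ⟨s, -, hs⟩ := (isPreconnected_univ (α := ℝ)).intermediate_value (mem_univ t) (mem_univ 0)
    hcd.continuousOn ⟨hcon, by rw [h0]; norm_num⟩
  exact hne s hs

theorem Field.exists_str (h : Field ω R) : ∃ Φ G, Str ω Φ G := by
  obtain ⟨φ, hφ⟩ := h.exists_flow
  set Φ : ℂ → ℂ := fun ζ => φ (ζ.re + R) (-R + ζ.im * I) with hΦd
  have hpt : ∀ ζ : ℂ, ω (-R + ζ.im * I) = 0 := by
    intro ζ
    apply h.far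
    simp
    exact le_abs_self R
  have hsm : ContDiff ℝ (⊤ : ℕ∞) Φ := by
    have h1 : ContDiff ℝ (⊤ : ℕ∞) (fun ζ : ℂ => ((ζ.re + R, -R + ζ.im * I) : ℝ × ℂ)) := by
      have a := Complex.reCLM.contDiff (n := (⊤ : ℕ∞))
      have b := Complex.ofRealCLM.contDiff.comp (Complex.imCLM.contDiff (n := (⊤ : ℕ∞)))
      exact (a.add contDiff_const).prodMk (contDiff_const.add (b.mul contDiff_const))
    exact hφ.smooth.comp h1
  have hder : ∀ ζ u, fderiv ℝ Φ ζ u = fderiv ℝ (φ (ζ.re + R)) (-R + ζ.im * I) u := by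
    intro ζ u
    set F := fun p : ℝ × ℂ => φ p.1 p.2 with hF
    set t := ζ.re + R with ht
    set p : ℂ := -R + ζ.im * I with hp
    set A := fderiv ℝ (φ t) p with hA
    have hAt : HasFDerivAt (φ t) A p :=
      ((hφ.smooth_space t).differentiable (by simp) p).hasFDerivAt
    have h1 : HasFDerivAt F (fderiv ℝ F (t, p)) (t, p) :=
      (hφ.smooth.differentiable (by simp) _).hasFDerivAt
    have h2 : HasFDerivAt (φ t) ((fderiv ℝ F (t, p)).comp (ContinuousLinearMap.inr ℝ ℝ ℂ)) p :=
      h1.comp p (hasFDerivAt_prodMk_right t p)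
    have h3 : HasFDerivAt (fun s => φ s p)
        ((fderiv ℝ F (t, p)).comp (ContinuousLinearMap.inl ℝ ℝ ℂ)) t :=
      HasFDerivAt.comp (𝕜 := ℝ) (g := F) (f := fun s : ℝ => (s, p)) t h1 (hasFDerivAt_prodMk_left t p)
    have h4 := h2.unique hAt
    have h5 : fderiv ℝ F (t, p) (1, 0) = A 1 := by
      have h6 := h3.hasDerivAt.unique (hφ.deriv p t)
      have h7 := hφ.fderiv_V t p
      rw [hp, hpt] at h7
      simp at h6 h7
      rw [h6, ← hp] at *
      rw [← h7]
    have h8 : ∀ v, fderiv ℝ F (t, p) (0, v) = A v := fun v => by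
      have := DFunLike.congr_fun h4 v
      simpa using this
    have h9 : HasFDerivAt (fun ζ : ℂ => ((ζ.re + R, -R + ζ.im * I) : ℝ × ℂ))
        ((Complex.reCLM).prod ((Complex.ofRealCLM.comp Complex.imCLM).smulRight I)) ζ := by
      have a := Complex.reCLM.hasFDerivAt (x := ζ)
      have b := (Complex.ofRealCLM.comp Complex.imCLM).hasFDerivAt (x := ζ)
      have c := (b.smul_const I).const_add (-(R:ℂ))
      exact (a.add_const R).prodMk c
    have h10 : HasFDerivAt Φ _ ζ := HasFDerivAt.comp ζ (g := F) h1 h9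
    rw [h10.fderiv]
    have h11 : ((u.re, (u.im:ℂ) * I) : ℝ × ℂ) = u.re • ((1, 0) : ℝ × ℂ) + u.im • ((0, I) : ℝ × ℂ) := by
      ext <;> simp
    have h12 : u = u.re • (1:ℂ) + u.im • I := by
      apply Complex.ext <;> simp
    have : fderiv ℝ F (t, p) (u.re, (u.im:ℂ) * I) = A u := by
      rw [h11, map_add, map_smul, map_smul, h5, h8]
      conv_rhs => rw [h12]
      rw [map_add, map_smul, map_smul]
    simpa using this
  have hdet : ∀ z, 0 < det2 (fderiv ℝ Φ z 1) (fderiv ℝ Φ z I) := by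
    intro z
    rw [hder, hder]
    exact hφ.det_pos _ _
  have hinj' : ∀ ζ η : ℂ, ζ.re ≤ η.re → Φ ζ = Φ η → ζ = η := by
    intro ζ η hle he
    have h1 : φ (-(η.re + R)) (Φ ζ) = -R + η.im * I := by
      rw [he]; exact hφ.neg_apply _ _
    simp only [hΦd] at h1
    rw [← hφ.add, hφ.left h _ (by simp) _ (by linarith)] at h1
    have h2 := congrArg Complex.re h1
    have h3 := congrArg Complex.im h1
    simp at h2 h3
    exact Complex.ext (by linarith) h3
  have hinj : Function.Injective Φ := by
    intro ζ η he
    rcases le_total ζ.re η.re with h1 | h1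
    · exact hinj' ζ η h1 he
    · exact (hinj' η ζ h1 he.symm).symm
  have hsurj : Function.Surjective Φ := by
    intro z
    obtain ⟨t, ht, htl⟩ := hφ.exists_left h z
    set p := φ (-t) z with hp
    refine ⟨((t + p.re : ℝ) : ℂ) + p.im * I, ?_⟩
    have h1 : φ (p.re + R) (-R + p.im * I) = p := by
      rw [hφ.left h _ (by simp) _ (by linarith)]
      apply Complex.ext <;> simp
    have h2 : φ t p = z := by
      rw [hp, ← hφ.add, add_neg_cancel, hφ.zero]
    have h3 := hφ.add t (p.re + R) (-R + p.im * I)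
    rw [h1, h2] at h3
    rw [← h3]
    simp [hΦd]
    ring_nf
  obtain ⟨G, hG, hGΦ, hΦG⟩ := smooth_inverse Φ hsm hdet ⟨hinj, hsurj⟩
  refine ⟨Φ, G, hsm, hG, hGΦ, hΦG, ?_, ?_, ?_, ?_, hdet, ?_⟩
  · intro z
    have := hφ.per h (-R + z.im * I) (z.re + R)
    simp only [hΦd]
    rw [← this]
    congr 1
    · simp
    · simp; ring
  · intro z hz
    simp only [hΦd]
    rw [hφ.line h 0 _ (by simpa using hz)]
    apply Complex.ext <;> simp
  · intro z hz
    have := hφ.strip' h 0 (-R + z.im * I) (by simpa using hz) (z.re + R)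
    simpa using this
  · intro z hz
    have := hφ.strip h 0 (-R + z.im * I) (by simpa using hz) (z.re + R)
    simpa using this
  · intro z
    rw [hder]
    have := hφ.fderiv_V (z.re + R) (-R + z.im * I)
    rw [hpt] at this
    simpa using this

end

section
variable {ω : ℂ → ℝ} {Φ G : ℂ → ℂ}

theorem Str.perG (h : Str ω Φ G) (z : ℂ) : G (z + 2 * π * I) = G z + 2 * π * I := by
  rw [← h.ΦG z, ← h.per, h.GΦ, h.GΦ]

theorem Str.lineG (h : Str ω Φ G) (z : ℂ) (hz : z.im = 0) : G z = z := by
  conv_lhs => rw [← h.line z hz]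
  exact h.GΦ z

theorem Str.posG (h : Str ω Φ G) (z : ℂ) (hz : 0 < z.im) : 0 < (G z).im := by
  rcases lt_trichotomy (G z).im 0 with h1 | h1 | h1
  · have := h.neg _ h1
    rw [h.ΦG] at this
    linarith
  · have := h.line _ h1
    rw [h.ΦG] at this
    rw [← this] at h1
    linarith
  · exact h1

theorem Str.negG (h : Str ω Φ G) (z : ℂ) (hz : z.im < 0) : (G z).im < 0 := by
  rcases lt_trichotomy (G z).im 0 with h1 | h1 | h1
  · exact h1
  · have := h.line _ h1
    rw [h.ΦG] at this
    rw [← this] at h1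
    linarith
  · have := h.pos _ h1
    rw [h.ΦG] at this
    linarith

end

end Annulus


namespace Annulus

/-- Admissible curves in the cylinder cut along the real line. -/
structure Adm (c : ℝ → ℂ) (s₀ : ℝ) : Prop where
  smooth : ContDiff ℝ (⊤ : ℕ∞) c
  per : ∀ θ, c (θ + 2 * π) = c θ + 2 * π * I
  d : ∀ θ, deriv c θ ≠ 0
  inj : Function.Injective c
  im0 : (c s₀).im = 0
  dpos : 0 < (deriv c s₀).im
  strip : ∀ θ ∈ Ioo s₀ (s₀ + 2 * π), (c θ).im ∈ Ioo 0 (2 * π)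

/-- A continuous angle function for secants. -/
structure Lift (c : ℝ → ℂ) (Θ : ℝ × ℝ → ℝ) : Prop where
  cont : Continuous Θ
  eq : ∀ p, sec (deriv c) p = ‖sec (deriv c) p‖ * Complex.exp (Θ p * I)
  last : ∀ s, Θ (s, 2 * π) = π / 2

section
variable {c : ℝ → ℂ} {s₀ : ℝ} {Θ : ℝ × ℝ → ℝ}

theorem Adm.hasDeriv (h : Adm c s₀) (s : ℝ) : HasDerivAt c (deriv c s) s :=
  (h.smooth.differentiable (by simp) s).hasDerivAt

theorem Adm.cont_deriv (h : Adm c s₀) : Continuous (deriv c) :=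
  h.smooth.continuous_deriv (by simp)

theorem Adm.deriv_per (h : Adm c s₀) (s : ℝ) : deriv c (s + 2 * π) = deriv c s := by
  rw [← deriv_comp_add_const]
  simp_rw [h.per]
  simp

theorem Adm.mul_sec (h : Adm c s₀) (s u : ℝ) :
    u * sec (deriv c) (s, u) = c (s + u) - c s :=
  Annulus.mul_sec h.hasDeriv h.cont_deriv s u

theorem Adm.sec_ne (h : Adm c s₀) (p : ℝ × ℝ) : sec (deriv c) p ≠ 0 := by
  obtain ⟨s, u⟩ := p
  by_cases hu : u = 0
  · rw [hu, sec_zero]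
    exact h.d s
  · intro h0
    have h1 := h.mul_sec s u
    rw [h0, mul_zero] at h1
    have h2 := h.inj (sub_eq_zero.1 h1.symm)
    exact hu (by linarith)

theorem Adm.sec_last (h : Adm c s₀) (s : ℝ) : sec (deriv c) (s, 2 * π) = I := by
  have h1 := h.mul_sec s (2 * π)
  rw [h.per, add_sub_cancel_left] at h1
  have h2 : ((2 * π : ℝ) : ℂ) ≠ 0 := by
    exact_mod_cast (by positivity : (2 * π : ℝ) ≠ 0)
  apply mul_left_cancel₀ h2
  rw [h1]
  push_cast
  ring

theorem int_of_exp_eq {a b : ℝ} (h : Complex.exp (a * I) = Complex.exp (b * I)) :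
    ∃ k : ℤ, a = b + 2 * π * k := by
  obtain ⟨k, hk⟩ := Complex.exp_eq_exp_iff_exists_int.1 h
  refine ⟨k, ?_⟩
  have := congrArg Complex.im hk
  simp at this
  linarith

/-- A continuous function with values in `b + 2πℤ` is constant. -/
theorem const_of_exp_eq {X : Type*} [TopologicalSpace X] {S : Set X} (hS : IsPreconnected S)
    {g : X → ℝ} (hg : ContinuousOn g S) (b : ℝ)
    (h : ∀ x ∈ S, Complex.exp (g x * I) = Complex.exp (b * I)) :
    ∃ m : ℤ, ∀ x ∈ S, g x = b + 2 * π * m := by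
  obtain ⟨m, hm⟩ := cos_band (g := fun x => g x - b) hS (hg.sub continuousOn_const) (by
    intro x hx
    obtain ⟨k, hk⟩ := int_of_exp_eq (h x hx)
    rw [hk, add_sub_cancel_left, mul_comm (2 * π), Real.cos_int_mul_two_pi]
    norm_num)
  refine ⟨m, fun x hx => ?_⟩
  obtain ⟨k, hk⟩ := int_of_exp_eq (h x hx)
  have h1 := hm x hx
  rw [hk] at h1 ⊢
  have h2 : |((k - m : ℤ) : ℝ)| < 1 := by
    push_cast
    have h3 : b + 2 * π * k - b - 2 * π * m = 2 * π * ((k:ℝ) - m) := by ring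
    rw [h3, abs_mul, abs_of_pos (by positivity)] at h1
    have := Real.pi_pos
    nlinarith [abs_nonneg ((k:ℝ) - m)]
  have h4 : k - m = 0 := by
    rw [← Int.abs_lt_one_iff]
    exact_mod_cast h2
  rw [sub_eq_zero.1 h4]

theorem Adm.exists_lift (h : Adm c s₀) : ∃ Θ, Lift c Θ := by
  have hcont : Continuous (sec (deriv c)) := sec_continuous h.cont_deriv
  obtain ⟨g, hg, hge⟩ := exists_log_lift (sec (deriv c)) hcont h.sec_ne
  have him : Continuous fun p => (g p).im := Complex.continuous_im.comp hg
  have hge' : ∀ p, sec (deriv c) p = ‖sec (deriv c) p‖ * Complex.exp ((g p).im * I) := by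
    intro p
    rw [← hge p, Complex.norm_exp, Complex.ofReal_exp, ← Complex.exp_add, Complex.re_add_im]
  obtain ⟨m, hm⟩ := const_of_exp_eq (isPreconnected_univ (α := ℝ))
    (g := fun s => (g (s, 2 * π)).im)
    (him.comp (by fun_prop : Continuous fun s : ℝ => (s, 2 * π))).continuousOn (π / 2) (by
      intro s _
      have h1 := hge' (s, 2 * π)
      rw [h.sec_last] at h1
      simp only [Complex.norm_I, Complex.ofReal_one, one_mul] at h1
      rw [← h1]
      push_cast
      rw [Complex.exp_pi_div_two_mul_I])
  refine ⟨fun p => (g p).im - 2 * π * m, by fun_prop, fun p => ?_, fun s => ?_⟩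
  · rw [hge' p]
    congr 1
    · simp [Complex.norm_exp]
    · apply Complex.exp_eq_exp_iff_exists_int.2
      refine ⟨m, ?_⟩
      push_cast
      ring
  · have := hm s (mem_univ s)
    linarith

theorem Lift.deriv_eq (hΘ : Lift c Θ) (s : ℝ) :
    deriv c s = ‖deriv c s‖ * Complex.exp (Θ (s, 0) * I) := by
  have := hΘ.eq (s, 0)
  rwa [sec_zero] at this

theorem Lift.per (h : Adm c s₀) (hΘ : Lift c Θ) (p : ℝ × ℝ) : Θ (p.1 + 2 * π, p.2) = Θ p := by
  have hq : ∀ p : ℝ × ℝ, sec (deriv c) (p.1 + 2 * π, p.2) = sec (deriv c) p := by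
    intro p
    unfold sec
    congr 1
    ext r
    simp only
    rw [← h.deriv_per (p.1 + r * p.2)]
    congr 1
    ring
  have hcont := hΘ.cont
  obtain ⟨m, hm⟩ := const_of_exp_eq (isPreconnected_univ (α := ℝ × ℝ))
    (g := fun p => Θ (p.1 + 2 * π, p.2) - Θ p) (by fun_prop) 0 (by
      intro p _
      have h1 := hΘ.eq (p.1 + 2 * π, p.2)
      rw [hq] at h1
      have h2 := hΘ.eq p
      have h3 : (‖sec (deriv c) p‖ : ℂ) ≠ 0 := by
        simpa using h.sec_ne p
      have h4 := mul_left_cancel₀ h3 (h1.symm.trans h2)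
      push_cast
      rw [sub_mul, Complex.exp_sub, h4]
      simp)
  have h1 := hm (0, 2 * π) trivial
  rw [hΘ.last, hΘ.last] at h1
  have h2 := hm p trivial
  rw [← h1] at h2
  linarith

theorem Lift.base (h : Adm c s₀) (hΘ : Lift c Θ) : Θ (s₀, 0) ∈ Ioo 0 π := by
  have hcont := hΘ.cont
  have hpi := Real.pi_pos
  obtain ⟨m, hm⟩ := cos_band (S := Icc (0:ℝ) (2 * π)) (g := fun u => Θ (s₀, u) - π / 2)
    isPreconnected_Icc (by fun_prop) (by
      intro u hu
      have h1 : 0 < (sec (deriv c) (s₀, u)).im := by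
        rcases hu.1.eq_or_lt with h2 | h2
        · rw [← h2, sec_zero]
          exact h.dpos
        · rcases hu.2.eq_or_lt with h3 | h3
          · rw [h3, h.sec_last]
            simp
          · have h4 := congrArg Complex.im (h.mul_sec s₀ u)
            simp [h.im0] at h4
            have h5 := (h.strip (s₀ + u) ⟨by linarith, by linarith⟩).1
            rw [← h4] at h5
            exact pos_of_mul_pos_right h5 h2.le
      rw [hΘ.eq] at h1
      rw [Complex.im_ofReal_mul, Complex.exp_ofReal_mul_I_im] at h1
      rw [Real.cos_sub_pi_div_two]
      exact pos_of_mul_pos_right h1 (norm_nonneg _))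
  have h1 := hm (2 * π) ⟨by positivity, le_rfl⟩
  rw [hΘ.last] at h1
  have hm0 : m = 0 := by
    have h3 : π / 2 - π / 2 - 2 * π * m = 2 * π * (-(m:ℝ)) := by ring
    rw [h3, abs_mul, abs_neg, abs_of_pos (by positivity)] at h1
    have h2 : |(m:ℝ)| < 1 := by nlinarith [abs_nonneg (m:ℝ)]
    rw [← Int.abs_lt_one_iff]
    exact_mod_cast h2
  have h2 := hm 0 ⟨le_rfl, by positivity⟩
  rw [hm0] at h2
  simp at h2
  rw [abs_lt] at h2
  constructor <;> linarith [h2.1, h2.2]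

/-- At a contact with the imaginary axis. -/
theorem Lift.contact (h : Adm c s₀) (hΘ : Lift c Θ) (hre : ∀ s, 0 ≤ (c s).re) (b : ℝ)
    (hb : (c b).re = 0) (h1 : (deriv c b).re = 0) (h2 : 0 < (deriv c b).im) :
    Θ (b, 0) = π / 2 := by
  have hcont := hΘ.cont
  have hpi := Real.pi_pos
  have hcos : ∀ u ∈ Icc (0:ℝ) (2 * π), 0 ≤ Real.cos (Θ (b, u)) := by
    intro u hu
    have h3 : 0 ≤ (sec (deriv c) (b, u)).re := by
      rcases hu.1.eq_or_lt with h4 | h4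
      · rw [← h4, sec_zero]
        exact h1.ge
      · have h5 := congrArg Complex.re (h.mul_sec b u)
        simp [hb] at h5
        have h6 := hre (b + u)
        rw [← h5] at h6
        exact nonneg_of_mul_nonneg_right h6 h4
    rw [hΘ.eq] at h3
    rw [Complex.re_ofReal_mul, Complex.exp_ofReal_mul_I_re] at h3
    exact nonneg_of_mul_nonneg_right h3 (norm_pos_iff.2 (h.sec_ne _))
  obtain ⟨k, hk⟩ : ∃ k : ℤ, Θ (b, 0) = π / 2 + 2 * π * k := by
    apply int_of_exp_eq
    push_cast
    rw [Complex.exp_pi_div_two_mul_I]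
    have h3 := hΘ.deriv_eq b
    have h4 : deriv c b = ‖deriv c b‖ * I := by
      have h5 : deriv c b = ((deriv c b).im : ℂ) * I := by
        apply Complex.ext <;> simp [h1]
      have h6 : ‖deriv c b‖ = (deriv c b).im := by
        rw [h5]
        simp [abs_of_pos h2]
      rw [h6]
      exact h5
    have h7 : (‖deriv c b‖ : ℂ) ≠ 0 := by simpa using h.d b
    exact mul_left_cancel₀ h7 (h3.symm.trans h4)
  have hIVT : ∀ x, x ∈ uIcc (Θ (b, 0)) (π / 2) → 0 ≤ Real.cos x := by
    intro x hx
    rw [← hΘ.last b] at hx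
    obtain ⟨u, hu, hux⟩ := intermediate_value_uIcc (a := 0) (b := 2 * π) (f := fun u => Θ (b, u))
      (by fun_prop) hx
    rw [← hux]
    rw [uIcc_of_le (by positivity)] at hu
    exact hcos u hu
  rcases lt_trichotomy k 0 with hk0 | hk0 | hk0
  · exfalso
    have : (k:ℝ) ≤ -1 := by exact_mod_cast (by omega : k ≤ -1)
    have := hIVT (-π) (by
      rw [mem_uIcc]; left
      constructor
      · rw [hk]; nlinarith
      · linarith)
    rw [Real.cos_neg, Real.cos_pi] at this
    linarith
  · rw [hk, hk0]; simp
  · exfalso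
    have : (1:ℝ) ≤ k := by exact_mod_cast (by omega : 1 ≤ k)
    have := hIVT π (by
      rw [mem_uIcc]; right
      constructor
      · linarith
      · rw [hk]; nlinarith)
    rw [Real.cos_pi] at this
    linarith

end

end Annulus


namespace Annulus

section
variable {c : ℝ → ℂ} {s₀ : ℝ} {Θ : ℝ × ℝ → ℝ}

theorem Adm.per_int (h : Adm c s₀) (k : ℤ) (θ : ℝ) :
    c (θ + 2 * π * k) = c θ + 2 * π * k * I := by
  have : Function.Periodic (fun θ : ℝ => c θ - θ * I) (2 * π) := by
    intro θ
    simp only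
    rw [h.per]
    push_cast
    ring
  have := this.int_mul k θ
  rw [mul_comm (k:ℝ)] at this
  push_cast at this
  linear_combination this

theorem Lift.per_int (h : Adm c s₀) (hΘ : Lift c Θ) (k : ℤ) (θ : ℝ) :
    Θ (θ + 2 * π * k, 0) = Θ (θ, 0) := by
  have : Function.Periodic (fun θ : ℝ => Θ (θ, 0)) (2 * π) := by
    intro θ
    exact hΘ.per h (θ, 0)
  have := this.int_mul k θ
  rw [mul_comm (k:ℝ)] at this
  exact this

theorem exists_shift (s a : ℝ) : ∃ k : ℤ, a + 2 * π * k ∈ Ico s (s + 2 * π) := by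
  obtain ⟨k, hk, -⟩ := existsUnique_add_zsmul_mem_Ico (by positivity : (0:ℝ) < 2 * π) a s
  refine ⟨k, ?_⟩
  simpa [mul_comm] using hk

/-- The only crossings of the cut are at the base point. -/
theorem Adm.cut (h : Adm c s₀) (a : ℝ) (n : ℤ) (ha : (c a).im = 2 * π * n) :
    a = s₀ + 2 * π * n := by
  obtain ⟨k, hk⟩ := exists_shift s₀ a
  have h1 := congrArg Complex.im (h.per_int k a)
  simp [ha] at h1
  have hpi : (0:ℝ) < 2 * π := by positivity
  rcases hk.1.eq_or_lt with h2 | h2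
  · rw [← h2, h.im0] at h1
    nlinarith
  · have h3 := h.strip _ ⟨h2, hk.2⟩
    rw [h1] at h3
    have h4 : 2 * π * (n:ℝ) + 2 * π * k = 2 * π * ((n + k : ℤ) : ℝ) := by push_cast; ring
    rw [h4] at h3
    have h5 : (0:ℝ) < ((n + k : ℤ) : ℝ) := pos_of_mul_pos_right h3.1 hpi.le
    have h6 : ((n + k : ℤ) : ℝ) < 1 := by
      by_contra hh
      push Not at hh
      nlinarith [h3.2]
    have h7 : 0 < n + k := by exact_mod_cast h5
    have h8 : n + k < 1 := by exact_mod_cast h6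
    omega

theorem Adm.exists_bound (h : Adm c s₀) : ∃ R, 0 < R ∧ ∀ a, |(c a).re| < R := by
  obtain ⟨C, hC⟩ := (isCompact_Icc (a := (0:ℝ)) (b := 2 * π)).exists_bound_of_continuousOn
    h.smooth.continuous.continuousOn
  refine ⟨|C| + 1, by positivity, fun a => ?_⟩
  obtain ⟨k, hk⟩ := exists_shift 0 a
  have h1 := hC (a + 2 * π * k) ⟨hk.1, by linarith [hk.2]⟩
  have h2 := congrArg Complex.re (h.per_int k a)
  simp at h2
  rw [← h2]
  have := Complex.abs_re_le_norm (c (a + 2 * π * k))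
  linarith [le_abs_self C]

theorem isOpen_sel (h : Adm c s₀) (hΘ : Lift c Θ) (x : ℝ) :
    IsOpen {m : ℂ | ∀ a, Complex.exp (c a) = m → x ∈ Ioo (Θ (a, 0) - π) (Θ (a, 0))} := by
  have hcont := hΘ.cont
  have hcc := h.smooth.continuous
  have hK : IsCompact {a : ℝ | a ∈ Icc (0:ℝ) (2 * π) ∧ x ∉ Ioo (Θ (a, 0) - π) (Θ (a, 0))} := by
    apply isCompact_Icc.inter_right
    have : IsOpen {a : ℝ | x ∈ Ioo (Θ (a, 0) - π) (Θ (a, 0))} :=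
      (isOpen_lt (f := fun a : ℝ => Θ (a, 0) - π) (g := fun _ => x) (by fun_prop) (by fun_prop)).inter
        (isOpen_lt (f := fun _ => x) (g := fun a : ℝ => Θ (a, 0)) (by fun_prop) (by fun_prop))
    exact this.isClosed_compl
  have hE : Continuous fun a => Complex.exp (c a) := by fun_prop
  have := (hK.image hE).isClosed.isOpen_compl
  convert! this using 1
  ext m
  simp only [mem_ofPred_eq, mem_compl_iff, mem_image, not_exists, not_and]
  constructor
  · intro h1 a ha he
    exact ha.2 (h1 a he)
  · intro h1 a he
    by_contra hcon
    obtain ⟨k, hk⟩ := exists_shift 0 a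
    refine h1 (a + 2 * π * k) ⟨⟨hk.1, by linarith [hk.2]⟩, ?_⟩ ?_
    · rw [hΘ.per_int h]; exact hcon
    · rw [h.per_int, ← he, Complex.exp_eq_exp_iff_exists_int]
      exact ⟨k, by ring⟩

end

/-- The transverse direction field. -/
theorem exists_field {ι : Type*} [Finite ι] (c : ι → ℝ → ℂ) (s₀ : ι → ℝ) (Θ : ι → ℝ × ℝ → ℝ)
    (h : ∀ i, Adm (c i) (s₀ i)) (hΘ : ∀ i, Lift (c i) (Θ i))
    (hcon : ∀ i j a b, c i a = c j b → Θ i (a, 0) = Θ j (b, 0)) :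
    ∃ ω R, Field ω R ∧ ∀ i a, Θ i (a, 0) - ω (c i a) ∈ Ioo 0 π := by
  cases nonempty_fintype ι
  choose R₀ hR₀ hR₀b using fun i => (h i).exists_bound
  set R := 1 + ∑ i, R₀ i with hR
  have hRpos : 0 < R := by
    have : 0 ≤ ∑ i, R₀ i := Finset.sum_nonneg fun i _ => (hR₀ i).le
    linarith
  have hRb : ∀ i a, |(c i a).re| < R := by
    intro i a
    have h1 := hR₀b i a
    have h2 : R₀ i ≤ ∑ i, R₀ i := Finset.single_le_sum (fun i _ => (hR₀ i).le) (Finset.mem_univ i)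
    linarith
  have hconE : ∀ i j a b, Complex.exp (c i a) = Complex.exp (c j b) → Θ i (a, 0) = Θ j (b, 0) := by
    intro i j a b he
    obtain ⟨k, hk⟩ := Complex.exp_eq_exp_iff_exists_int.1 he
    rw [← (hΘ j).per_int (h j) k b]
    apply hcon
    rw [hk, (h j).per_int]
    ring
  set L : Set ℂ := {m | m.im = 0 ∧ 0 ≤ m.re} ∪ {m | ‖m‖ ≤ Real.exp (-R)} ∪ {m | Real.exp R ≤ ‖m‖}
    with hL
  have hLc : IsClosed L := by
    refine IsClosed.union (IsClosed.union (IsClosed.inter ?_ ?_) ?_) ?_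
    · exact isClosed_eq Complex.continuous_im continuous_const
    · exact isClosed_le continuous_const Complex.continuous_re
    · exact isClosed_le continuous_norm continuous_const
    · exact isClosed_le continuous_const continuous_norm
  have hLE : ∀ i a, Complex.exp (c i a) ∈ L → Θ i (a, 0) ∈ Ioo 0 π := by
    intro i a ha
    have hb := abs_lt.1 (hRb i a)
    rcases ha with (h1 | h1) | h1
    · have h2 : ∃ n : ℤ, (c i a).im = 2 * π * n := by
        have h3 : Complex.exp ((c i a).im * I) = Complex.exp ((0:ℝ) * I) := by
          have h4 : Complex.exp ((c i a).re) * Complex.exp ((c i a).im * I) =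
              Complex.exp ((c i a).re) := by
            rw [← Complex.exp_add, Complex.re_add_im]
            have h5 : ‖Complex.exp (c i a)‖ = (Complex.exp (c i a)).re := by
              have : Complex.exp (c i a) = ((Complex.exp (c i a)).re : ℂ) := by
                apply Complex.ext
                · simp
                · rw [h1.1]; simp
              conv_lhs => rw [this]
              rw [Complex.norm_real, Real.norm_eq_abs, abs_of_nonneg h1.2]
            rw [Complex.norm_exp] at h5
            rw [← Complex.ofReal_exp, h5]
            apply Complex.ext
            · simp
            · rw [h1.1]; simp
          have := mul_left_cancel₀ (Complex.exp_ne_zero _) (h4.trans (mul_one _).symm)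
          simpa using this
        obtain ⟨k, hk⟩ := int_of_exp_eq h3
        exact ⟨k, by simpa using hk⟩
      obtain ⟨n, hn⟩ := h2
      rw [(h i).cut a n hn, (hΘ i).per_int (h i)]
      exact (hΘ i).base (h i)
    · exfalso
      rw [mem_ofPred_eq, Complex.norm_exp, Real.exp_le_exp] at h1
      linarith
    · exfalso
      rw [mem_ofPred_eq, Complex.norm_exp, Real.exp_le_exp] at h1
      linarith
  set t : ℂ → Set ℝ := fun m =>
    {x | (∀ i a, Complex.exp (c i a) = m → x ∈ Ioo (Θ i (a, 0) - π) (Θ i (a, 0))) ∧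
      (m ∈ L → x = 0)} with ht
  have hne : ∀ m, (t m).Nonempty := by
    intro m
    by_cases hm : m ∈ L
    · refine ⟨0, fun i a he => ?_, fun _ => rfl⟩
      have := hLE i a (he ▸ hm)
      constructor <;> linarith [this.1, this.2]
    · by_cases hE : ∃ j b, Complex.exp (c j b) = m
      · obtain ⟨j, b, hjb⟩ := hE
        refine ⟨Θ j (b, 0) - π / 2, fun i a he => ?_, fun h => absurd h hm⟩
        rw [hconE i j a b (he.trans hjb.symm)]
        constructor <;> linarith [Real.pi_pos]
      · push Not at hE
        exact ⟨0, fun i a he => absurd he (hE i a), fun _ => rfl⟩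
  obtain ⟨g, hg⟩ := exists_contMDiffMap_forall_mem_convex_of_local_const (n := (⊤ : ℕ∞))
    (modelWithCornersSelf ℝ ℂ) (t := t) (by
      intro m x hx y hy α β hα hβ hαβ
      refine ⟨fun i a he => convex_Ioo _ _ (hx.1 i a he) (hy.1 i a he) hα hβ hαβ, fun hm => ?_⟩
      rw [hx.2 hm, hy.2 hm]
      simp) (by
      intro m
      obtain ⟨x, hx⟩ := hne m
      refine ⟨x, ?_⟩
      have h1 : ∀ᶠ y in nhds m, ∀ i, ∀ a, Complex.exp (c i a) = y →
          x ∈ Ioo (Θ i (a, 0) - π) (Θ i (a, 0)) := by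
        rw [Filter.eventually_all]
        intro i
        exact (isOpen_sel (h i) (hΘ i) x).mem_nhds (hx.1 i)
      have h2 : ∀ᶠ y in nhds m, y ∈ L → x = 0 := by
        by_cases hm : m ∈ L
        · exact Filter.Eventually.of_forall fun _ _ => hx.2 hm
        · filter_upwards [hLc.isOpen_compl.mem_nhds hm] with y hy hyL
          exact absurd hyL hy
      filter_upwards [h1, h2] with y hy1 hy2
      exact ⟨hy1, hy2⟩)
  refine ⟨fun z => g (Complex.exp z), R, ⟨?_, ?_, hRpos, ?_, ?_⟩, ?_⟩
  · exact (contMDiff_iff_contDiff.1 g.contMDiff).comp Complex.contDiff_exp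
  · intro z
    rw [Complex.exp_add, Complex.exp_two_pi_mul_I, mul_one]
  · intro z hz
    apply (hg _).2
    rcases le_abs.1 hz with h1 | h1
    · right
      rw [mem_ofPred_eq, Complex.norm_exp, Real.exp_le_exp]
      exact h1
    · left; right
      rw [mem_ofPred_eq, Complex.norm_exp, Real.exp_le_exp]
      linarith
  · intro z hz
    apply (hg _).2
    left; left
    have : z = (z.re : ℂ) := by apply Complex.ext <;> simp [hz]
    rw [this, ← Complex.ofReal_exp]
    exact ⟨Complex.ofReal_im _, by rw [Complex.ofReal_re]; exact (Real.exp_pos z.re).le⟩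
  · intro i a
    have := (hg (Complex.exp (c i a))).1 i a rfl
    constructor <;> linarith [this.1, this.2]

end Annulus


namespace Annulus

/-- Orientation preserving diffeomorphisms of the plane compatible with the cut cylinder. -/
structure Dif (Φ G : ℂ → ℂ) : Prop where
  smooth : ContDiff ℝ (⊤ : ℕ∞) Φ
  smoothG : ContDiff ℝ (⊤ : ℕ∞) G
  GΦ : ∀ z, G (Φ z) = z
  ΦG : ∀ z, Φ (G z) = z
  per : ∀ z, Φ (z + 2 * π * I) = Φ z + 2 * π * I
  line : ∃ x₀ : ℝ, ∀ z : ℂ, z.im = 0 → Φ z = z + x₀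
  pos : ∀ z, 0 < z.im → 0 < (Φ z).im
  neg : ∀ z, z.im < 0 → (Φ z).im < 0
  det : ∀ z, 0 < det2 (fderiv ℝ Φ z 1) (fderiv ℝ Φ z I)

theorem Str.dif {ω : ℂ → ℝ} {Φ G : ℂ → ℂ} (h : Str ω Φ G) : Dif Φ G :=
  ⟨h.smooth, h.smoothG, h.GΦ, h.ΦG, h.per, ⟨0, fun z hz => by rw [h.line z hz]; simp⟩, h.pos, h.neg,
    h.det⟩

theorem Dif.comp {Φ G Ψ K : ℂ → ℂ} (h : Dif Φ G) (k : Dif Ψ K) : Dif (Φ ∘ Ψ) (K ∘ G) := by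
  refine ⟨h.smooth.comp k.smooth, k.smoothG.comp h.smoothG, fun z => ?_, fun z => ?_, fun z => ?_,
    ?_, fun z hz => h.pos _ (k.pos z hz), fun z hz => h.neg _ (k.neg z hz), fun z => ?_⟩
  · simp [h.GΦ, k.GΦ]
  · simp [h.ΦG, k.ΦG]
  · simp [h.per, k.per]
  · obtain ⟨x, hx⟩ := h.line
    obtain ⟨y, hy⟩ := k.line
    refine ⟨x + y, fun z hz => ?_⟩
    simp only [Function.comp]
    rw [hy z hz, hx _ (by simp [hz])]
    push_cast
    ring
  · rw [fderiv_comp z (h.smooth.differentiable (by simp) _) (k.smooth.differentiable (by simp) _)]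
    simp only [ContinuousLinearMap.comp_apply]
    rw [det2_map]
    exact mul_pos (h.det _) (k.det _)

/-- Horizontal shear. -/
noncomputable def shear (f : ℝ → ℝ) (z : ℂ) : ℂ := z + f z.im

theorem shear_smooth {f : ℝ → ℝ} (hf : ContDiff ℝ (⊤ : ℕ∞) f) : ContDiff ℝ (⊤ : ℕ∞) (shear f) := by
  have := Complex.ofRealCLM.contDiff.comp (hf.comp (Complex.imCLM.contDiff (n := (⊤ : ℕ∞))))
  exact contDiff_id.add this

theorem shear_dif {f : ℝ → ℝ} (hf : ContDiff ℝ (⊤ : ℕ∞) f) (hp : ∀ y, f (y + 2 * π) = f y) :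
    Dif (shear f) (shear (fun y => -f y)) := by
  refine ⟨shear_smooth hf, shear_smooth hf.neg, fun z => ?_, fun z => ?_, fun z => ?_,
    ⟨f 0, fun z hz => ?_⟩, fun z hz => ?_, fun z hz => ?_, fun z => ?_⟩
  · simp [shear]
  · simp [shear]
  · simp [shear, hp]; ring
  · simp [shear, hz]
  · simpa [shear] using hz
  · simpa [shear] using hz
  · have h1 : HasFDerivAt (fun z : ℂ => (f z.im : ℂ))
        (((deriv f z.im) • Complex.imCLM).smulRight (1:ℂ)) z := by
      have a : HasDerivAt f (deriv f z.im) (Complex.imCLM z) :=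
        (hf.differentiable (by simp) _).hasDerivAt
      have b := a.comp_hasFDerivAt z (Complex.imCLM.hasFDerivAt (x := z))
      have c := Complex.ofRealCLM.hasFDerivAt.comp z b
      refine c.congr_fderiv ?_
      ext <;> simp
    have h2 : HasFDerivAt (shear f) _ z := (hasFDerivAt_id z).add h1
    rw [h2.fderiv]
    simp [det2]

section
variable {Φ G : ℂ → ℂ}

theorem Dif.perG (h : Dif Φ G) (z : ℂ) : G (z + 2 * π * I) = G z + 2 * π * I := by
  rw [← h.ΦG z, ← h.per, h.GΦ, h.GΦ]

theorem Dif.lineG (h : Dif Φ G) : ∃ x₀ : ℝ, ∀ z : ℂ, z.im = 0 → G z = z + x₀ := by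
  obtain ⟨x, hx⟩ := h.line
  refine ⟨-x, fun z hz => ?_⟩
  have := hx (z + (-x : ℝ)) (by simp [hz])
  have h2 : z + ((-x : ℝ) : ℂ) + x = z := by push_cast; ring
  rw [h2] at this
  conv_lhs => rw [← this]
  exact h.GΦ _

theorem Dif.posG (h : Dif Φ G) (z : ℂ) (hz : 0 < z.im) : 0 < (G z).im := by
  obtain ⟨x, hx⟩ := h.line
  rcases lt_trichotomy (G z).im 0 with h1 | h1 | h1
  · have := h.neg _ h1
    rw [h.ΦG] at this
    linarith
  · have := hx _ h1
    rw [h.ΦG] at this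
    rw [this] at hz
    simp at hz
    linarith
  · exact h1

theorem Dif.negG (h : Dif Φ G) (z : ℂ) (hz : z.im < 0) : (G z).im < 0 := by
  obtain ⟨x, hx⟩ := h.line
  rcases lt_trichotomy (G z).im 0 with h1 | h1 | h1
  · exact h1
  · have := hx _ h1
    rw [h.ΦG] at this
    rw [this] at hz
    simp at hz
    linarith
  · have := h.pos _ h1
    rw [h.ΦG] at this
    linarith

theorem Dif.fd (h : Dif Φ G) (z : ℂ) : HasFDerivAt Φ (fderiv ℝ Φ z) z :=
  (h.smooth.differentiable (by simp) z).hasFDerivAt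

theorem Dif.fdG (h : Dif Φ G) (z : ℂ) : HasFDerivAt G (fderiv ℝ G z) z :=
  (h.smoothG.differentiable (by simp) z).hasFDerivAt

theorem Dif.dir_line (h : Dif Φ G) (z : ℂ) (hz : z.im = 0) : fderiv ℝ Φ z 1 = 1 := by
  obtain ⟨x, hx⟩ := h.line
  have h0 : z = ((z.re : ℝ) : ℂ) := by apply Complex.ext <;> simp [hz]
  have h1 : HasDerivAt (fun t : ℝ => Φ (t : ℂ)) (fderiv ℝ Φ z 1) z.re := by
    have a := Complex.ofRealCLM.hasDerivAt (x := z.re)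
    have b : HasFDerivAt Φ (fderiv ℝ Φ z) (Complex.ofRealCLM z.re) := by
      have : Complex.ofRealCLM z.re = z := h0.symm
      rw [this]
      exact h.fd z
    simpa [Function.comp_def] using b.comp_hasDerivAt z.re a
  have h2 : HasDerivAt (fun t : ℝ => Φ (t : ℂ)) 1 z.re := by
    have : (fun t : ℝ => Φ (t : ℂ)) = fun t : ℝ => (t : ℂ) + x := by
      ext t
      rw [hx _ (by simp)]
    rw [this]
    simpa using (Complex.ofRealCLM.hasDerivAt (x := z.re)).add_const (x : ℂ)
  exact h1.unique h2

variable {c : ℝ → ℂ} {s₀ : ℝ}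

/-- The chain rule for the transported curve. -/
theorem Dif.chain (h : Dif Φ G) (hc : Adm c s₀) (θ : ℝ) :
    deriv c θ = fderiv ℝ Φ (G (c θ)) (deriv (G ∘ c) θ) := by
  have h1 : HasDerivAt (G ∘ c) (deriv (G ∘ c) θ) θ :=
    (((h.smoothG.comp hc.smooth).differentiable (by simp)) θ).hasDerivAt
  have h2 := (h.fd ((G ∘ c) θ)).comp_hasDerivAt θ h1
  have h3 : Φ ∘ (G ∘ c) = c := by
    ext t : 1
    exact h.ΦG _
  rw [h3] at h2
  exact h2.deriv

theorem Dif.chainG (h : Dif Φ G) (hc : Adm c s₀) (θ : ℝ) :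
    deriv (G ∘ c) θ = fderiv ℝ G (c θ) (deriv c θ) :=
  ((h.fdG (c θ)).comp_hasDerivAt θ (hc.hasDeriv θ)).deriv

theorem Dif.adm (h : Dif Φ G) (hc : Adm c s₀) : Adm (G ∘ c) s₀ := by
  obtain ⟨x, hx⟩ := h.lineG
  have him0 : (G (c s₀)).im = 0 := by
    rw [hx _ hc.im0]
    simp [hc.im0]
  refine ⟨h.smoothG.comp hc.smooth, fun θ => ?_, fun θ h0 => ?_, ?_, him0, ?_, ?_⟩
  · simp [hc.per, h.perG]
  · apply hc.d θ
    rw [h.chain hc, h0, map_zero]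
  · exact (Function.LeftInverse.injective h.ΦG).comp hc.inj
  · have h1 := det2_map (fderiv ℝ Φ (G (c s₀))) 1 (deriv (G ∘ c) s₀)
    rw [← h.chain hc, h.dir_line _ him0] at h1
    have h2 := hc.dpos
    have h3 := h.det (G (c s₀))
    rw [h.dir_line _ him0] at h3
    simp only [det2, Complex.one_re, Complex.one_im, one_mul, zero_mul, sub_zero] at h1 h3
    rw [h1] at h2
    exact pos_of_mul_pos_right h2 h3.le
  · intro θ hθ
    have h1 := hc.strip θ hθ
    refine ⟨h.posG _ h1.1, ?_⟩
    have h2 := h.negG (c θ + (-(2 * π) : ℝ) * I) (by simp; exact h1.2)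
    have h3 := h.perG (c θ + (-(2 * π) : ℝ) * I)
    have h4 : c θ + ((-(2 * π) : ℝ) : ℂ) * I + 2 * π * I = c θ := by push_cast; ring
    rw [h4] at h3
    simp only [Function.comp]
    rw [h3]
    simpa using h2

end

/-- Simultaneous straightening of several curves. -/
theorem straighten {ι : Type*} [Finite ι] (c : ι → ℝ → ℂ) (s₀ : ι → ℝ) (Θ : ι → ℝ × ℝ → ℝ)
    (h : ∀ i, Adm (c i) (s₀ i)) (hΘ : ∀ i, Lift (c i) (Θ i))
    (hcon : ∀ i j a b, c i a = c j b → Θ i (a, 0) = Θ j (b, 0)) :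
    ∃ Φ G, Dif Φ G ∧ ∀ i θ, 0 < (deriv (G ∘ c i) θ).im := by
  obtain ⟨ω, R, hF, hω⟩ := exists_field c s₀ Θ h hΘ hcon
  obtain ⟨Φ, G, hS⟩ := hF.exists_str
  refine ⟨Φ, G, hS.dif, fun i θ => ?_⟩
  have h1 := det2_map (fderiv ℝ Φ (G (c i θ))) 1 (deriv (G ∘ c i) θ)
  rw [← hS.dif.chain (h i), hS.dir, hS.ΦG, det2_exp] at h1
  have h2 : 0 < (deriv (c i) θ * Complex.exp (-(ω (c i θ) * I))).im := by
    rw [(hΘ i).deriv_eq θ, mul_assoc, ← Complex.exp_add, Complex.im_ofReal_mul]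
    apply mul_pos (norm_pos_iff.2 ((h i).d θ))
    have h3 : (Θ i (θ, 0) : ℂ) * I + -(ω (c i θ) * I) = ((Θ i (θ, 0) - ω (c i θ) : ℝ) : ℂ) * I := by
      push_cast; ring
    rw [h3, Complex.exp_ofReal_mul_I_im]
    exact Real.sin_pos_of_mem_Ioo (hω i θ)
  rw [h1] at h2
  have h3 := pos_of_mul_pos_right h2 (by
    have := hS.det (G (c i θ))
    rw [hS.dir, hS.ΦG] at this
    exact this.le)
  simpa [det2] using h3

theorem surj_of_quasi {Y : ℝ → ℝ} (hY : Continuous Y) (hp : ∀ θ, Y (θ + 2 * π) = Y θ + 2 * π) :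
    Function.Surjective Y := by
  intro y
  have hp' : ∀ (k : ℤ) θ, Y (θ + 2 * π * k) = Y θ + 2 * π * k := by
    intro k θ
    have : Function.Periodic (fun θ : ℝ => Y θ - θ) (2 * π) := by
      intro θ
      simp only
      rw [hp]
      ring
    have := this.int_mul k θ
    rw [mul_comm (k:ℝ)] at this
    linarith
  obtain ⟨k, hk⟩ := exists_shift (Y 0) y
  have h1 := hp 0
  rw [zero_add] at h1
  obtain ⟨θ, -, hθ⟩ := intermediate_value_Icc (a := 0) (b := 2 * π) (by positivity)
    hY.continuousOn (show y + 2 * π * k ∈ Icc (Y 0) (Y (2 * π)) from ⟨hk.1, by rw [h1]; exact hk.2.le⟩)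
  refine ⟨θ + 2 * π * ((-k : ℤ) : ℝ), ?_⟩
  rw [hp', hθ]
  push_cast
  ring

/-- Curves with increasing height are graphs. -/
theorem Adm.graph {c : ℝ → ℂ} {s₀ : ℝ} (h : Adm c s₀) (hd : ∀ θ, 0 < (deriv c θ).im) :
    ∃ f : ℝ → ℝ, ContDiff ℝ (⊤ : ℕ∞) f ∧ (∀ y, f (y + 2 * π) = f y) ∧
      ∀ θ, (c θ).re = f ((c θ).im) := by
  set Y : ℝ → ℝ := fun θ => (c θ).im with hY
  have hYd : ∀ θ, HasDerivAt Y (deriv c θ).im θ := fun θ =>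
    Complex.imCLM.hasFDerivAt.comp_hasDerivAt θ (h.hasDeriv θ)
  have hYs : ContDiff ℝ (⊤ : ℕ∞) Y := Complex.imCLM.contDiff.comp h.smooth
  have hmono : StrictMono Y := strictMono_of_deriv_pos fun θ => by
    rw [(hYd θ).deriv]; exact hd θ
  have hper : ∀ θ, Y (θ + 2 * π) = Y θ + 2 * π := by
    intro θ
    simp [hY, h.per]
  let e : ℝ ≃ₜ ℝ := (hmono.orderIsoOfSurjective Y (surj_of_quasi hYs.continuous hper)).toHomeomorph
  have he : ∀ θ, e θ = Y θ := fun θ => rfl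
  have hes : ContDiff ℝ (⊤ : ℕ∞) e.symm :=
    e.contDiff_symm_deriv (f' := fun θ => (deriv c θ).im) (fun θ => (hd θ).ne') hYd hYs
  refine ⟨fun y => (c (e.symm y)).re, Complex.reCLM.contDiff.comp (h.smooth.comp hes), fun y => ?_,
    fun θ => ?_⟩
  · have : e.symm (y + 2 * π) = e.symm y + 2 * π := by
      apply e.injective
      rw [e.apply_symm_apply, he, hper, ← he, e.apply_symm_apply]
    simp only
    rw [this, h.per]
    simp
  · have : e.symm ((c θ).im) = θ := e.symm_apply_apply θ
    simp only
    rw [this]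

/-- The two sides of a curve. -/
structure Ord (c : ℝ → ℂ) (O₁ O₂ : Set ℂ) : Prop where
  o₁ : IsOpen O₁
  o₂ : IsOpen O₂
  disj : Disjoint O₁ O₂
  union : O₁ ∪ O₂ = (range c)ᶜ
  far : ∃ R : ℝ, ∀ x : ℝ, (x < -R → (x : ℂ) ∈ O₁) ∧ (R < x → (x : ℂ) ∈ O₂)

theorem Dif.ord {Φ G : ℂ → ℂ} (h : Dif Φ G) {c : ℝ → ℂ} {O₁ O₂ : Set ℂ} (k : Ord c O₁ O₂) :
    Ord (G ∘ c) (Φ ⁻¹' O₁) (Φ ⁻¹' O₂) := by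
  refine ⟨k.o₁.preimage h.smooth.continuous, k.o₂.preimage h.smooth.continuous,
    k.disj.preimage Φ, ?_, ?_⟩
  · rw [← preimage_union, k.union]
    ext z
    simp only [mem_preimage, mem_compl_iff, mem_range, Function.comp, not_exists]
    constructor
    · intro h1 θ h2
      apply h1 θ
      rw [← h2, h.ΦG]
    · intro h1 θ h2
      apply h1 θ
      rw [h2, h.GΦ]
  · obtain ⟨R, hR⟩ := k.far
    obtain ⟨x₀, hx⟩ := h.line
    refine ⟨R + |x₀|, fun x => ⟨fun h1 => ?_, fun h1 => ?_⟩⟩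
    · rw [mem_preimage, hx _ (by simp), ← Complex.ofReal_add]
      exact (hR _).1 (by linarith [le_abs_self x₀])
    · rw [mem_preimage, hx _ (by simp), ← Complex.ofReal_add]
      exact (hR _).2 (by linarith [neg_abs_le x₀])

theorem Ord.graph {c : ℝ → ℂ} {s₀ : ℝ} {O₁ O₂ : Set ℂ} (h : Adm c s₀) (k : Ord c O₁ O₂) {f : ℝ → ℝ}
    (hf : Continuous f) (hg : ∀ θ, (c θ).re = f ((c θ).im)) (z : ℂ) :
    (z ∈ O₁ ↔ z.re < f z.im) ∧ (z ∈ O₂ ↔ f z.im < z.re) := by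
  have hsh : Continuous (shear f) := by unfold shear; fun_prop
  have hr : range c ⊆ {z | z.re = f z.im} := by
    rintro _ ⟨θ, rfl⟩
    exact hg θ
  obtain ⟨R, hR⟩ := k.far
  have hL : {z : ℂ | z.re < f z.im} ⊆ O₁ := by
    have hpre : IsPreconnected {z : ℂ | z.re < f z.im} := by
      have h1 := ((convex_halfSpace_re_lt 0).isPreconnected).image (shear f) hsh.continuousOn
      convert! h1 using 1
      ext z
      simp only [mem_ofPred_eq, mem_image]
      constructor
      · intro hz
        refine ⟨z - f z.im, by simpa using hz, ?_⟩
        simp [shear]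
      · rintro ⟨w, hw, rfl⟩
        simp [shear]
        linarith
    refine hpre.subset_left_of_subset_union k.o₁ k.o₂ k.disj ?_ ?_
    · rw [k.union]
      intro z hz hz2
      exact absurd (hr hz2) (ne_of_lt hz)
    · set x := min (-R) (f 0) - 1 with hx
      refine ⟨(x : ℂ), ?_, (hR x).1 ?_⟩
      · simp
        linarith [min_le_right (-R) (f 0)]
      · linarith [min_le_left (-R) (f 0)]
  have hU : {z : ℂ | f z.im < z.re} ⊆ O₂ := by
    have hpre : IsPreconnected {z : ℂ | f z.im < z.re} := by
      have h1 := ((convex_halfSpace_re_gt 0).isPreconnected).image (shear f) hsh.continuousOn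
      convert! h1 using 1
      ext z
      simp only [mem_ofPred_eq, mem_image]
      constructor
      · intro hz
        refine ⟨z - f z.im, by simpa using hz, ?_⟩
        simp [shear]
      · rintro ⟨w, hw, rfl⟩
        simp [shear]
        exact hw
    refine hpre.subset_right_of_subset_union k.o₁ k.o₂ k.disj ?_ ?_
    · rw [k.union]
      intro z hz hz2
      exact absurd (hr hz2).symm (ne_of_lt hz)
    · set x := max R (f 0) + 1 with hx
      refine ⟨(x : ℂ), ?_, (hR x).2 ?_⟩
      · simp
        linarith [le_max_right R (f 0)]
      · linarith [le_max_left R (f 0)]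
  have hE : ∀ z : ℂ, z.re = f z.im → z ∈ range c := by
    intro z hz
    obtain ⟨θ, hθ⟩ := surj_of_quasi (Y := fun θ => (c θ).im)
      (Complex.continuous_im.comp h.smooth.continuous) (fun θ => by simp [h.per]) z.im
    have hθ' : (c θ).im = z.im := hθ
    exact ⟨θ, Complex.ext (by rw [hg, hθ', hz]) hθ'⟩
  have hd1 : ∀ z, z ∈ O₁ → z ∉ O₂ := fun z h1 h2 => k.disj.le_bot ⟨h1, h2⟩
  have hd2 : ∀ z, z ∈ O₁ ∨ z ∈ O₂ → z ∉ range c := fun z h1 => by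
    have : z ∈ O₁ ∪ O₂ := h1
    rwa [k.union] at this
  refine ⟨⟨fun h1 => ?_, fun h1 => hL h1⟩, ⟨fun h1 => ?_, fun h1 => hU h1⟩⟩
  · rcases lt_trichotomy z.re (f z.im) with h2 | h2 | h2
    · exact h2
    · exact absurd (hE z h2) (hd2 z (Or.inl h1))
    · exact absurd (hU h2) (hd1 z h1)
  · rcases lt_trichotomy z.re (f z.im) with h2 | h2 | h2
    · exact absurd h1 (hd1 z (hL h2))
    · exact absurd (hE z h2) (hd2 z (Or.inr h1))
    · exact h2

end Annulus


namespace Annulus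

theorem hasDerivAt_mk {a b : ℝ → ℝ} {a' b' t : ℝ} (ha : HasDerivAt a a' t) (hb : HasDerivAt b b' t) :
    HasDerivAt (fun s => (a s : ℂ) + (b s : ℂ) * I) ((a' : ℂ) + (b' : ℂ) * I) t :=
  ha.ofReal_comp.add (hb.ofReal_comp.mul_const I)

/-- The interpolation once both curves are graphs. -/
theorem core_graph {Φ G : ℂ → ℂ} (hD : Dif Φ G) {c d : ℝ → ℂ} {s t₀ : ℝ} (hc : Adm c s)
    (hd : Adm d t₀) {O₁ O₂ P₁ P₂ : Set ℂ} (hO : Ord c O₁ O₂) (hP : Ord d P₁ P₂)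
    (hdis : ∀ θ, d θ ∉ O₁)
    (hc' : ∀ θ, 0 < (deriv (G ∘ c) θ).im) (hd' : ∀ θ, 0 < (deriv (G ∘ d) θ).im) :
    ∃ H : ℝ × ℝ → ℂ, ContDiff ℝ (⊤ : ℕ∞) H ∧
      (∀ θ t, H (θ + 2 * π, t) = H (θ, t) + 2 * π * I) ∧
      (∀ θ, H (θ, 0) = c θ) ∧ (∀ θ, H (θ, 1) = d θ) ∧
      (∀ t ∈ Icc (0:ℝ) 1, Function.Injective fun θ => H (θ, t)) ∧
      (∀ θ, ∀ t ∈ Icc (0:ℝ) 1, deriv (fun x => H (x, t)) θ ≠ 0 ∧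
        det2 (deriv (fun x => H (x, t)) θ) (deriv (fun r => H (θ, r)) t) ≤ 0) ∧
      H '' (univ ×ˢ Icc (0:ℝ) 1) = {z | z ∉ O₁ ∧ z ∉ P₂} := by
  have hcA := hD.adm hc
  have hdA := hD.adm hd
  obtain ⟨f, hf, hfp, hfg⟩ := hcA.graph hc'
  obtain ⟨g, hg, hgp, hgg⟩ := hdA.graph hd'
  have hOg := Ord.graph hcA (hD.ord hO) hf.continuous hfg
  have hPg := Ord.graph hdA (hD.ord hP) hg.continuous hgg
  set Y : ℝ → ℝ := fun θ => ((G ∘ c) θ).im with hY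
  set Z : ℝ → ℝ := fun θ => ((G ∘ d) θ).im with hZ
  have hYd : ∀ θ, HasDerivAt Y (deriv (G ∘ c) θ).im θ := fun θ =>
    Complex.imCLM.hasFDerivAt.comp_hasDerivAt θ (hcA.hasDeriv θ)
  have hZd : ∀ θ, HasDerivAt Z (deriv (G ∘ d) θ).im θ := fun θ =>
    Complex.imCLM.hasFDerivAt.comp_hasDerivAt θ (hdA.hasDeriv θ)
  have hYs : ContDiff ℝ (⊤ : ℕ∞) Y := Complex.imCLM.contDiff.comp hcA.smooth
  have hZs : ContDiff ℝ (⊤ : ℕ∞) Z := Complex.imCLM.contDiff.comp hdA.smooth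
  have hYp : ∀ θ, Y (θ + 2 * π) = Y θ + 2 * π := fun θ => by simp only [hY, hcA.per]; simp
  have hZp : ∀ θ, Z (θ + 2 * π) = Z θ + 2 * π := fun θ => by simp only [hZ, hdA.per]; simp
  have hfg' : ∀ y, f y ≤ g y := by
    intro y
    obtain ⟨θ, hθ⟩ := surj_of_quasi hZs.continuous hZp y
    have h1 := hdis θ
    have h2 := (hOg (G (d θ))).1
    rw [mem_preimage, hD.ΦG] at h2
    rw [h2, not_lt] at h1
    have h3 := hgg θ
    simp only [hZ, Function.comp] at h3 hθ
    rw [h3, hθ] at h1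
    exact h1
  -- the interpolation
  set α : ℝ × ℝ → ℝ := fun p => (1 - p.2) * Y p.1 + p.2 * Z p.1 with hα
  have hαs : ContDiff ℝ (⊤ : ℕ∞) α := by
    have a := hYs.comp (contDiff_fst (𝕜 := ℝ) (E := ℝ) (F := ℝ))
    have b := hZs.comp (contDiff_fst (𝕜 := ℝ) (E := ℝ) (F := ℝ))
    exact ((contDiff_const.sub contDiff_snd).mul a).add (contDiff_snd.mul b)
  set X : ℝ × ℝ → ℝ := fun p => (1 - p.2) * f (α p) + p.2 * g (α p) with hX
  have hXs : ContDiff ℝ (⊤ : ℕ∞) X := by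
    exact ((contDiff_const.sub contDiff_snd).mul (hf.comp hαs)).add
      (contDiff_snd.mul (hg.comp hαs))
  set K : ℝ × ℝ → ℂ := fun p => (X p : ℂ) + (α p : ℂ) * I with hK
  have hKs : ContDiff ℝ (⊤ : ℕ∞) K :=
    (Complex.ofRealCLM.contDiff.comp hXs).add
      ((Complex.ofRealCLM.contDiff.comp hαs).mul contDiff_const)
  have hαp : ∀ θ t, α (θ + 2 * π, t) = α (θ, t) + 2 * π := by
    intro θ t
    simp only [hα, hYp, hZp]
    ring
  have hKp : ∀ θ t, K (θ + 2 * π, t) = K (θ, t) + 2 * π * I := by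
    intro θ t
    simp only [hK, hX]
    rw [hαp, hfp, hgp]
    push_cast
    ring
  have hα1 : ∀ θ t, HasDerivAt (fun x => α (x, t))
      ((1 - t) * (deriv (G ∘ c) θ).im + t * (deriv (G ∘ d) θ).im) θ := fun θ t =>
    ((hYd θ).const_mul (1 - t)).add ((hZd θ).const_mul t)
  have hαone_pos : ∀ θ, ∀ t ∈ Icc (0:ℝ) 1,
      0 < (1 - t) * (deriv (G ∘ c) θ).im + t * (deriv (G ∘ d) θ).im := by
    intro θ t ht
    have h1 := hc' θ
    have h2 := hd' θ
    rcases ht.1.eq_or_lt with h3 | h3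
    · rw [← h3]; simpa using h1
    · have := mul_pos h3 h2
      have := mul_nonneg (sub_nonneg.2 ht.2) h1.le
      linarith
  have hα2 : ∀ θ t, HasDerivAt (fun r => α (θ, r)) (Z θ - Y θ) t := by
    intro θ t
    have h1 := (((hasDerivAt_id t).const_sub 1).mul_const (Y θ)).add
      ((hasDerivAt_id t).mul_const (Z θ))
    convert! h1 using 1
    simp; ring
  have hfd : ∀ y, HasDerivAt f (deriv f y) y := fun y => (hf.differentiable (by simp) y).hasDerivAt
  have hgd : ∀ y, HasDerivAt g (deriv g y) y := fun y => (hg.differentiable (by simp) y).hasDerivAt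
  set σ : ℝ × ℝ → ℝ := fun p => (1 - p.2) * deriv f (α p) + p.2 * deriv g (α p) with hσ
  have hX1 : ∀ θ t, HasDerivAt (fun x => X (x, t))
      (σ (θ, t) * ((1 - t) * (deriv (G ∘ c) θ).im + t * (deriv (G ∘ d) θ).im)) θ := by
    intro θ t
    have h1 := ((hfd (α (θ, t))).comp θ (hα1 θ t)).const_mul (1 - t)
    have h2 := ((hgd (α (θ, t))).comp θ (hα1 θ t)).const_mul t
    convert! h1.add h2 using 1
    simp only [hσ]
    ring
  have hX2 : ∀ θ t, HasDerivAt (fun r => X (θ, r))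
      (g (α (θ, t)) - f (α (θ, t)) + σ (θ, t) * (Z θ - Y θ)) t := by
    intro θ t
    have h1 := ((hasDerivAt_id t).const_sub 1).mul ((hfd (α (θ, t))).comp t (hα2 θ t))
    have h2 := (hasDerivAt_id t).mul ((hgd (α (θ, t))).comp t (hα2 θ t))
    convert! h1.add h2 using 1
    simp [hσ, Function.comp]
    ring
  have hK1 := fun θ t => hasDerivAt_mk (hX1 θ t) (hα1 θ t)
  have hK2 := fun θ t => hasDerivAt_mk (hX2 θ t) (hα2 θ t)
  have hH1 : ∀ θ t, HasDerivAt (fun x => Φ (K (x, t))) _ θ := fun θ t =>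
    (hD.fd (K (θ, t))).comp_hasDerivAt θ (hK1 θ t)
  have hH2 : ∀ θ t, HasDerivAt (fun r => Φ (K (θ, r))) _ t := fun θ t =>
    (hD.fd (K (θ, t))).comp_hasDerivAt t (hK2 θ t)
  have hinjΦ : Function.Injective Φ := Function.LeftInverse.injective hD.GΦ
  refine ⟨fun p => Φ (K p), hD.smooth.comp hKs, fun θ t => ?_, fun θ => ?_, fun θ => ?_,
    fun t ht => ?_, fun θ t ht => ⟨?_, ?_⟩, ?_⟩
  · simp only
    rw [hKp, hD.per]
  · rw [← hD.ΦG (c θ)]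
    refine congrArg Φ ?_
    have h1 := hfg θ
    apply Complex.ext
    · simp [hK, hX, hα, hY]
      exact h1.symm
    · simp [hK, hα, hY]
  · rw [← hD.ΦG (d θ)]
    refine congrArg Φ ?_
    have h1 := hgg θ
    apply Complex.ext
    · simp [hK, hX, hα, hZ]
      exact h1.symm
    · simp [hK, hα, hZ]
  · have hm : StrictMono fun x => α (x, t) := strictMono_of_deriv_pos fun θ => by
      rw [(hα1 θ t).deriv]; exact hαone_pos θ t ht
    intro x y hxy
    have h1 := congrArg Complex.im (hinjΦ hxy)
    simp [hK] at h1
    exact hm.injective h1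
  · rw [(hH1 θ t).deriv]
    intro h0
    have h1 := det2_map (fderiv ℝ Φ (K (θ, t))) 1 (((σ (θ, t) * ((1 - t) * (deriv (G ∘ c) θ).im + t * (deriv (G ∘ d) θ).im) : ℝ) : ℂ) +
      (((1 - t) * (deriv (G ∘ c) θ).im + t * (deriv (G ∘ d) θ).im : ℝ) : ℂ) * I)
    rw [h0] at h1
    have h2 := mul_pos (hD.det (K (θ, t))) (hαone_pos θ t ht)
    simp only [det2, Complex.add_re, Complex.add_im, Complex.ofReal_re, Complex.ofReal_im,
      Complex.mul_re, Complex.mul_im, Complex.I_re, Complex.I_im, Complex.one_re, Complex.one_im,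
      Complex.zero_re, Complex.zero_im] at h1 h2
    linarith
  · rw [(hH1 θ t).deriv, (hH2 θ t).deriv, det2_map]
    apply mul_nonpos_of_nonneg_of_nonpos (hD.det (K (θ, t))).le
    have h2 := mul_nonneg (hαone_pos θ t ht).le (sub_nonneg.2 (hfg' (α (θ, t))))
    simp only [det2, Complex.add_re, Complex.add_im, Complex.ofReal_re, Complex.ofReal_im,
      Complex.mul_re, Complex.mul_im, Complex.I_re, Complex.I_im]
    linarith
  · ext z
    simp only [mem_image, mem_ofPred_eq, mem_prod, mem_univ, true_and, Prod.exists]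
    have hz1 := (hOg (G z)).1
    have hz2 := (hPg (G z)).2
    rw [mem_preimage, hD.ΦG] at hz1 hz2
    rw [hz1, hz2, not_lt, not_lt]
    constructor
    · rintro ⟨θ, t, ht, rfl⟩
      rw [hD.GΦ]
      have h1 := hfg' (α (θ, t))
      simp [hK]
      simp only [hX]
      constructor
      · nlinarith [ht.1, ht.2]
      · nlinarith [ht.1, ht.2]
    · rintro ⟨h1, h2⟩
      obtain ⟨t, ht, htX⟩ : ∃ t ∈ Icc (0:ℝ) 1,
          (1 - t) * f (G z).im + t * g (G z).im = (G z).re := by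
        rcases (hfg' (G z).im).eq_or_lt with h3 | h3
        · refine ⟨0, ⟨le_rfl, zero_le_one⟩, ?_⟩
          rw [← h3] at h2
          simp
          linarith
        · have h4 : 0 < g (G z).im - f (G z).im := sub_pos.2 h3
          refine ⟨((G z).re - f (G z).im) / (g (G z).im - f (G z).im), ⟨?_, ?_⟩, ?_⟩
          · exact div_nonneg (by linarith) h4.le
          · rw [div_le_one h4]; linarith
          · field_simp
            ring
      obtain ⟨θ, hθ⟩ := surj_of_quasi (Y := fun θ => α (θ, t))
        (hαs.continuous.comp (by fun_prop : Continuous fun θ : ℝ => (θ, t)))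
        (fun θ => hαp θ t) (G z).im
      have hθ' : α (θ, t) = (G z).im := hθ
      refine ⟨θ, t, ht, ?_⟩
      rw [← hD.ΦG z]
      refine congrArg Φ ?_
      apply Complex.ext
      · simp [hK]
        simp only [hX, hθ']
        exact htX
      · simp [hK]
        exact hθ'

/-- The theorem on the cylinder. -/
theorem core {c d : ℝ → ℂ} {s t₀ : ℝ} (hc : Adm c s)
    (hd : Adm d t₀) {O₁ O₂ P₁ P₂ : Set ℂ} (hO : Ord c O₁ O₂) (hP : Ord d P₁ P₂)
    (hdis : ∀ θ, d θ ∉ O₁)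
    (hcon : ∀ a b, c a = d b → ∃ r : ℝ, 0 < r ∧ deriv d b = r * deriv c a) :
    ∃ H : ℝ × ℝ → ℂ, ContDiff ℝ (⊤ : ℕ∞) H ∧
      (∀ θ t, H (θ + 2 * π, t) = H (θ, t) + 2 * π * I) ∧
      (∀ θ, H (θ, 0) = c θ) ∧ (∀ θ, H (θ, 1) = d θ) ∧
      (∀ t ∈ Icc (0:ℝ) 1, Function.Injective fun θ => H (θ, t)) ∧
      (∀ θ, ∀ t ∈ Icc (0:ℝ) 1, deriv (fun x => H (x, t)) θ ≠ 0 ∧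
        det2 (deriv (fun x => H (x, t)) θ) (deriv (fun r => H (θ, r)) t) ≤ 0) ∧
      H '' (univ ×ˢ Icc (0:ℝ) 1) = {z | z ∉ O₁ ∧ z ∉ P₂} := by
  obtain ⟨Θc, hΘc⟩ := hc.exists_lift
  obtain ⟨Φ₁, G₁, hD₁, hm₁⟩ := straighten (ι := Unit) (fun _ => c) (fun _ => s) (fun _ => Θc)
    (fun _ => hc) (fun _ => hΘc) (fun _ _ a b h => by rw [hc.inj h])
  have hm₁ := hm₁ ()
  obtain ⟨f, hf, hfp, hfg⟩ := (hD₁.adm hc).graph hm₁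
  have hD := hD₁.comp (shear_dif hf hfp)
  set Ψ := Φ₁ ∘ shear f with hΨ
  set K := shear (fun y => -f y) ∘ G₁ with hK
  have hcA := hD.adm hc
  have hdA := hD.adm hd
  have hre : ∀ θ, ((K ∘ c) θ).re = 0 := by
    intro θ
    have := hfg θ
    simp [hK, shear] at this ⊢
    linarith
  have him : ∀ θ, ((K ∘ c) θ).im = ((G₁ ∘ c) θ).im := by
    intro θ
    simp [hK, shear]
  have hre' : ∀ θ, (deriv (K ∘ c) θ).re = 0 := by
    intro θ
    have h1 : HasDerivAt (fun θ => ((K ∘ c) θ).re) (deriv (K ∘ c) θ).re θ :=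
      Complex.reCLM.hasFDerivAt.comp_hasDerivAt θ (hcA.hasDeriv θ)
    simp_rw [hre] at h1
    exact h1.unique (hasDerivAt_const θ 0)
  have him' : ∀ θ, 0 < (deriv (K ∘ c) θ).im := by
    intro θ
    have h1 : HasDerivAt (fun θ => ((K ∘ c) θ).im) (deriv (K ∘ c) θ).im θ :=
      Complex.imCLM.hasFDerivAt.comp_hasDerivAt θ (hcA.hasDeriv θ)
    have h2 : HasDerivAt (fun θ => ((G₁ ∘ c) θ).im) (deriv (G₁ ∘ c) θ).im θ :=
      Complex.imCLM.hasFDerivAt.comp_hasDerivAt θ ((hD₁.adm hc).hasDeriv θ)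
    simp_rw [him] at h1
    rw [h1.unique h2]
    exact hm₁ θ
  have hdre : ∀ θ, 0 ≤ ((K ∘ d) θ).re := by
    intro θ
    have h1 := (Ord.graph hcA (hD.ord hO) (f := fun _ => 0) continuous_const hre ((K ∘ d) θ)).1
    have h2 : (K ∘ d) θ ∉ Ψ ⁻¹' O₁ := by
      have : Ψ ((K ∘ d) θ) = d θ := hD.ΦG _
      rw [mem_preimage, this]
      exact hdis θ
    rw [h1, not_lt] at h2
    exact h2
  obtain ⟨Θ₁, hΘ₁⟩ := hcA.exists_lift
  obtain ⟨Θ₂, hΘ₂⟩ := hdA.exists_lift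
  have hΘ₁c : ∀ a, Θ₁ (a, 0) = π / 2 := fun a =>
    hΘ₁.contact hcA (fun θ => (hre θ).ge) a (hre a) (hre' a) (him' a)
  have hcontact : ∀ a b, (K ∘ c) a = (K ∘ d) b → Θ₂ (b, 0) = π / 2 := by
    intro a b hab
    have h0 : c a = d b := by
      have := congrArg Ψ hab
      simp only [Function.comp_apply] at this
      exact (hD.ΦG (c a)).symm.trans (this.trans (hD.ΦG (d b)))
    obtain ⟨r, hr, hrd⟩ := hcon a b h0
    have h1 : deriv (K ∘ d) b = r * deriv (K ∘ c) a := by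
      rw [hD.chainG hd, hD.chainG hc, hrd, h0, ← Complex.real_smul, ← Complex.real_smul, map_smul]
    refine hΘ₂.contact hdA hdre b ?_ ?_ ?_
    · rw [← hab]; exact hre a
    · rw [h1, Complex.re_ofReal_mul, hre', mul_zero]
    · rw [h1, Complex.im_ofReal_mul]
      exact mul_pos hr (him' a)
  obtain ⟨Φ₂, G₂, hD₂, hm₂⟩ := straighten (ι := Bool) (fun i => bif i then K ∘ c else K ∘ d)
    (fun i => bif i then s else t₀) (fun i => bif i then Θ₁ else Θ₂)
    (by rintro (_ | _); exacts [hdA, hcA]) (by rintro (_ | _); exacts [hΘ₂, hΘ₁]) (by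
      rintro (_ | _) (_ | _) a b hab
      · have := hdA.inj hab
        rw [this]
      · have h1 := hcontact b a hab.symm
        exact h1.trans (hΘ₁c b).symm
      · have h1 := hcontact a b hab
        exact (hΘ₁c a).trans h1.symm
      · have := hcA.inj hab
        rw [this])
  exact core_graph (hD.comp hD₂) hc hd hO hP hdis (hm₂ true) (hm₂ false)

end Annulus


namespace Annulus

/-- Cauchy type integrals depend continuously on the point. -/
theorem cauchy_continuousAt {g g' : ℝ → ℂ} (hg : Continuous g) (hg' : Continuous g') {p q : ℝ}
    (hpq : p ≤ q) {a₀ : ℂ} (ha : ∀ x ∈ Icc p q, g x ≠ a₀) :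
    ContinuousAt (fun a => ∫ x in p..q, g' x / (g x - a)) a₀ := by
  obtain ⟨C, hC⟩ := (isCompact_Icc (a := p) (b := q)).exists_bound_of_continuousOn hg'.continuousOn
  obtain ⟨r, hr, hrb⟩ : ∃ r > 0, ∀ x ∈ Icc p q, r ≤ ‖g x - a₀‖ := by
    have hcl : IsClosed (g '' Icc p q) := (isCompact_Icc.image hg).isClosed
    have hn : a₀ ∉ g '' Icc p q := by
      rintro ⟨x, hx, he⟩
      exact ha x hx he
    obtain ⟨r, hr, hrb⟩ := Metric.isOpen_iff.1 hcl.isOpen_compl a₀ hn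
    refine ⟨r, hr, fun x hx => ?_⟩
    by_contra hcon
    push Not at hcon
    exact hrb (show g x ∈ Metric.ball a₀ r by rwa [Metric.mem_ball, dist_eq_norm]) ⟨x, hx, rfl⟩
  have hfar : ∀ a ∈ Metric.ball a₀ (r / 2), ∀ x ∈ Icc p q, r / 2 ≤ ‖g x - a‖ := by
    intro a hb x hx
    rw [Metric.mem_ball, dist_eq_norm] at hb
    have h1 := hrb x hx
    have h2 : g x - a₀ = (g x - a) + (a - a₀) := by ring
    rw [h2] at h1
    linarith [norm_add_le (g x - a) (a - a₀)]
  refine intervalIntegral.continuousAt_of_dominated_interval (bound := fun _ => C / (r / 2))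
    ?_ ?_ ?_ ?_
  · filter_upwards with a
    exact (hg'.measurable.div (hg.measurable.sub_const a)).aestronglyMeasurable
  · filter_upwards [Metric.ball_mem_nhds a₀ (half_pos hr)] with a hb
    filter_upwards with x hx
    rw [uIoc_of_le hpq] at hx
    have hx' : x ∈ Icc p q := ⟨hx.1.le, hx.2⟩
    rw [norm_div]
    exact div_le_div₀ ((norm_nonneg _).trans (hC x hx')) (hC x hx') (half_pos hr)
      (hfar a hb x hx')
  · simp
  · filter_upwards with x hx
    rw [uIoc_of_le hpq] at hx
    have hx' : x ∈ Icc p q := ⟨hx.1.le, hx.2⟩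
    have : g x - a₀ ≠ 0 := sub_ne_zero.2 (ha x hx')
    fun_prop (disch := assumption)

/-- Exponentiating the logarithmic derivative. -/
theorem exp_int {g g' : ℝ → ℂ} (hg : ∀ x, HasDerivAt g (g' x) x) (hg' : Continuous g')
    (h0 : ∀ x, g x ≠ 0) (a x : ℝ) :
    Complex.exp (∫ y in a..x, g' y / g y) * g a = g x := by
  have hgc : Continuous g := continuous_iff_continuousAt.2 fun x => (hg x).continuousAt
  have hc : Continuous fun y => g' y / g y := hg'.div hgc h0
  have hd : ∀ x, HasDerivAt (fun x => Complex.exp (-∫ y in a..x, g' y / g y) * g x) 0 x := by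
    intro x
    have h1 : HasDerivAt (fun x => ∫ y in a..x, g' y / g y) (g' x / g x) x :=
      intervalIntegral.integral_hasDerivAt_right (hc.intervalIntegrable _ _)
        (hc.stronglyMeasurableAtFilter _ _) hc.continuousAt
    have h2 := (h1.neg.cexp).mul (hg x)
    convert! h2 using 1
    field_simp [h0 x]
    ring
  have h1 := is_const_of_deriv_eq_zero (fun x => (hd x).differentiableAt) (fun x => (hd x).deriv) x a
  simp only [intervalIntegral.integral_same, neg_zero, Complex.exp_zero, one_mul] at h1
  rw [← h1, ← mul_assoc, ← Complex.exp_add]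
  simp

theorem arg_ge {z : ℂ} (h : |z.re| ≤ z.im) (h0 : 0 < z.im) : π / 4 ≤ Complex.arg z := by
  have hpi := Real.pi_pos
  by_contra hcon
  push Not at hcon
  have h1 : 0 ≤ Complex.arg z := Complex.arg_nonneg_iff.2 h0.le
  have h2 := Complex.norm_mul_cos_arg z
  have h3 := Complex.norm_mul_sin_arg z
  have h4 : Real.sin (Complex.arg z) < Real.sin (π / 4) :=
    Real.sin_lt_sin_of_lt_of_le_pi_div_two (by linarith) (by linarith) hcon
  have h5 : Real.cos (π / 4) < Real.cos (Complex.arg z) :=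
    Real.cos_lt_cos_of_nonneg_of_le_pi_div_two h1 (by linarith) hcon
  rw [Real.sin_pi_div_four] at h4
  rw [Real.cos_pi_div_four] at h5
  have hz : 0 < ‖z‖ := norm_pos_iff.2 (by rintro rfl; simp at h0)
  have h6 : ‖z‖ * Real.sin (Complex.arg z) < ‖z‖ * Real.cos (Complex.arg z) :=
    mul_lt_mul_of_pos_left (h4.trans h5) hz
  rw [h2, h3] at h6
  linarith [le_abs_self z.re]

theorem arg_le {z : ℂ} (h : |z.re| ≤ -z.im) (h0 : z.im < 0) : Complex.arg z ≤ -(π / 4) := by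
  have h1 := arg_ge (z := (starRingEnd ℂ) z) (by simpa using h) (by simpa using h0)
  rw [Complex.arg_conj, if_neg] at h1
  · linarith
  · intro h2
    rw [Complex.arg_eq_pi_iff] at h2
    linarith [h2.2]

/-- Local contribution to the jump of the winding number. -/
theorem local_jump {g g' : ℝ → ℂ} (hg : ∀ x, HasDerivAt g (g' x) x) (hg' : Continuous g')
    {T k : ℂ} (hT : T ≠ 0) {δ η ε : ℝ} (hδ : 0 < δ) (hη0 : 0 ≤ η) (hη4 : η ≤ 1 / 4)
    (hη : η * (|k.re| + k.im) < k.im) (hε : 0 < ε) (hεδ : ε * ‖k‖ ≤ δ / 4)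
    (happ : ∀ x ∈ Icc (-δ) δ, ‖(g x - g 0) / T - x‖ ≤ η * |x|) :
    (∀ x ∈ Icc (-δ) δ, g x ≠ g 0 + ε * (k * T)) ∧
      π / 2 ≤ (∫ x in (-δ)..δ, g' x / (g x - (g 0 + ε * (k * T)))).im := by
  set w : ℝ → ℂ := fun x => (g x - g 0) / T - ε * k with hw
  have hslit : ∀ x ∈ Icc (-δ) δ, I * w x ∈ Complex.slitPlane := by
    intro x hx
    rw [Complex.mem_slitPlane_iff]
    by_contra hcon
    push Not at hcon
    set e : ℂ := (g x - g 0) / T - x with he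
    have hwe : w x = x + e - ε * k := by simp only [hw, he]; ring
    have h1 := happ x hx
    rw [← he] at h1
    rw [hwe] at hcon
    simp at hcon
    obtain ⟨h2, h3⟩ := hcon
    have h4 := (Complex.abs_re_le_norm e).trans h1
    have h5 := (Complex.abs_im_le_norm e).trans h1
    have h6 : |x| ≤ ε * |k.re| + η * |x| := by
      have : x = ε * k.re - e.re := by linarith
      calc |x| = |ε * k.re - e.re| := by rw [← this]
        _ ≤ |ε * k.re| + |e.re| := abs_sub _ _
        _ ≤ ε * |k.re| + η * |x| := by
            rw [abs_mul, abs_of_pos hε]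
            linarith
    have h7 : ε * k.im ≤ η * |x| := by linarith [le_abs_self e.im]
    have h8 : ε * k.im * (1 - η) ≤ η * (ε * |k.re|) := by
      calc ε * k.im * (1 - η) ≤ η * |x| * (1 - η) :=
            mul_le_mul_of_nonneg_right h7 (by linarith)
        _ = η * (|x| - η * |x|) := by ring
        _ ≤ η * (ε * |k.re|) := mul_le_mul_of_nonneg_left (by linarith) hη0
    nlinarith
  have hid : ∀ x, g x - (g 0 + ε * (k * T)) = T * w x := by
    intro x
    simp only [hw]
    field_simp
    ring
  have hwne : ∀ x ∈ Icc (-δ) δ, w x ≠ 0 := by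
    intro x hx h0
    have := hslit x hx
    rw [h0, mul_zero] at this
    exact Complex.zero_notMem_slitPlane this
  refine ⟨fun x hx h0 => ?_, ?_⟩
  · have := hid x
    rw [h0, sub_self] at this
    exact mul_ne_zero hT (hwne x hx) this.symm
  have hderiv : ∀ x ∈ uIcc (-δ) δ, HasDerivAt (fun x => Complex.log (I * w x))
      (g' x / (g x - (g 0 + ε * (k * T)))) x := by
    intro x hx
    rw [uIcc_of_le (by linarith)] at hx
    have h1 : HasDerivAt (fun x => I * w x) (I * (g' x / T)) x :=
      ((((hg x).sub_const (g 0)).div_const T).sub_const (ε * k)).const_mul I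
    convert! h1.clog_real (hslit x hx) using 1
    rw [hid]
    have := hwne x hx
    field_simp
  have hgc : Continuous g := continuous_iff_continuousAt.2 fun x => (hg x).continuousAt
  have hinteg : IntervalIntegrable (fun x => g' x / (g x - (g 0 + ε * (k * T))))
      MeasureTheory.volume (-δ) δ := by
    apply ContinuousOn.intervalIntegrable
    rw [uIcc_of_le (by linarith)]
    refine hg'.continuousOn.div (by fun_prop) fun x hx => ?_
    rw [hid]
    exact mul_ne_zero hT (hwne x hx)
  rw [intervalIntegral.integral_eq_sub_of_hasDerivAt hderiv hinteg, Complex.sub_im, Complex.log_im,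
    Complex.log_im]
  have hbd : ∀ x ∈ Icc (-δ) δ, |x| = δ → |(w x).re - x| ≤ δ / 2 ∧ |(w x).im| ≤ δ / 2 := by
    intro x hx hxδ
    have h1 := happ x hx
    rw [hxδ] at h1
    have h2 : ‖w x - x‖ ≤ δ / 2 := by
      have h3 : w x - x = ((g x - g 0) / T - x) - ε * k := by simp only [hw]; ring
      rw [h3]
      refine (norm_sub_le _ _).trans ?_
      rw [norm_mul, Complex.norm_real, Real.norm_eq_abs, abs_of_pos hε]
      nlinarith
    constructor
    · have := (Complex.abs_re_le_norm (w x - x)).trans h2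
      simpa using this
    · have := (Complex.abs_im_le_norm (w x - x)).trans h2
      simpa using this
  have hA := hbd δ ⟨by linarith, le_rfl⟩ (abs_of_pos hδ)
  have hB := hbd (-δ) ⟨le_rfl, by linarith⟩ (by rw [abs_neg, abs_of_pos hδ])
  have hA1 := abs_le.1 hA.1
  have hB1 := abs_le.1 hB.1
  have h1 := arg_ge (z := I * w δ) (by simp; linarith [hA.2]) (by simp; linarith)
  have h2 := arg_le (z := I * w (-δ)) (by simp; linarith [hB.2]) (by simp; linarith)
  linarith

/-- Jordan curve data. -/
structure Jor (γ : ℝ → ℂ) (B U : Set ℂ) : Prop where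
  smooth : ContDiff ℝ (⊤ : ℕ∞) γ
  per : ∀ θ, γ (θ + 2 * π) = γ θ
  inj : InjOn γ (Ico 0 (2 * π))
  d : ∀ θ, deriv γ θ ≠ 0
  Bo : IsOpen B
  Uo : IsOpen U
  Uc : IsPreconnected U
  Bb : Bornology.IsBounded B
  Uu : ¬ Bornology.IsBounded U
  disj : Disjoint B U
  union : B ∪ U = (range γ)ᶜ
  wind : ∀ z ∈ B, ∫ θ in (0:ℝ)..(2 * π), deriv γ θ / (γ θ - z) = 2 * π * I

namespace Jor
variable {γ : ℝ → ℂ} {B U : Set ℂ}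

theorem hasDeriv (h : Jor γ B U) (s : ℝ) : HasDerivAt γ (deriv γ s) s :=
  (h.smooth.differentiable (by simp) s).hasDerivAt

theorem cont_deriv (h : Jor γ B U) : Continuous (deriv γ) :=
  h.smooth.continuous_deriv (by simp)

theorem deriv_per (h : Jor γ B U) (s : ℝ) : deriv γ (s + 2 * π) = deriv γ s := by
  rw [← deriv_comp_add_const]
  simp_rw [h.per]

theorem per_int (h : Jor γ B U) (k : ℤ) (θ : ℝ) : γ (θ + 2 * π * k) = γ θ := by
  have : Function.Periodic γ (2 * π) := h.per
  have := this.int_mul k θ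
  rwa [mul_comm (k:ℝ)] at this

theorem inj' (h : Jor γ B U) {a b : ℝ} (hab : γ a = γ b) : ∃ k : ℤ, a = b + 2 * π * k := by
  obtain ⟨k, hk⟩ := exists_shift 0 a
  obtain ⟨l, hl⟩ := exists_shift 0 b
  rw [zero_add] at hk hl
  have := h.inj hk hl (by rw [h.per_int, h.per_int, hab])
  refine ⟨l - k, ?_⟩
  push_cast
  linarith

theorem not_range (h : Jor γ B U) {z : ℂ} (hz : z ∈ B ∨ z ∈ U) (θ : ℝ) : γ θ ≠ z := by
  intro he
  have h1 : z ∈ B ∪ U := hz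
  rw [h.union] at h1
  exact h1 ⟨θ, he⟩

theorem cases (h : Jor γ B U) (z : ℂ) : z ∈ B ∨ z ∈ U ∨ z ∈ range γ := by
  by_cases hz : z ∈ range γ
  · exact Or.inr (Or.inr hz)
  · have : z ∈ B ∪ U := by rw [h.union]; exact hz
    rcases this with h1 | h1
    · exact Or.inl h1
    · exact Or.inr (Or.inl h1)

theorem windU (h : Jor γ B U) (z : ℂ) (hz : z ∈ U) :
    ∫ θ in (0:ℝ)..(2 * π), deriv γ θ / (γ θ - z) = 0 := by
  set W : ℂ → ℂ := fun z => ∫ θ in (0:ℝ)..(2 * π), deriv γ θ / (γ θ - z) with hW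
  have hpi : (0:ℝ) < 2 * π := by positivity
  have hWc : ContinuousOn W U := fun z hz =>
    (cauchy_continuousAt h.smooth.continuous h.cont_deriv hpi.le
      (fun x _ => h.not_range (Or.inr hz) x)).continuousWithinAt
  have hexp : ∀ z ∈ U, Complex.exp (W z) = 1 := by
    intro z hz
    have h1 := exp_int (g := fun θ => γ θ - z) (g' := deriv γ)
      (fun x => (h.hasDeriv x).sub_const z) h.cont_deriv
      (fun x => sub_ne_zero.2 (h.not_range (Or.inr hz) x)) 0 (2 * π)
    have h2 := h.per 0
    rw [zero_add] at h2
    rw [h2] at h1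
    have h3 : γ 0 - z ≠ 0 := sub_ne_zero.2 (h.not_range (Or.inr hz) 0)
    exact mul_right_cancel₀ h3 (h1.trans (one_mul _).symm)
  have hform : ∀ z ∈ U, W z = (W z).im * I := by
    intro z hz
    obtain ⟨n, hn⟩ := Complex.exp_eq_one_iff.1 (hexp z hz)
    apply Complex.ext
    · rw [hn]; simp
    · simp
  obtain ⟨m, hm⟩ := const_of_exp_eq h.Uc (g := fun z => (W z).im)
    (Complex.continuous_im.comp_continuousOn hWc) 0 (by
      intro z hz
      rw [← hform z hz, hexp z hz]
      simp)
  -- a far away point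
  obtain ⟨C, hC⟩ := (isCompact_Icc (a := (0:ℝ)) (b := 2 * π)).exists_bound_of_continuousOn
    h.cont_deriv.continuousOn
  obtain ⟨M, hM⟩ := (isCompact_Icc (a := (0:ℝ)) (b := 2 * π)).exists_bound_of_continuousOn
    h.smooth.continuous.continuousOn
  obtain ⟨z₁, hz₁, hz₁b⟩ : ∃ z₁ ∈ U, M + (|C| + 1) < ‖z₁‖ := by
    by_contra hcon
    push Not at hcon
    exact h.Uu (isBounded_iff_forall_norm_le.2 ⟨_, hcon⟩)
  have hsmall : ‖W z₁‖ ≤ (|C| / (|C| + 1)) * |2 * π - 0| := by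
    apply intervalIntegral.norm_integral_le_of_norm_le_const
    intro x hx
    rw [uIoc_of_le hpi.le] at hx
    have hx' : x ∈ Icc 0 (2 * π) := ⟨hx.1.le, hx.2⟩
    rw [norm_div]
    refine div_le_div₀ (abs_nonneg _) ((hC x hx').trans (le_abs_self _)) (by positivity) ?_
    have h1 := norm_sub_norm_le z₁ (γ x)
    rw [norm_sub_rev] at h1
    linarith [hM x hx']
  have hlt : |C| / (|C| + 1) < 1 := by
    rw [div_lt_one (by positivity)]
    linarith
  have h1 : |(W z₁).im| < 2 * π := by
    refine (Complex.abs_im_le_norm _).trans_lt (hsmall.trans_lt ?_)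
    rw [sub_zero, abs_of_pos hpi]
    nlinarith
  have h2 : (W z₁).im = 0 + 2 * π * m := hm z₁ hz₁
  have hm0 : m = 0 := by
    rw [h2, zero_add, abs_mul, abs_of_pos hpi] at h1
    have h3 : |(m:ℝ)| < 1 := by nlinarith [abs_nonneg (m:ℝ)]
    rw [← Int.abs_lt_one_iff]
    exact_mod_cast h3
  have h3 : (W z).im = 0 + 2 * π * m := hm z hz
  have h4 := hform z hz
  rw [h3, hm0] at h4
  simpa using h4

/-- The left side of a positively oriented curve is inside, the right side is outside. -/
theorem sides (h : Jor γ B U) (θ₀ : ℝ) (k : ℂ) (hk : 0 < k.im) :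
    ∃ ε₀ > 0, ∀ ε : ℝ, 0 < ε → ε < ε₀ →
      γ θ₀ + ε * (k * deriv γ θ₀) ∈ B ∧ γ θ₀ - ε * (k * deriv γ θ₀) ∈ U := by
  set T := deriv γ θ₀ with hT
  have hT0 : T ≠ 0 := h.d θ₀
  have hpi := Real.pi_pos
  set η := k.im / (4 * (|k.re| + k.im)) with hη
  have hden : 0 < |k.re| + k.im := by positivity
  have hηpos : 0 < η := by positivity
  have hη4 : η ≤ 1 / 4 := by
    rw [hη, div_le_div_iff₀ (by positivity) (by norm_num)]
    linarith [abs_nonneg k.re]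
  have hηk : η * (|k.re| + k.im) < k.im := by
    have : η * (|k.re| + k.im) = k.im / 4 := by
      rw [hη]; field_simp
    linarith
  -- the local approximation
  obtain ⟨δ, hδ, hδpi, happ⟩ : ∃ δ > 0, δ < π ∧ ∀ x ∈ Icc (-δ) δ,
      ‖(γ (θ₀ + x) - γ θ₀) / T - x‖ ≤ η * |x| := by
    have h1 := (hasDerivAt_iff_isLittleO_nhds_zero.1 (h.hasDeriv θ₀)).def
      (mul_pos hηpos (norm_pos_iff.2 hT0))
    obtain ⟨r, hr, hrb⟩ := Metric.eventually_nhds_iff.1 h1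
    refine ⟨min (r / 2) (π / 2), by positivity, by linarith [min_le_right (r / 2) (π / 2)], ?_⟩
    intro x hx
    have hx1 : |x| ≤ r / 2 := (abs_le.2 hx).trans (min_le_left _ _)
    have h2 := hrb (y := x) (by rw [Real.dist_eq, sub_zero]; linarith)
    rw [← hT] at h2
    have h3 : (γ (θ₀ + x) - γ θ₀) / T - x = (γ (θ₀ + x) - γ θ₀ - x • T) / T := by
      rw [Complex.real_smul]
      field_simp
    rw [h3, norm_div, div_le_iff₀ (norm_pos_iff.2 hT0)]
    rw [Real.norm_eq_abs] at h2
    linarith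
  -- the rest of the curve
  set p := θ₀ + δ with hp
  set q := θ₀ - δ + 2 * π with hq
  have hpq : p ≤ q := by rw [hp, hq]; linarith
  have hrest : ∀ x ∈ Icc p q, γ x ≠ γ θ₀ := by
    intro x hx he
    obtain ⟨n, hn⟩ := h.inj' he
    rw [hp, hq, hn] at hx
    have h1 : (0:ℝ) < n := by
      by_contra hcon
      push Not at hcon
      nlinarith [hx.1]
    have h2 : (n:ℝ) < 1 := by
      by_contra hcon
      push Not at hcon
      nlinarith [hx.2]
    have h3 : 0 < n := by exact_mod_cast h1
    have h4 : n < 1 := by exact_mod_cast h2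
    omega
  set J : ℂ → ℂ := fun a => ∫ x in p..q, deriv γ x / (γ x - a) with hJ
  have hJc : ContinuousAt J (γ θ₀) :=
    cauchy_continuousAt h.smooth.continuous h.cont_deriv hpq hrest
  have hJ1 : ∀ᶠ a in nhds (γ θ₀), ‖J a - J (γ θ₀)‖ < 1 := by
    have := Metric.tendsto_nhds.1 hJc 1 one_pos
    simpa [dist_eq_norm] using this
  have hJ2 : ∀ᶠ a in nhds (γ θ₀), ∀ x ∈ Icc p q, γ x ≠ a := by
    have hcl : IsClosed (γ '' Icc p q) := (isCompact_Icc.image h.smooth.continuous).isClosed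
    have hn : γ θ₀ ∉ γ '' Icc p q := by
      rintro ⟨x, hx, he⟩
      exact hrest x hx he
    filter_upwards [hcl.isOpen_compl.mem_nhds hn] with a ha x hx he
    exact ha ⟨x, hx, he⟩
  obtain ⟨r, hr, hrb⟩ := Metric.eventually_nhds_iff.1 (hJ1.and hJ2)
  have hk0 : k ≠ 0 := by rintro rfl; simp at hk
  have hkp : 0 < ‖k‖ := norm_pos_iff.2 hk0
  have hTp : 0 < ‖T‖ := norm_pos_iff.2 hT0
  refine ⟨min (δ / (4 * ‖k‖)) (r / (‖k‖ * ‖T‖)), by positivity, fun ε hε hεlt => ?_⟩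
  have hε1 : ε * ‖k‖ ≤ δ / 4 := by
    have h1 := hεlt.le.trans (min_le_left _ _)
    rw [le_div_iff₀ (by positivity)] at h1
    linarith
  have hε2 : ε * (‖k‖ * ‖T‖) < r := by
    have h1 := hεlt.trans_le (min_le_right _ _)
    rwa [lt_div_iff₀ (by positivity)] at h1
  set a := γ θ₀ + ε * (k * T) with ha
  set b := γ θ₀ - ε * (k * T) with hb
  have hra := hrb (y := a) (by
    rw [dist_eq_norm, ha, add_sub_cancel_left, norm_mul, norm_mul, Complex.norm_real,
      Real.norm_eq_abs, abs_of_pos hε]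
    exact hε2)
  have hrbb := hrb (y := b) (by
    have : b - γ θ₀ = -(ε * (k * T)) := by rw [hb]; ring
    rw [dist_eq_norm, this, norm_neg, norm_mul, norm_mul, Complex.norm_real,
      Real.norm_eq_abs, abs_of_pos hε]
    exact hε2)
  have hloc1 := local_jump (g := fun x => γ (θ₀ + x)) (g' := fun x => deriv γ (θ₀ + x))
    (fun x => (h.hasDeriv (θ₀ + x)).comp_const_add θ₀ x)
    (h.cont_deriv.comp (by fun_prop)) hT0 hδ hηpos.le hη4 hηk hε hε1
    (by simpa using happ)
  have hloc2 := local_jump (g := fun x => γ (θ₀ - x)) (g' := fun x => -deriv γ (θ₀ - x)) (T := -T)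
    (fun x => (h.hasDeriv (θ₀ - x)).comp_const_sub θ₀ x)
    (h.cont_deriv.comp (by fun_prop)).neg (neg_ne_zero.2 hT0) hδ hηpos.le hη4 hηk hε hε1
    (by
      intro x hx
      have h1 := happ (-x) ⟨by linarith [hx.2], by linarith [hx.1]⟩
      rw [abs_neg] at h1
      rw [← norm_neg] at h1
      convert! h1 using 2
      simp only [sub_zero]
      push_cast
      rw [div_neg]
      simp [sub_eq_add_neg]
      ring)
  simp only [add_zero, sub_zero, mul_neg, ← sub_eq_add_neg] at hloc1 hloc2
  rw [← ha] at hloc1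
  rw [← hb] at hloc2
  have hI1 : ∫ x in (-δ)..δ, deriv γ (θ₀ + x) / (γ (θ₀ + x) - a) =
      ∫ x in (θ₀ - δ)..p, deriv γ x / (γ x - a) := by
    rw [intervalIntegral.integral_comp_add_left (fun x => deriv γ x / (γ x - a)) θ₀]
    rfl
  have hI2 : ∫ x in (-δ)..δ, -deriv γ (θ₀ - x) / (γ (θ₀ - x) - b) =
      -∫ x in (θ₀ - δ)..p, deriv γ x / (γ x - b) := by
    rw [intervalIntegral.integral_comp_sub_left (fun x => -deriv γ x / (γ x - b)) θ₀,
      ← intervalIntegral.integral_neg, sub_neg_eq_add]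
    simp only [neg_div]
    rfl
  rw [hI1] at hloc1
  rw [hI2] at hloc2
  -- neither point lies on the curve
  have hoff : ∀ c : ℂ, (∀ x ∈ Icc (θ₀ - δ) p, γ x ≠ c) → (∀ x ∈ Icc p q, γ x ≠ c) →
      ∀ x, γ x ≠ c := by
    intro c h1 h2 x
    obtain ⟨n, hn⟩ := exists_shift (θ₀ - δ) x
    rw [← h.per_int n x]
    rcases le_total (x + 2 * π * n) p with h3 | h3
    · exact h1 _ ⟨hn.1, h3⟩
    · exact h2 _ ⟨h3, hn.2.le⟩
  have hoffa := hoff a (fun x hx => by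
    have := hloc1.1 (x - θ₀) ⟨by linarith [hx.1], by linarith [hx.2]⟩
    simpa using this) hra.2
  have hoffb := hoff b (fun x hx => by
    have := hloc2.1 (θ₀ - x) ⟨by linarith [hx.2], by linarith [hx.1]⟩
    simpa using this) hrbb.2
  -- splitting the winding integral
  have hsplit : ∀ c : ℂ, (∀ x, γ x ≠ c) → ∫ θ in (0:ℝ)..(2 * π), deriv γ θ / (γ θ - c) =
      (∫ x in (θ₀ - δ)..p, deriv γ x / (γ x - c)) + J c := by
    intro c hc
    have hcont : Continuous fun x => deriv γ x / (γ x - c) :=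
      h.cont_deriv.div (h.smooth.continuous.sub continuous_const) fun x => sub_ne_zero.2 (hc x)
    have hperi : Function.Periodic (fun x => deriv γ x / (γ x - c)) (2 * π) := by
      intro x
      simp only [h.per, h.deriv_per]
    have h1 := hperi.intervalIntegral_add_eq 0 (θ₀ - δ)
    rw [zero_add] at h1
    rw [h1, hJ]
    exact (intervalIntegral.integral_add_adjacent_intervals (hcont.intervalIntegrable _ _)
      (hcont.intervalIntegrable _ _)).symm
  have hWa := congrArg Complex.im (hsplit a hoffa)
  have hWb := congrArg Complex.im (hsplit b hoffb)
  rw [Complex.add_im] at hWa hWb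
  have hJa := abs_lt.1 ((Complex.abs_im_le_norm _).trans_lt hra.1)
  have hJb := abs_lt.1 ((Complex.abs_im_le_norm _).trans_lt hrbb.1)
  rw [Complex.sub_im] at hJa hJb
  have hl1 := hloc1.2
  have hl2 := hloc2.2
  rw [Complex.neg_im] at hl2
  have hpi3 := Real.pi_gt_three
  have key : (∫ θ in (0:ℝ)..(2 * π), deriv γ θ / (γ θ - b)).im <
      (∫ θ in (0:ℝ)..(2 * π), deriv γ θ / (γ θ - a)).im := by
    linarith [hJa.1, hJa.2, hJb.1, hJb.2]
  have hB : ∀ c ∈ B, (∫ θ in (0:ℝ)..(2 * π), deriv γ θ / (γ θ - c)).im = 2 * π := by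
    intro c hc
    rw [h.wind c hc]
    simp
  have hU : ∀ c ∈ U, (∫ θ in (0:ℝ)..(2 * π), deriv γ θ / (γ θ - c)).im = 0 := by
    intro c hc
    rw [h.windU c hc]
    simp
  rcases h.cases a with h1 | h1 | ⟨x, hx⟩
  · rcases h.cases b with h2 | h2 | ⟨x, hx⟩
    · rw [hB a h1, hB b h2] at key
      exact absurd key (lt_irrefl _)
    · exact ⟨h1, h2⟩
    · exact absurd hx (hoffb x)
  · exfalso
    rcases h.cases b with h2 | h2 | ⟨x, hx⟩
    · rw [hU a h1, hB b h2] at key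
      linarith
    · rw [hU a h1, hU b h2] at key
      exact absurd key (lt_irrefl _)
    · exact absurd hx (hoffb x)
  · exact absurd hx (hoffa x)

end Jor

end Annulus

namespace Annulus

theorem open_small {V : Set ℂ} (hV : IsOpen V) {p : ℂ} (hp : p ∈ V) (w : ℂ) :
    ∃ ε₀ > 0, ∀ ε : ℝ, 0 < ε → ε < ε₀ → p + ε * w ∈ V := by
  have hc : Continuous fun ε : ℝ => p + ε * w := by fun_prop
  have h1 : (fun ε : ℝ => p + ε * w) ⁻¹' V ∈ nhds (0:ℝ) :=
    (hV.preimage hc).mem_nhds (by simpa using hp)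
  obtain ⟨r, hr, hb⟩ := Metric.mem_nhds_iff.1 h1
  refine ⟨r, hr, fun ε h0 h1 => ?_⟩
  have : ε ∈ Metric.ball (0:ℝ) r := by simp [abs_of_pos h0, h1]
  exact hb this

/-- Nested Jordan curves. -/
structure Nest (γi : ℝ → ℂ) (Bi Ui : Set ℂ) (γo : ℝ → ℂ) (Bo Uo : Set ℂ) : Prop where
  hi : Jor γi Bi Ui
  ho : Jor γo Bo Uo
  sub : Bi ∪ range γi ⊆ Bo ∪ range γo

namespace Nest
variable {γi γo : ℝ → ℂ} {Bi Ui Bo Uo : Set ℂ}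

theorem notU (h : Nest γi Bi Ui γo Bo Uo) {z : ℂ} (hz : z ∈ Bo ∪ range γo) : z ∉ Uo := by
  intro hU
  rcases hz with h1 | ⟨θ, h1⟩
  · exact disjoint_left.1 h.ho.disj h1 hU
  · exact h.ho.not_range (Or.inr hU) θ h1

theorem out_notB (h : Nest γi Bi Ui γo Bo Uo) (θ : ℝ) : γo θ ∉ Bi := by
  intro hB
  obtain ⟨ε₀, hε₀, h1⟩ := open_small h.hi.Bo hB (-(I * deriv γo θ))
  obtain ⟨ε₁, hε₁, h2⟩ := h.ho.sides θ I (by simp)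
  have hm : 0 < min ε₀ ε₁ := lt_min hε₀ hε₁
  have h3 := h1 (min ε₀ ε₁ / 2) (by linarith) (by linarith [min_le_left ε₀ ε₁])
  have h4 := (h2 (min ε₀ ε₁ / 2) (by linarith) (by linarith [min_le_right ε₀ ε₁])).2
  rw [sub_eq_add_neg, ← mul_neg] at h4
  exact h.notU (h.sub (Or.inl h3)) h4

theorem B_sub (h : Nest γi Bi Ui γo Bo Uo) : Bi ⊆ Bo := by
  intro z hz
  rcases h.sub (Or.inl hz) with h1 | ⟨θ, h1⟩
  · exact h1
  · exact absurd (h1 ▸ hz) (h.out_notB θ)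

theorem in_notU (h : Nest γi Bi Ui γo Bo Uo) (θ : ℝ) : γi θ ∉ Uo :=
  h.notU (h.sub (Or.inr ⟨θ, rfl⟩))

theorem U_sub (h : Nest γi Bi Ui γo Bo Uo) : Uo ⊆ Ui := by
  intro z hz
  rcases h.hi.cases z with h1 | h1 | ⟨θ, h1⟩
  · exact absurd hz (h.notU (h.sub (Or.inl h1)))
  · exact h1
  · exact absurd (h1 ▸ hz) (h.in_notU θ)

theorem contact (h : Nest γi Bi Ui γo Bo Uo) {a b : ℝ} (hab : γi a = γo b) :
    ∃ r : ℝ, 0 < r ∧ deriv γo b = r * deriv γi a := by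
  set κ := deriv γi a / deriv γo b with hκ
  have hTo := h.ho.d b
  have hTi := h.hi.d a
  have hκ0 : κ ≠ 0 := div_ne_zero hTi hTo
  have hκe : deriv γi a = κ * deriv γo b := by rw [hκ]; field_simp
  have key : ∀ x : ℂ, 0 < x.im → 0 ≤ (x * κ).im := by
    intro x hx
    by_contra hcon
    push Not at hcon
    obtain ⟨ε₀, hε₀, h1⟩ := h.hi.sides a x hx
    obtain ⟨ε₁, hε₁, h2⟩ := h.ho.sides b (-(x * κ)) (by rw [Complex.neg_im]; linarith)
    have hm : 0 < min ε₀ ε₁ := lt_min hε₀ hε₁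
    have h3 := (h1 (min ε₀ ε₁ / 2) (by linarith) (by linarith [min_le_left ε₀ ε₁])).1
    have h4 := (h2 (min ε₀ ε₁ / 2) (by linarith) (by linarith [min_le_right ε₀ ε₁])).2
    refine h.notU (h.sub (Or.inl h3)) ?_
    convert! h4 using 1
    rw [hab, hκe]
    ring
  have key2 : ∀ y : ℝ, 0 ≤ y * κ.im + κ.re := by
    intro y
    have := key (y + I) (by simp)
    simpa using this
  have him : κ.im = 0 := by
    by_contra hne
    have := key2 (-(κ.re + 1) / κ.im)
    rw [div_mul_cancel₀ _ hne] at this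
    linarith
  have hre : 0 < κ.re := by
    have h1 := key2 0
    rw [zero_mul, zero_add] at h1
    refine lt_of_le_of_ne h1 fun h2 => hκ0 ?_
    apply Complex.ext
    · simp [← h2]
    · simp [him]
  have hκr : κ = (κ.re : ℂ) := by
    apply Complex.ext <;> simp [him]
  refine ⟨κ.re⁻¹, inv_pos.2 hre, ?_⟩
  rw [hκe]
  nth_rw 2 [hκr]
  have : (κ.re : ℂ) ≠ 0 := by exact_mod_cast hre.ne'
  push_cast
  field_simp

end Nest

theorem perp {f : ℝ → ℂ} {f' : ℂ} {s : ℝ} (hf : HasDerivAt f f' s) (p : ℂ)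
    (hmin : ∀ s', ‖f s - p‖ ≤ ‖f s' - p‖) : (f' * (starRingEnd ℂ) (f s - p)).re = 0 := by
  have h1 := (hf.sub_const p).norm_sq
  have h2 : IsLocalMin (fun x => ‖f x - p‖ ^ 2) s := by
    refine Filter.Eventually.of_forall fun x => ?_
    have := hmin x
    dsimp only
    gcongr
  have h3 := h2.hasDerivAt_eq_zero h1
  rw [Complex.inner] at h3
  simpa using h3

theorem perp' {T n : ℂ} (hn : ‖n‖ = 1) (h : (T * (starRingEnd ℂ) n).re = 0) :
    T = I * ((T * (starRingEnd ℂ) n).im : ℂ) * n := by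
  have h1 : T * (starRingEnd ℂ) n = I * ((T * (starRingEnd ℂ) n).im : ℂ) := by
    apply Complex.ext
    · simpa using h
    · simp
  have h2 : (starRingEnd ℂ) n * n = 1 := by
    rw [mul_comm, Complex.mul_conj, Complex.normSq_eq_norm_sq, hn]; simp
  rw [← h1, mul_assoc, h2, mul_one]

theorem Jor.segB {γ : ℝ → ℂ} {B U : Set ℂ} (h : Jor γ B U) {J : Set ℝ} (hJ : IsPreconnected J)
    {f : ℝ → ℂ} (hf : Continuous f) (hoff : ∀ x ∈ J, f x ∉ range γ) {x₀ : ℝ} (hx₀ : x₀ ∈ J) :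
    (f x₀ ∈ B → ∀ x ∈ J, f x ∈ B) ∧ (f x₀ ∈ U → ∀ x ∈ J, f x ∈ U) := by
  have hc : IsPreconnected (f '' J) := hJ.image f hf.continuousOn
  have hsub : f '' J ⊆ B ∪ U := by
    rw [h.union]
    rintro _ ⟨x, hx, rfl⟩
    exact hoff x hx
  constructor
  · intro h0 x hx
    exact hc.subset_left_of_subset_union h.Bo h.Uo h.disj hsub ⟨f x₀, ⟨x₀, hx₀, rfl⟩, h0⟩
      ⟨x, hx, rfl⟩
  · intro h0 x hx
    exact hc.subset_right_of_subset_union h.Bo h.Uo h.disj hsub ⟨f x₀, ⟨x₀, hx₀, rfl⟩, h0⟩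
      ⟨x, hx, rfl⟩

namespace Nest
variable {γi γo : ℝ → ℂ} {Bi Ui Bo Uo : Set ℂ}

theorem precut (h : Nest γi Bi Ui γo Bo Uo) : ∃ (s t d r r' : ℝ) (n : ℂ), n ≠ 0 ∧ 0 ≤ d ∧
    0 < r ∧ 0 < r' ∧ γo t = γi s + d * n ∧ deriv γi s = I * r * n ∧ deriv γo t = I * r' * n ∧
    ∀ x ∈ Icc 0 d, (γi s + x * n ∈ range γi → x = 0) ∧ (γi s + x * n ∈ range γo → x = d) := by
  by_cases hcon : ∃ a b, γi a = γo b
  · obtain ⟨a, b, hab⟩ := hcon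
    obtain ⟨r, hr, he⟩ := h.contact hab
    have hI : I * (1:ℝ) * (-I * deriv γi a) = deriv γi a := by
      rw [Complex.ofReal_one, mul_one, ← mul_assoc, mul_neg, I_mul_I]; simp
    refine ⟨a, b, 0, 1, r, -I * deriv γi a, mul_ne_zero (by simp) (h.hi.d a), le_rfl, one_pos, hr,
      by simp [hab], hI.symm, ?_, ?_⟩
    · rw [he]
      nth_rw 1 [← hI]
      push_cast
      ring
    · intro x hx
      have : x = 0 := le_antisymm hx.2 hx.1
      exact ⟨fun _ => this, fun _ => this⟩
  push Not at hcon
  have hpi : (0:ℝ) < 2 * π := by positivity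
  have hci := h.hi.smooth.continuous
  have hco := h.ho.smooth.continuous
  obtain ⟨⟨s, t⟩, -, hst⟩ := ((isCompact_Icc (a := (0:ℝ)) (b := 2 * π)).prod
    (isCompact_Icc (a := (0:ℝ)) (b := 2 * π))).exists_isMinOn
    ⟨(0, 0), ⟨⟨le_rfl, hpi.le⟩, ⟨le_rfl, hpi.le⟩⟩⟩
    (f := fun x : ℝ × ℝ => ‖γi x.1 - γo x.2‖) (by fun_prop)
  have hmin : ∀ s' t', ‖γi s - γo t‖ ≤ ‖γi s' - γo t'‖ := by
    intro s' t'
    obtain ⟨k, hk⟩ := exists_shift 0 s'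
    obtain ⟨l, hl⟩ := exists_shift 0 t'
    rw [zero_add] at hk hl
    have := hst (show ((s' + 2 * π * k, t' + 2 * π * l) : ℝ × ℝ) ∈ _ from
      ⟨⟨hk.1, hk.2.le⟩, ⟨hl.1, hl.2.le⟩⟩)
    simpa [h.hi.per_int, h.ho.per_int] using this
  set q := γi s with hq
  set p := γo t with hp
  set d := ‖p - q‖ with hd
  have hpq : p - q ≠ 0 := sub_ne_zero.2 (hcon s t).symm
  have hdpos : 0 < d := norm_pos_iff.2 hpq
  have hdC : (d : ℂ) ≠ 0 := by exact_mod_cast hdpos.ne'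
  set n := (p - q) / d with hn
  have hn1 : ‖n‖ = 1 := by
    rw [hn, norm_div, Complex.norm_real, Real.norm_eq_abs, abs_of_pos hdpos, ← hd,
      div_self hdpos.ne']
  have hn0 : n ≠ 0 := div_ne_zero hpq hdC
  have hpe : p = q + d * n := by rw [hn]; field_simp; ring
  have hmind : ∀ s' t', d ≤ ‖γi s' - γo t'‖ := by
    intro s' t'
    have := hmin s' t'
    rwa [norm_sub_rev, ← hd] at this
  have hsegi : ∀ x ∈ Icc 0 d, q + x * n ∈ range γi → x = 0 := by
    rintro x hx ⟨θ, hθ⟩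
    have h1 := hmind θ t
    have h2 : γi θ - γo t = ((x - d : ℝ) : ℂ) * n := by
      rw [hθ, ← hp, hpe]; push_cast; ring
    rw [h2, norm_mul, hn1, mul_one, Complex.norm_real, Real.norm_eq_abs,
      abs_of_nonpos (by linarith [hx.2])] at h1
    linarith [hx.1]
  have hsego : ∀ x ∈ Icc 0 d, q + x * n ∈ range γo → x = d := by
    rintro x hx ⟨θ, hθ⟩
    have h1 := hmind s θ
    have h2 : γi s - γo θ = ((- x : ℝ) : ℂ) * n := by
      rw [hθ, ← hq]; push_cast; ring
    rw [h2, norm_mul, hn1, mul_one, Complex.norm_real, Real.norm_eq_abs,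
      abs_of_nonpos (by linarith [hx.1])] at h1
    linarith [hx.2]
  have hTi : (deriv γi s * (starRingEnd ℂ) n).re = 0 := by
    have h1 := perp (h.hi.hasDeriv s) p (fun s' => hmin s' t)
    have h2 : γi s - p = ((-d : ℝ) : ℂ) * n := by rw [← hq, hpe]; push_cast; ring
    rw [h2, map_mul, Complex.conj_ofReal, mul_left_comm, Complex.re_ofReal_mul] at h1
    rcases mul_eq_zero.1 h1 with h3 | h3
    · linarith
    · exact h3
  have hTo : (deriv γo t * (starRingEnd ℂ) n).re = 0 := by
    have h1 := perp (h.ho.hasDeriv t) q (fun t' => by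
      have := hmin s t'
      rw [norm_sub_rev, norm_sub_rev (γi s)] at this
      exact this)
    have h2 : γo t - q = (d : ℂ) * n := by rw [← hp, hpe]; ring
    rw [h2, map_mul, Complex.conj_ofReal, mul_left_comm, Complex.re_ofReal_mul] at h1
    rcases mul_eq_zero.1 h1 with h3 | h3
    · linarith
    · exact h3
  have hTi' := perp' hn1 hTi
  have hTo' := perp' hn1 hTo
  set r := (deriv γi s * (starRingEnd ℂ) n).im with hr
  set r' := (deriv γo t * (starRingEnd ℂ) n).im with hr'
  have hr0 : r ≠ 0 := by
    intro h0
    rw [h0] at hTi'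
    exact h.hi.d s (by rw [hTi']; simp)
  have hr0' : r' ≠ 0 := by
    intro h0
    rw [h0] at hTo'
    exact h.ho.d t (by rw [hTo']; simp)
  have hfc : Continuous fun x : ℝ => q + x * n := by fun_prop
  have hrpos : 0 < r := by
    by_contra hneg
    have hneg : r < 0 := lt_of_le_of_ne (not_lt.1 hneg) hr0
    have hpU : q + (d:ℝ) * n ∈ Ui := by
      rw [← hpe]
      rcases h.hi.cases p with h1 | h1 | ⟨θ, h1⟩
      · exact absurd h1 (h.out_notB t)
      · exact h1
      · exact absurd h1 (hcon θ t)
    have hall := (h.hi.segB isPreconnected_Ioc hfc (J := Ioc 0 d) (fun x hx hm =>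
      hx.1.ne' (hsegi x ⟨hx.1.le, hx.2⟩ hm)) (x₀ := d) ⟨hdpos, le_rfl⟩).2 hpU
    obtain ⟨ε₀, hε₀, h1⟩ := h.hi.sides s I (by simp)
    have hnr : 0 < -r := by linarith
    set ε := min (ε₀ / 2) (d / (-r)) with hε
    have hεpos : 0 < ε := by positivity
    have h2 := (h1 ε hεpos (by linarith [min_le_left (ε₀ / 2) (d / (-r))])).1
    have h3 : ε * (-r) ≤ d := by
      rw [← le_div_iff₀ hnr]; exact min_le_right _ _
    have h4 := hall (ε * (-r)) ⟨by positivity, h3⟩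
    refine disjoint_left.1 h.hi.disj h2 ?_
    convert! h4 using 1
    rw [hTi']
    push_cast
    linear_combination (ε * r * n : ℂ) * I_mul_I
  have hrpos' : 0 < r' := by
    by_contra hneg
    have hneg : r' < 0 := lt_of_le_of_ne (not_lt.1 hneg) hr0'
    have hqB : q + (0:ℝ) * n ∈ Bo := by
      rw [Complex.ofReal_zero, zero_mul, add_zero]
      rcases h.sub (Or.inr ⟨s, rfl⟩) with h1 | ⟨θ, h1⟩
      · exact h1
      · exact absurd h1.symm (hcon s θ)
    have hall := (h.ho.segB isPreconnected_Ico hfc (J := Ico 0 d) (fun x hx hm =>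
      hx.2.ne (hsego x ⟨hx.1, hx.2.le⟩ hm)) (x₀ := 0) ⟨le_rfl, hdpos⟩).1 hqB
    obtain ⟨ε₀, hε₀, h1⟩ := h.ho.sides t I (by simp)
    have hnr : 0 < -r' := by linarith
    set ε := min (ε₀ / 2) (d / (-r')) with hε
    have hεpos : 0 < ε := by positivity
    have h2 := (h1 ε hεpos (by linarith [min_le_left (ε₀ / 2) (d / (-r'))])).2
    have h3 : ε * (-r') ≤ d := by
      rw [← le_div_iff₀ hnr]; exact min_le_right _ _
    have h4 := hall (d - ε * (-r')) ⟨by linarith, by nlinarith⟩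
    refine disjoint_left.1 h.ho.disj h4 ?_
    convert! h2 using 1
    rw [hTo', ← hp, hpe]
    push_cast
    linear_combination (ε * r' * n : ℂ) * I_mul_I
  exact ⟨s, t, d, r, r', n, hn0, hdpos.le, hrpos, hrpos', hpe, hTi', hTo',
    fun x hx => ⟨hsegi x hx, hsego x hx⟩⟩

theorem cut (h : Nest γi Bi Ui γo Bo Uo) : ∃ (s t a b r r' : ℝ) (z₀ z₁ : ℂ),
    z₀ ∈ Bi ∧ z₁ ∈ Uo ∧ a ∈ Ioo (0:ℝ) 1 ∧ b ∈ Ioo (0:ℝ) 1 ∧ 0 < r ∧ 0 < r' ∧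
    γi s = z₀ + a * (z₁ - z₀) ∧ γo t = z₀ + b * (z₁ - z₀) ∧
    deriv γi s = I * r * (z₁ - z₀) ∧ deriv γo t = I * r' * (z₁ - z₀) ∧
    (∀ θ, ∀ x ∈ Icc (0:ℝ) 1, γi θ = z₀ + x * (z₁ - z₀) → x = a) ∧
    (∀ θ, ∀ x ∈ Icc (0:ℝ) 1, γo θ = z₀ + x * (z₁ - z₀) → x = b) := by
  obtain ⟨s, t, d, r, r', n, hn, hd, hr, hr', hp, hTi, hTo, hseg⟩ := h.precut
  obtain ⟨ε₀, hε₀, h1⟩ := h.hi.sides s I (by simp)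
  obtain ⟨ε₁, hε₁, h2⟩ := h.ho.sides t I (by simp)
  set m := min (ε₀ * r) (ε₁ * r') with hm
  have hmpos : 0 < m := by positivity
  have hB : ∀ y : ℝ, 0 < y → y < m → γi s - y * n ∈ Bi := by
    intro y hy hym
    have h3 := (h1 (y / r) (by positivity) (by
      rw [div_lt_iff₀ hr]; exact hym.trans_le (min_le_left _ _))).1
    convert! h3 using 1
    have : (r:ℂ) ≠ 0 := by exact_mod_cast hr.ne'
    rw [hTi]
    push_cast
    field_simp
    linear_combination (-y * n) * I_sq
  have hU : ∀ y : ℝ, 0 < y → y < m → γo t + y * n ∈ Uo := by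
    intro y hy hym
    have h3 := (h2 (y / r') (by positivity) (by
      rw [div_lt_iff₀ hr']; exact hym.trans_le (min_le_right _ _))).2
    convert! h3 using 1
    have : (r':ℂ) ≠ 0 := by exact_mod_cast hr'.ne'
    rw [hTo]
    push_cast
    field_simp
    linear_combination (y * n) * I_sq
  set ε := m / 2 with hε
  have hεpos : 0 < ε := by positivity
  have hεm : ε < m := by rw [hε]; linarith
  set L := d + 2 * ε with hL
  have hLpos : 0 < L := by positivity
  have hLC : (L:ℂ) ≠ 0 := by exact_mod_cast hLpos.ne'
  have hLe : (L:ℂ) = d + 2 * ε := by rw [hL]; push_cast; ring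
  have hN : (γo t + ε * n) - (γi s - ε * n) = L * n := by rw [hp, hLe]; ring
  have hx : ∀ x ∈ Icc (0:ℝ) 1, (γi s - ε * n) + x * (L * n) = γi s + (x * L - ε : ℝ) * n := by
    intro x _
    push_cast
    ring
  have hcase : ∀ x ∈ Icc (0:ℝ) 1, γi s + (x * L - ε : ℝ) * n ∈ Bi ∨ x * L - ε ∈ Icc 0 d ∨
      γi s + (x * L - ε : ℝ) * n ∈ Uo := by
    intro x hx
    have hxL : 0 ≤ x * L := mul_nonneg hx.1 hLpos.le
    have hxL' : x * L ≤ L := by nlinarith [hx.2]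
    rcases lt_or_ge (x * L - ε) 0 with h3 | h3
    · left
      have := hB (-(x * L - ε)) (by linarith) (by linarith)
      convert! this using 1
      push_cast
      ring
    rcases le_or_gt (x * L - ε) d with h4 | h4
    · exact Or.inr (Or.inl ⟨h3, h4⟩)
    · right; right
      have := hU (x * L - ε - d) (by linarith) (by linarith)
      rw [hp] at this
      convert! this using 1
      push_cast
      ring
  refine ⟨s, t, ε / L, (d + ε) / L, r / L, r' / L, γi s - ε * n, γo t + ε * n, hB ε hεpos hεm,
    hU ε hεpos hεm, ⟨by positivity, by rw [div_lt_one hLpos]; linarith⟩,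
    ⟨by positivity, by rw [div_lt_one hLpos]; linarith⟩, by positivity, by positivity,
    ?_, ?_, ?_, ?_, ?_, ?_⟩
  · rw [hN]; push_cast; field_simp; ring
  · rw [hN, hp]; push_cast; field_simp; ring
  · rw [hN, hTi]; push_cast; field_simp
  · rw [hN, hTo]; push_cast; field_simp
  · intro θ x hx01 he
    rw [hN, hx x hx01] at he
    rw [eq_div_iff hLpos.ne']
    rcases hcase x hx01 with h3 | h3 | h3
    · exact absurd he (h.hi.not_range (Or.inl h3) θ)
    · have := (hseg _ h3).1 ⟨θ, he⟩
      linarith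
    · exact absurd he (h.hi.not_range (Or.inr (h.U_sub h3)) θ)
  · intro θ x hx01 he
    rw [hN, hx x hx01] at he
    rw [eq_div_iff hLpos.ne']
    rcases hcase x hx01 with h3 | h3 | h3
    · exact absurd he (h.ho.not_range (Or.inl (h.B_sub h3)) θ)
    · have := (hseg _ h3).2 ⟨θ, he⟩
      linarith
    · exact absurd he (h.ho.not_range (Or.inr h3) θ)

end Nest
end Annulus

namespace Annulus

/-- Möbius map sending `z₀` to `0` and `z₁` to infinity. -/
noncomputable def Mb (z₀ z₁ z : ℂ) : ℂ := (z - z₀) / (z₁ - z)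

/-- Inverse Möbius map. -/
noncomputable def Mi (z₀ z₁ w : ℂ) : ℂ := (z₁ * w + z₀) / (1 + w)

theorem Mb_one {z₀ z₁ z : ℂ} (h01 : z₁ ≠ z₀) (hz : z ≠ z₁) : 1 + Mb z₀ z₁ z ≠ 0 := by
  have h1 : z₁ - z ≠ 0 := sub_ne_zero.2 hz.symm
  have h2 : 1 + Mb z₀ z₁ z = (z₁ - z₀) / (z₁ - z) := by
    unfold Mb; field_simp; ring
  rw [h2]
  exact div_ne_zero (sub_ne_zero.2 h01) h1

theorem Mi_Mb {z₀ z₁ z : ℂ} (h01 : z₁ ≠ z₀) (hz : z ≠ z₁) : Mi z₀ z₁ (Mb z₀ z₁ z) = z := by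
  have h0 := Mb_one h01 hz
  have h1 : z₁ - z ≠ 0 := sub_ne_zero.2 hz.symm
  unfold Mi
  rw [div_eq_iff h0]
  unfold Mb
  field_simp
  ring

theorem Mi_sub {z₀ z₁ w : ℂ} (hw : 1 + w ≠ 0) : z₁ - Mi z₀ z₁ w = (z₁ - z₀) / (1 + w) := by
  unfold Mi
  field_simp
  ring

theorem Mb_Mi {z₀ z₁ w : ℂ} (h01 : z₁ ≠ z₀) (hw : 1 + w ≠ 0) : Mb z₀ z₁ (Mi z₀ z₁ w) = w := by
  have h1 : z₁ - z₀ ≠ 0 := sub_ne_zero.2 h01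
  unfold Mb
  rw [Mi_sub hw, div_eq_iff (div_ne_zero h1 hw)]
  unfold Mi
  field_simp
  ring

theorem Mb_inj {z₀ z₁ z z' : ℂ} (h01 : z₁ ≠ z₀) (hz : z ≠ z₁) (hz' : z' ≠ z₁)
    (h : Mb z₀ z₁ z = Mb z₀ z₁ z') : z = z' := by
  rw [← Mi_Mb h01 hz, h, Mi_Mb h01 hz']

theorem near_sign {f : ℝ → ℝ} {s f' : ℝ} (hf : HasDerivAt f f' s) (hf' : 0 < f') (h0 : f s = 0) :
    ∃ δ > 0, δ < 2 * π ∧ 0 < f (s + δ) ∧ f (s - δ) < 0 := by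
  have h1 := eventually_nhdsWithin_sign_eq_of_deriv_pos (f := f) (x₀ := s)
    (by rw [hf.deriv]; exact hf') h0
  obtain ⟨r, hr, hb⟩ := Metric.eventually_nhds_iff.1 h1
  have hpi := Real.pi_pos
  have hm : 0 < min r π := lt_min hr hpi
  refine ⟨min r π / 2, by linarith, by linarith [min_le_right r π], ?_, ?_⟩
  · have h2 := hb (y := s + min r π / 2) (by
      rw [Real.dist_eq, add_sub_cancel_left, abs_of_pos (by linarith)]
      linarith [min_le_left r π])
    rw [add_sub_cancel_left, sign_pos (by linarith : 0 < min r π / 2)] at h2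
    exact sign_eq_one_iff.1 h2
  · have h2 := hb (y := s - min r π / 2) (by
      rw [Real.dist_eq, sub_sub_cancel_left, abs_neg, abs_of_pos (by linarith)]
      linarith [min_le_left r π])
    rw [sub_sub_cancel_left, sign_neg (by linarith : -(min r π / 2) < 0)] at h2
    exact sign_eq_neg_one_iff.1 h2

theorem sign_const {f : ℝ → ℝ} (hf : Continuous f) {a b x₀ : ℝ} (hx₀ : x₀ ∈ Ioo a b)
    (hne : ∀ x ∈ Ioo a b, f x ≠ 0) (hpos : 0 < f x₀) : ∀ x ∈ Ioo a b, 0 < f x := by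
  intro x hx
  by_contra hcon
  have h1 : f x < 0 := lt_of_le_of_ne (not_lt.1 hcon) (hne x hx)
  have h2 := isPreconnected_Ioo.intermediate_value hx hx₀ hf.continuousOn
    (show (0:ℝ) ∈ Icc (f x) (f x₀) from ⟨h1.le, hpos.le⟩)
  obtain ⟨y, hy, hy0⟩ := h2
  exact hne y hy hy0

/-- Logarithmic lift of a Jordan curve. -/
theorem Jor.lift {γ : ℝ → ℂ} {B U : Set ℂ} (h : Jor γ B U) {z₀ z₁ : ℂ} (hz₀ : z₀ ∈ B)
    (hz₁ : z₁ ∈ U) {s a r : ℝ} (ha : a ∈ Ioo (0:ℝ) 1) (hr : 0 < r)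
    (hs : γ s = z₀ + a * (z₁ - z₀)) (hd : deriv γ s = I * r * (z₁ - z₀))
    (honly : ∀ θ, ∀ x ∈ Icc (0:ℝ) 1, γ θ = z₀ + x * (z₁ - z₀) → x = a) :
    ∃ c : ℝ → ℂ, Adm c s ∧ (∀ θ, Complex.exp (c θ) = Mb z₀ z₁ (γ θ)) ∧
      ∀ θ, deriv c θ = deriv γ θ * ((z₁ - z₀) / ((γ θ - z₀) * (z₁ - γ θ))) := by
  have h01 : z₁ ≠ z₀ := by
    rintro rfl
    exact disjoint_left.1 h.disj hz₀ hz₁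
  have hN : z₁ - z₀ ≠ 0 := sub_ne_zero.2 h01
  have hpi : (0:ℝ) < 2 * π := by positivity
  have hne0 : ∀ θ, γ θ - z₀ ≠ 0 := fun θ => sub_ne_zero.2 (h.not_range (Or.inl hz₀) θ)
  have hne1' : ∀ θ, γ θ ≠ z₁ := fun θ => h.not_range (Or.inr hz₁) θ
  have hne1 : ∀ θ, z₁ - γ θ ≠ 0 := fun θ => sub_ne_zero.2 (hne1' θ).symm
  set G : ℝ → ℂ := fun θ => deriv γ θ * ((z₁ - z₀) / ((γ θ - z₀) * (z₁ - γ θ))) with hG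
  have hdsm : ContDiff ℝ (⊤ : ℕ∞) (deriv γ) := (contDiff_infty_iff_deriv.1 h.smooth).2
  have hGsm : ContDiff ℝ (⊤ : ℕ∞) G := by
    simp only [hG, div_eq_mul_inv]
    exact hdsm.mul (contDiff_const.mul (((h.smooth.sub contDiff_const).mul
      (contDiff_const.sub h.smooth)).inv fun θ => mul_ne_zero (hne0 θ) (hne1 θ)))
  have hGc : Continuous G := hGsm.continuous
  set c : ℝ → ℂ := fun θ => (Real.log (a / (1 - a)) : ℂ) + ∫ y in s..θ, G y with hc
  have ha1 : 0 < 1 - a := by linarith [ha.2]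
  have hapos : 0 < a / (1 - a) := div_pos ha.1 ha1
  have hcd : ∀ θ, HasDerivAt c (G θ) θ := fun θ =>
    (intervalIntegral.integral_hasDerivAt_right (hGc.intervalIntegrable _ _)
        (hGc.stronglyMeasurableAtFilter _ _) hGc.continuousAt).const_add _
  have hcderiv : deriv c = G := funext fun θ => (hcd θ).deriv
  have hcsm : ContDiff ℝ (⊤ : ℕ∞) c :=
    contDiff_infty_iff_deriv.2 ⟨fun θ => (hcd θ).differentiableAt, by rw [hcderiv]; exact hGsm⟩
  have hcs : c s = (Real.log (a / (1 - a)) : ℂ) := by simp [hc]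
  have hexp : ∀ θ, Complex.exp (c θ) = Mb z₀ z₁ (γ θ) := by
    intro θ
    have h1 := exp_int (g := fun θ => Mb z₀ z₁ (γ θ))
      (g' := fun θ => deriv γ θ * (z₁ - z₀) / (z₁ - γ θ) ^ 2)
      (fun x => by
        have := ((h.hasDeriv x).sub_const z₀).div ((h.hasDeriv x).const_sub z₁) (hne1 x)
        convert! this using 1
        ring)
      ((h.cont_deriv.mul continuous_const).div ((continuous_const.sub h.smooth.continuous).pow 2)
        fun x => pow_ne_zero 2 (hne1 x))
      (fun x => div_ne_zero (hne0 x) (hne1 x)) s θ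
    have h2 : (fun y => deriv γ y * (z₁ - z₀) / (z₁ - γ y) ^ 2 / Mb z₀ z₁ (γ y)) = G := by
      funext y
      have := hne0 y
      have := hne1 y
      simp only [hG, Mb]
      field_simp
    have h3 : Complex.exp (Real.log (a / (1 - a)) : ℂ) = Mb z₀ z₁ (γ s) := by
      rw [← Complex.ofReal_exp, Real.exp_log hapos, hs]
      unfold Mb
      have h4 : ((1 - a : ℝ) : ℂ) ≠ 0 := by exact_mod_cast ha1.ne'
      have h5 : z₁ - (z₀ + a * (z₁ - z₀)) = ((1 - a : ℝ) : ℂ) * (z₁ - z₀) := by push_cast; ring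
      rw [h5, add_sub_cancel_left, mul_div_mul_right _ _ hN]
      push_cast
      rfl
    rw [h2] at h1
    simp only [hc]
    rw [Complex.exp_add, h3, mul_comm, h1]
  have hGper : Function.Periodic G (2 * π) := by
    intro θ
    simp only [hG, h.per, h.deriv_per]
  have hper : ∀ θ, c (θ + 2 * π) = c θ + 2 * π * I := by
    intro θ
    have h1 : (∫ y in s..(θ + 2 * π), G y) = (∫ y in s..θ, G y) + ∫ y in θ..(θ + 2 * π), G y :=
      (intervalIntegral.integral_add_adjacent_intervals (hGc.intervalIntegrable _ _)
        (hGc.intervalIntegrable _ _)).symm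
    have h2 := hGper.intervalIntegral_add_eq θ 0
    rw [zero_add] at h2
    have h3 : G = fun θ => deriv γ θ / (γ θ - z₀) - deriv γ θ / (γ θ - z₁) := by
      funext θ
      have := hne0 θ
      have := hne1 θ
      have h5 : γ θ - z₁ ≠ 0 := sub_ne_zero.2 (hne1' θ)
      have h6 : γ θ - z₁ = -(z₁ - γ θ) := by ring
      simp only [hG]
      rw [h6]
      field_simp
      ring
    have h4 : ∫ y in (0:ℝ)..(2 * π), G y = 2 * π * I := by
      rw [h3, intervalIntegral.integral_sub, h.wind z₀ hz₀, h.windU z₁ hz₁, sub_zero]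
      · exact (h.cont_deriv.div (h.smooth.continuous.sub continuous_const) hne0).intervalIntegrable
          _ _
      · exact (h.cont_deriv.div (h.smooth.continuous.sub continuous_const) fun θ =>
          sub_ne_zero.2 (hne1' θ)).intervalIntegrable _ _
    simp only [hc]
    rw [h1, h2, h4, add_assoc]
  have hperk : ∀ (k : ℤ) (θ : ℝ), c (θ + 2 * π * k) = c θ + 2 * π * k * I := by
    intro k θ
    have h1 : Function.Periodic (fun θ : ℝ => c θ - θ * I) (2 * π) := by
      intro θ
      simp only
      rw [hper]
      push_cast
      ring
    have h2 := h1.int_mul k θ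
    rw [mul_comm (k:ℝ)] at h2
    push_cast at h2
    linear_combination h2
  have hGs : 0 < (G s).im := by
    have h1 : G s = ((r / (a * (1 - a)) : ℝ) : ℂ) * I := by
      simp only [hG]
      have h4 : ((1 - a : ℝ) : ℂ) ≠ 0 := by exact_mod_cast ha1.ne'
      have h6 : (a : ℂ) ≠ 0 := by exact_mod_cast ha.1.ne'
      have h5 : z₁ - (z₀ + a * (z₁ - z₀)) = ((1 - a : ℝ) : ℂ) * (z₁ - z₀) := by push_cast; ring
      rw [hd, hs, h5, add_sub_cancel_left]
      rw [Complex.ofReal_div, Complex.ofReal_mul]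
      field_simp
    rw [h1, Complex.im_ofReal_mul, Complex.I_im, mul_one]
    exact div_pos hr (mul_pos ha.1 ha1)
  have him : Continuous fun θ => (c θ).im := Complex.continuous_im.comp hcsm.continuous
  have hinteg : ∀ θ ∈ Ioo s (s + 2 * π), ∀ k : ℤ, (c θ).im ≠ 2 * π * k := by
    intro θ hθ k hk
    have h1 : Complex.exp (c θ) = (Real.exp (c θ).re : ℂ) := by
      have h2 : c θ = ((c θ).re : ℂ) + k * (2 * π * I) := by
        apply Complex.ext
        · simp
        · simp [hk]; ring
      have h3 : Complex.exp (k * (2 * π * I)) = 1 := Complex.exp_int_mul_two_pi_mul_I k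
      nth_rw 1 [h2]
      rw [Complex.exp_add, h3, mul_one, Complex.ofReal_exp]
    set m := Real.exp (c θ).re with hm
    have hmpos : 0 < m := Real.exp_pos _
    have h1m : (1 + (m:ℂ)) ≠ 0 := by
      have : (0:ℝ) < 1 + m := by linarith
      exact_mod_cast this.ne'
    have h2 : γ θ = z₀ + (m / (1 + m) : ℝ) * (z₁ - z₀) := by
      rw [← Mi_Mb h01 (hne1' θ), ← hexp, h1]
      unfold Mi
      push_cast
      field_simp
      ring
    have h3 := honly θ (m / (1 + m)) ⟨by positivity, by
      rw [div_le_one (by linarith)]; linarith⟩ h2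
    rw [h3, ← hs] at h2
    obtain ⟨l, hl⟩ := h.inj' h2
    rw [hl] at hθ
    have h4 : (0:ℝ) < l := by
      by_contra hcon
      push Not at hcon
      nlinarith [hθ.1]
    have h5 : (l:ℝ) < 1 := by
      by_contra hcon
      push Not at hcon
      nlinarith [hθ.2]
    have h6 : 0 < l := by exact_mod_cast h4
    have h7 : l < 1 := by exact_mod_cast h5
    omega
  have hims : (c s).im = 0 := by rw [hcs, Complex.ofReal_im]
  have himd : HasDerivAt (fun θ => (c θ).im) (G s).im s :=
    (Complex.imCLM.hasFDerivAt.comp_hasDerivAt s (hcd s))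
  obtain ⟨δ, hδ, hδ2, hp, hn⟩ := near_sign himd hGs hims
  refine ⟨c, ⟨hcsm, hper, ?_, ?_, hims, ?_, ?_⟩, hexp, fun θ => (hcd θ).deriv⟩
  · intro θ
    rw [hcderiv]
    exact mul_ne_zero (h.d θ) (div_ne_zero hN (mul_ne_zero (hne0 θ) (hne1 θ)))
  · intro x y hxy
    have h1 : Mb z₀ z₁ (γ x) = Mb z₀ z₁ (γ y) := by rw [← hexp, ← hexp, hxy]
    obtain ⟨k, hk⟩ := h.inj' (Mb_inj h01 (hne1' x) (hne1' y) h1)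
    rw [hk, hperk] at hxy
    have h2 := congrArg Complex.im hxy
    simp at h2
    rw [hk, h2]
    simp
  · rw [hcderiv]; exact hGs
  · intro θ hθ
    constructor
    · refine sign_const him (x₀ := s + δ) ⟨by linarith, by linarith⟩ (fun x hx h0 => ?_) hp θ hθ
      exact hinteg x hx 0 (by simpa using h0)
    · have := sign_const (f := fun θ => 2 * π - (c θ).im) (by fun_prop) (x₀ := s - δ + 2 * π)
        ⟨by linarith, by linarith⟩ (fun x hx h0 => hinteg x hx 1 (by
          push_cast; linarith)) (by
          rw [hper]; simp; exact hn) θ hθ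
      linarith

theorem Jor.ord {γ : ℝ → ℂ} {B U : Set ℂ} (h : Jor γ B U) {z₀ z₁ : ℂ} (hz₀ : z₀ ∈ B)
    (hz₁ : z₁ ∈ U) {s : ℝ} {c : ℝ → ℂ} (hc : Adm c s)
    (hexp : ∀ θ, Complex.exp (c θ) = Mb z₀ z₁ (γ θ)) :
    Ord c {ζ | Complex.exp ζ ∈ Mb z₀ z₁ '' B} {ζ | Complex.exp ζ ∉ Mb z₀ z₁ '' (B ∪ range γ)} := by
  have h01 : z₁ ≠ z₀ := by
    rintro rfl
    exact disjoint_left.1 h.disj hz₀ hz₁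
  have hKne : ∀ z ∈ B ∪ range γ, z ≠ z₁ := by
    rintro z (hz | ⟨θ, rfl⟩) rfl
    · exact disjoint_left.1 h.disj hz hz₁
    · exact h.not_range (Or.inr hz₁) θ rfl
  have hKU : B ∪ range γ = Uᶜ := by
    ext z
    constructor
    · rintro (hz | ⟨θ, rfl⟩) hU
      · exact disjoint_left.1 h.disj hz hU
      · exact h.not_range (Or.inr hU) θ rfl
    · intro hz
      rcases h.cases z with h1 | h1 | h1
      · exact Or.inl h1
      · exact absurd h1 hz
      · exact Or.inr h1
  have hrb : Bornology.IsBounded (range γ) := by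
    have : range γ ⊆ γ '' Icc 0 (2 * π) := by
      rintro _ ⟨θ, rfl⟩
      obtain ⟨k, hk⟩ := exists_shift 0 θ
      rw [zero_add] at hk
      exact ⟨θ + 2 * π * k, ⟨hk.1, hk.2.le⟩, h.per_int k θ⟩
    exact (isCompact_Icc.image h.smooth.continuous).isBounded.subset this
  have hK : IsCompact (B ∪ range γ) := Metric.isCompact_of_isClosed_isBounded
    (by rw [hKU]; exact h.Uo.isClosed_compl) (h.Bb.union hrb)
  have hMK : IsCompact (Mb z₀ z₁ '' (B ∪ range γ)) := by
    refine hK.image_of_continuousOn ?_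
    refine ContinuousOn.div (by fun_prop) (by fun_prop) fun z hz => ?_
    exact sub_ne_zero.2 (hKne z hz).symm
  have hMBo : IsOpen (Mb z₀ z₁ '' B) := by
    have h1 : Mb z₀ z₁ '' B = {w | 1 + w ≠ 0} ∩ Mi z₀ z₁ ⁻¹' B := by
      ext w
      constructor
      · rintro ⟨z, hz, rfl⟩
        have hz1 := hKne z (Or.inl hz)
        refine ⟨Mb_one h01 hz1, ?_⟩
        rw [mem_preimage, Mi_Mb h01 hz1]
        exact hz
      · rintro ⟨h1, h2⟩
        exact ⟨_, h2, Mb_Mi h01 h1⟩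
    rw [h1]
    refine ContinuousOn.isOpen_inter_preimage ?_ ?_ h.Bo
    · exact ContinuousOn.div (by fun_prop) (by fun_prop) fun w hw => hw
    · exact isOpen_ne_fun (by fun_prop) (by fun_prop)
  have hrange : ∀ ζ, Complex.exp ζ ∈ Mb z₀ z₁ '' range γ ↔ ζ ∈ range c := by
    intro ζ
    constructor
    · rintro ⟨_, ⟨θ, rfl⟩, he⟩
      rw [← hexp] at he
      obtain ⟨k, hk⟩ := Complex.exp_eq_exp_iff_exists_int.1 he.symm
      refine ⟨θ + 2 * π * k, ?_⟩
      rw [hc.per_int, hk]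
      ring
    · rintro ⟨θ, rfl⟩
      exact ⟨γ θ, ⟨θ, rfl⟩, (hexp θ).symm⟩
  refine ⟨hMBo.preimage Complex.continuous_exp,
    hMK.isClosed.isOpen_compl.preimage Complex.continuous_exp, ?_, ?_, ?_⟩
  · rw [disjoint_left]
    intro ζ h1 h2
    exact h2 (image_mono subset_union_left h1)
  · ext ζ
    rw [mem_compl_iff, ← hrange]
    constructor
    · rintro (h1 | h1) h2
      · obtain ⟨z, hz, he⟩ := h1
        obtain ⟨_, ⟨θ, rfl⟩, he2⟩ := h2
        have h3 := Mb_inj h01 (hKne _ (Or.inl hz)) (hKne (γ θ) (Or.inr ⟨θ, rfl⟩))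
          (he.trans he2.symm)
        exact h.not_range (Or.inl hz) θ h3.symm
      · exact h1 (image_mono subset_union_right h2)
    · intro h2
      by_cases h3 : Complex.exp ζ ∈ Mb z₀ z₁ '' B
      · exact Or.inl h3
      · right
        intro h4
        rw [image_union] at h4
        rcases h4 with h5 | h5
        · exact h3 h5
        · exact h2 h5
  · have h0 : (0:ℂ) ∈ Mb z₀ z₁ '' B := ⟨z₀, hz₀, by simp [Mb]⟩
    obtain ⟨δ, hδ, hb⟩ := Metric.isOpen_iff.1 hMBo 0 h0
    obtain ⟨C, hC⟩ := isBounded_iff_forall_norm_le.1 hMK.isBounded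
    refine ⟨max (1 / δ) C, fun x => ⟨fun hx => ?_, fun hx hmem => ?_⟩⟩
    · apply hb
      rw [mem_ball_zero_iff, ← Complex.ofReal_exp, Complex.norm_real, Real.norm_eq_abs,
        abs_of_pos (Real.exp_pos _)]
      have h1 : 1 / δ < Real.exp (-x) := by
        have := Real.add_one_le_exp (-x)
        linarith [le_max_left (1 / δ) C]
      rw [Real.exp_neg, one_div] at h1
      exact (inv_lt_inv₀ hδ (Real.exp_pos x)).1 h1
    · have h1 := hC _ hmem
      rw [← Complex.ofReal_exp, Complex.norm_real, Real.norm_eq_abs,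
        abs_of_pos (Real.exp_pos _)] at h1
      have := Real.add_one_le_exp x
      linarith [le_max_right (1 / δ) C]

end Annulus

namespace Annulus

theorem expNegInvGlue_mono : Monotone expNegInvGlue := by
  intro x y hxy
  rcases le_or_gt x 0 with hx | hx
  · rw [expNegInvGlue.zero_of_nonpos hx]
    exact expNegInvGlue.nonneg y
  · have hy : 0 < y := hx.trans_le hxy
    unfold expNegInvGlue
    rw [if_neg (not_le.2 hx), if_neg (not_le.2 hy)]
    apply Real.exp_le_exp.2
    have := inv_anti₀ hx hxy
    linarith

theorem smoothTransition_mono : Monotone Real.smoothTransition := by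
  intro x y hxy
  unfold Real.smoothTransition
  have h1 := expNegInvGlue_mono hxy
  have h2 := expNegInvGlue_mono (sub_le_sub_left hxy 1)
  have px := Real.smoothTransition.pos_denom x
  have py := Real.smoothTransition.pos_denom y
  have n1 := expNegInvGlue.nonneg x
  have n2 := expNegInvGlue.nonneg (1 - y)
  rw [div_le_div_iff₀ px py]
  nlinarith [mul_le_mul h1 h2 n2 (n1.trans h1)]

theorem im_div_det (u v : ℂ) (h : det2 u v ≤ 0) : (v / u).im ≤ 0 := by
  rw [Complex.div_im, ← sub_div]
  unfold det2 at h
  exact div_nonpos_of_nonpos_of_nonneg (by linarith) (Complex.normSq_nonneg u)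

namespace Nest
variable {γi γo : ℝ → ℂ} {Bi Ui Bo Uo : Set ℂ}

theorem framing (h : Nest γi Bi Ui γo Bo Uo) : ∃ h : ℝ × ℝ → ℂ,
      ContDiff ℝ (⊤ : ℕ∞) h ∧
      (∀ θ t, h (θ + 2 * π, t) = h (θ, t)) ∧
      (∀ t ∈ Icc (0:ℝ) 1, InjOn (fun θ => h (θ, t)) (Ico 0 (2 * π))) ∧
      (∀ θ : ℝ, ∀ t ∈ Icc (0:ℝ) 1, deriv (fun x => h (x, t)) θ ≠ 0) ∧
      (∀ θ : ℝ, ∀ t ∈ Icc (0:ℝ) 1,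
        (deriv (fun s => h (θ, s)) t / deriv (fun x => h (x, t)) θ).im ≤ 0) ∧
      (∀ θ, h (θ, 0) = γi θ) ∧ (∀ θ, h (θ, 1) = γo θ) ∧
      h '' (univ ×ˢ Icc (0:ℝ) 1) = (Bo ∪ range γo) \ Bi := by
  obtain ⟨s, t, a, b, r, r', z₀, z₁, hz₀, hz₁, ha, hb, hr, hr', hs, ht, hds, hdt, hoi, hoo⟩ :=
    h.cut
  obtain ⟨c, hc, hce, hcd⟩ := h.hi.lift hz₀ (h.U_sub hz₁) ha hr hs hds hoi
  obtain ⟨d, hd, hde, hdd⟩ := h.ho.lift (h.B_sub hz₀) hz₁ hb hr' ht hdt hoo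
  have hO := h.hi.ord hz₀ (h.U_sub hz₁) hc hce
  have hP := h.ho.ord (h.B_sub hz₀) hz₁ hd hde
  have h01 : z₁ ≠ z₀ := by
    rintro rfl
    exact disjoint_left.1 h.ho.disj (h.B_sub hz₀) hz₁
  have hN : z₁ - z₀ ≠ 0 := sub_ne_zero.2 h01
  have hKne : ∀ z ∈ Bo ∪ range γo, z ≠ z₁ := by
    rintro z hz rfl
    exact h.notU hz hz₁
  have hγi : ∀ θ, γi θ ≠ z₁ := fun θ => hKne _ (h.sub (Or.inr ⟨θ, rfl⟩))
  have hγo : ∀ θ, γo θ ≠ z₁ := fun θ => hKne _ (Or.inr ⟨θ, rfl⟩)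
  obtain ⟨H, hHs, hHp, hH0, hH1, hHi, hHd, hHim⟩ := core hc hd hO hP
    (by
      rintro θ ⟨z, hz, he⟩
      rw [hde] at he
      have := Mb_inj h01 (hKne z (Or.inl (h.B_sub hz))) (hγo θ) he
      exact h.out_notB θ (this ▸ hz))
    (by
      intro x y hxy
      have he : γi x = γo y := Mb_inj h01 (hγi x) (hγo y) (by rw [← hce, ← hde, hxy])
      obtain ⟨ρ, hρ, h1⟩ := h.contact he
      refine ⟨ρ, hρ, ?_⟩
      rw [hdd, hcd, h1, he]
      ring)
  have hHk : ∀ (k : ℤ) (θ t : ℝ), H (θ + 2 * π * k, t) = H (θ, t) + 2 * π * k * I := by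
    intro k θ t
    have h1 : Function.Periodic (fun θ : ℝ => H (θ, t) - θ * I) (2 * π) := by
      intro θ
      simp only
      rw [hHp]
      push_cast
      ring
    have h2 := h1.int_mul k θ
    rw [mul_comm (k:ℝ)] at h2
    push_cast at h2
    linear_combination h2
  set β := Real.smoothTransition with hβ
  have hβs : ContDiff ℝ (⊤ : ℕ∞) β := Real.smoothTransition.contDiff
  have hβI : ∀ t, β t ∈ Icc (0:ℝ) 1 := fun t =>
    ⟨Real.smoothTransition.nonneg t, Real.smoothTransition.le_one t⟩
  have hβ0 : β 0 = 0 := Real.smoothTransition.zero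
  have hβ1 : β 1 = 1 := Real.smoothTransition.one
  have hβd : ∀ t, 0 ≤ deriv β t := fun t => smoothTransition_mono.deriv_nonneg
  have hreg : ∀ θ, ∀ t ∈ Icc (0:ℝ) 1, ∃ z ∈ (Bo ∪ range γo) \ Bi,
      Mb z₀ z₁ z = Complex.exp (H (θ, t)) := by
    intro θ t ht
    have h1 : H (θ, t) ∈ H '' (univ ×ˢ Icc (0:ℝ) 1) := ⟨(θ, t), ⟨mem_univ _, ht⟩, rfl⟩
    rw [hHim] at h1
    obtain ⟨h2, h3⟩ := h1
    obtain ⟨z, hz, he⟩ := not_not.1 h3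
    exact ⟨z, ⟨hz, fun hB => h2 ⟨z, hB, he⟩⟩, he⟩
  have hone : ∀ θ, ∀ t ∈ Icc (0:ℝ) 1, 1 + Complex.exp (H (θ, t)) ≠ 0 := by
    intro θ t ht
    obtain ⟨z, hz, he⟩ := hreg θ t ht
    rw [← he]
    exact Mb_one h01 (hKne z hz.1)
  set F : ℂ → ℂ := fun ζ => Mi z₀ z₁ (Complex.exp ζ) with hF
  set D : ℂ → ℂ := fun ζ => (z₁ - z₀) / (1 + Complex.exp ζ) ^ 2 * Complex.exp ζ with hD
  have hFd : ∀ ζ, 1 + Complex.exp ζ ≠ 0 → HasDerivAt F (D ζ) ζ := by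
    intro ζ hζ
    have h1 := (((Complex.hasDerivAt_exp ζ).const_mul z₁).add_const z₀).div
      ((Complex.hasDerivAt_exp ζ).const_add 1) hζ
    convert! h1 using 1
    simp only [hD]
    field_simp
    ring
  have hD0 : ∀ ζ, 1 + Complex.exp ζ ≠ 0 → D ζ ≠ 0 := fun ζ hζ =>
    mul_ne_zero (div_ne_zero hN (pow_ne_zero 2 hζ)) (Complex.exp_ne_zero ζ)
  have hHx : ∀ θ t, HasDerivAt (fun x => H (x, t)) (deriv (fun x => H (x, t)) θ) θ := by
    intro θ t
    have : ContDiff ℝ (⊤ : ℕ∞) fun x : ℝ => H (x, t) :=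
      hHs.comp (contDiff_id.prodMk contDiff_const)
    exact (this.differentiable (by simp) θ).hasDerivAt
  have hHt : ∀ θ t, HasDerivAt (fun x => H (θ, x)) (deriv (fun x => H (θ, x)) t) t := by
    intro θ t
    have : ContDiff ℝ (⊤ : ℕ∞) fun x : ℝ => H (θ, x) :=
      hHs.comp (contDiff_const.prodMk contDiff_id)
    exact (this.differentiable (by simp) t).hasDerivAt
  have hβh : ∀ t, HasDerivAt β (deriv β t) t := fun t =>
    (hβs.differentiable (by simp) t).hasDerivAt
  have hdx : ∀ θ t, HasDerivAt (fun x => F (H (x, β t)))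
      (D (H (θ, β t)) * deriv (fun x => H (x, β t)) θ) θ := fun θ t =>
    HasDerivAt.comp θ (hFd _ (hone θ _ (hβI t))) (hHx θ (β t))
  have hdt : ∀ θ t, HasDerivAt (fun x => F (H (θ, β x)))
      (D (H (θ, β t)) * (deriv β t • deriv (fun x => H (θ, x)) (β t))) t := fun θ t =>
    HasDerivAt.comp (h₂ := F) (h := fun x => H (θ, β x)) t (hFd _ (hone θ _ (hβI t)))
      (HasDerivAt.scomp t (hHt θ (β t)) (hβh t))
  refine ⟨fun p => F (H (p.1, β p.2)), ?_, ?_, ?_, ?_, ?_, ?_, ?_, ?_⟩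
  · have h1 : ContDiff ℝ (⊤ : ℕ∞) fun p : ℝ × ℝ => Complex.exp (H (p.1, β p.2)) :=
      (hHs.comp (contDiff_fst.prodMk (hβs.comp contDiff_snd))).cexp
    simp only [hF, Mi, div_eq_mul_inv]
    exact ((contDiff_const.mul h1).add contDiff_const).mul
      ((contDiff_const.add h1).inv fun p => hone _ _ (hβI _))
  · intro θ t
    simp only [hF]
    rw [hHp, Complex.exp_add, Complex.exp_two_pi_mul_I, mul_one]
  · intro t _ x hx y hy hxy
    have h1 : Complex.exp (H (x, β t)) = Complex.exp (H (y, β t)) := by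
      have h2 : Mi z₀ z₁ (Complex.exp (H (x, β t))) = Mi z₀ z₁ (Complex.exp (H (y, β t))) := hxy
      rw [← Mb_Mi h01 (hone x _ (hβI t)), h2, Mb_Mi h01 (hone y _ (hβI t))]
    obtain ⟨k, hk⟩ := Complex.exp_eq_exp_iff_exists_int.1 h1
    have h2 : x = y + 2 * π * k := hHi (β t) (hβI t) (by
      simp only
      rw [hHk, hk]
      ring)
    have hpi := Real.pi_pos
    have h4 : (-1:ℝ) < k := by
      by_contra hcon
      push Not at hcon
      nlinarith [hx.1, hy.2]
    have h5 : (k:ℝ) < 1 := by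
      by_contra hcon
      push Not at hcon
      nlinarith [hx.2, hy.1]
    have h6 : -1 < k := by exact_mod_cast h4
    have h7 : k < 1 := by exact_mod_cast h5
    have h8 : k = 0 := by omega
    rw [h2, h8]
    simp
  · intro θ t _
    have h1 := (hdx θ t).deriv
    simp only
    rw [h1]
    exact mul_ne_zero (hD0 _ (hone θ _ (hβI t))) (hHd θ _ (hβI t)).1
  · intro θ t _
    have h1 := (hdx θ t).deriv
    have h2 := (hdt θ t).deriv
    simp only
    rw [h1, h2, mul_div_mul_left _ _ (hD0 _ (hone θ _ (hβI t))), smul_div_assoc, Complex.smul_im]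
    exact mul_nonpos_of_nonneg_of_nonpos (hβd t) (im_div_det _ _ (hHd θ _ (hβI t)).2)
  · intro θ
    simp only [hF]
    rw [hβ0, hH0, hce, Mi_Mb h01 (hγi θ)]
  · intro θ
    simp only [hF]
    rw [hβ1, hH1, hde, Mi_Mb h01 (hγo θ)]
  · ext z
    constructor
    · rintro ⟨⟨θ, t⟩, -, rfl⟩
      obtain ⟨z, hz, he⟩ := hreg θ _ (hβI t)
      simp only [hF]
      rw [← he, Mi_Mb h01 (hKne z hz.1)]
      exact hz
    · intro hz
      have hz1 := hKne z hz.1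
      have hz0 : z ≠ z₀ := by
        rintro rfl
        exact hz.2 hz₀
      have hM : Mb z₀ z₁ z ≠ 0 := div_ne_zero (sub_ne_zero.2 hz0) (sub_ne_zero.2 hz1.symm)
      have hmem : Complex.log (Mb z₀ z₁ z) ∈ H '' (univ ×ˢ Icc (0:ℝ) 1) := by
        rw [hHim]
        refine ⟨?_, not_not.2 ?_⟩
        · rintro ⟨y, hy, he⟩
          rw [Complex.exp_log hM] at he
          have := Mb_inj h01 (hKne y (Or.inl (h.B_sub hy))) hz1 he
          exact hz.2 (this ▸ hy)
        · exact ⟨z, hz.1, (Complex.exp_log hM).symm⟩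
      obtain ⟨⟨θ, τ⟩, ⟨-, hτ⟩, he⟩ := hmem
      have hiv := intermediate_value_Icc (zero_le_one' ℝ) hβs.continuous.continuousOn
      rw [hβ0, hβ1] at hiv
      obtain ⟨t', ht', rfl⟩ := hiv hτ
      refine ⟨(θ, t'), ⟨mem_univ _, ht'⟩, ?_⟩
      simp only [hF]
      rw [he, Complex.exp_log hM, Mi_Mb h01 hz1]

end Nest
end Annulus

theorem every_annulus_admits_a_framing
    (γin γout : ℝ → ℂ) (Bin Bout : Set ℂ)
    (hγin_smooth : ContDiff ℝ (⊤ : ℕ∞) γin)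
    (hγout_smooth : ContDiff ℝ (⊤ : ℕ∞) γout)
    (hγin_per : ∀ θ, γin (θ + 2 * π) = γin θ)
    (hγout_per : ∀ θ, γout (θ + 2 * π) = γout θ)
    (hγin_inj : InjOn γin (Ico 0 (2 * π)))
    (hγout_inj : InjOn γout (Ico 0 (2 * π)))
    (hγin_deriv : ∀ θ, deriv γin θ ≠ 0)
    (hγout_deriv : ∀ θ, deriv γout θ ≠ 0)
    (hBin_conn : IsConnected Bin) (hBin_open : IsOpen Bin)
    (hBin_bdd : Bornology.IsBounded Bin)
    (hin_two : ∃ U : Set ℂ, IsConnected U ∧ IsOpen U ∧ ¬ Bornology.IsBounded U ∧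
      Disjoint Bin U ∧ Bin ∪ U = (range γin)ᶜ)
    (hBin_cl : closure Bin = Bin ∪ range γin)
    (hBout_conn : IsConnected Bout) (hBout_open : IsOpen Bout)
    (hBout_bdd : Bornology.IsBounded Bout)
    (hout_two : ∃ U : Set ℂ, IsConnected U ∧ IsOpen U ∧ ¬ Bornology.IsBounded U ∧
      Disjoint Bout U ∧ Bout ∪ U = (range γout)ᶜ)
    (hBout_cl : closure Bout = Bout ∪ range γout)
    (hwind_in : ∀ z ∈ Bin,
      (2 * π * I)⁻¹ * ∫ θ in (0:ℝ)..(2 * π), deriv γin θ / (γin θ - z) = 1)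
    (hwind_out : ∀ z ∈ Bout,
      (2 * π * I)⁻¹ * ∫ θ in (0:ℝ)..(2 * π), deriv γout θ / (γout θ - z) = 1)
    (hsub : Bin ∪ range γin ⊆ Bout ∪ range γout)
    (A : Set ℂ) (hA : A = (Bout ∪ range γout) \ Bin) :
    ∃ h : ℝ × ℝ → ℂ,
      ContDiff ℝ (⊤ : ℕ∞) h ∧
      (∀ θ t, h (θ + 2 * π, t) = h (θ, t)) ∧
      (∀ t ∈ Icc (0:ℝ) 1, InjOn (fun θ => h (θ, t)) (Ico 0 (2 * π))) ∧
      (∀ θ : ℝ, ∀ t ∈ Icc (0:ℝ) 1, deriv (fun x => h (x, t)) θ ≠ 0) ∧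
      (∀ θ : ℝ, ∀ t ∈ Icc (0:ℝ) 1,
        (deriv (fun s => h (θ, s)) t / deriv (fun x => h (x, t)) θ).im ≤ 0) ∧
      (∀ θ, h (θ, 0) = γin θ) ∧ (∀ θ, h (θ, 1) = γout θ) ∧
      h '' (univ ×ˢ Icc (0:ℝ) 1) = A := by
  obtain ⟨Ui, hUi, hUio, hUib, hUid, hUiu⟩ := hin_two
  obtain ⟨Uo, hUo, hUoo, hUob, hUod, hUou⟩ := hout_two
  have hw : ∀ x : ℂ, (2 * π * I)⁻¹ * x = 1 → x = 2 * π * I := by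
    intro x hx
    have h1 : (2 * π * I : ℂ) ≠ 0 := Complex.two_pi_I_ne_zero
    field_simp at hx
    rw [hx]
  have hN : Annulus.Nest γin Bin Ui γout Bout Uo :=
    ⟨⟨hγin_smooth, hγin_per, hγin_inj, hγin_deriv, hBin_open, hUio, hUi.isPreconnected, hBin_bdd,
      hUib, hUid, hUiu, fun z hz => hw _ (hwind_in z hz)⟩,
    ⟨hγout_smooth, hγout_per, hγout_inj, hγout_deriv, hBout_open, hUoo, hUo.isPreconnected,
      hBout_bdd, hUob, hUod, hUou, fun z hz => hw _ (hwind_out z hz)⟩, hsub⟩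
  rw [hA]
  exact hN.framing
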